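/- Let G be a minimal counterexample as in the context. Then O_{2'}(F(G)) ≠ 1; equivalently, there exist an odd prime p and a nontrivial normal subgroup of G that is a p-group. -/

import Mathlib

namespace Wreathed

/-- The cyclic group of order `2^n`. -/
abbrev C (n : ℕ) : Type := Multiplicative (ZMod (2^n))

/-- The coordinate-swapping automorphism of `C n × C n`. -/
def swapAut (n : ℕ) : MulAut (C n × C n) := MulEquiv.prodComm

lemma swapAut_mul_self (n : ℕ) : swapAut n * swapAut n = 1 := by
  ext x <;> rfl

lemma two_cases (x : Multiplicative (ZMod 2)) :
    x = 1 ∨ x = Multiplicative.ofAdd 1 := by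
  revert x; decide

/-- The action of `C_2` on `C n × C n` by swapping the two coordinates. -/
def act (n : ℕ) : Multiplicative (ZMod 2) →* MulAut (C n × C n) where
  toFun x := if x = 1 then 1 else swapAut n
  map_one' := if_pos rfl
  map_mul' := by
    have h11 : (Multiplicative.ofAdd 1 : Multiplicative (ZMod 2)) *
        Multiplicative.ofAdd 1 = 1 := by decide
    have h1ne : (Multiplicative.ofAdd 1 : Multiplicative (ZMod 2)) ≠ 1 := by decide
    intro x y
    rcases two_cases x with hx | hx <;> rcases two_cases y with hy | hy <;>
      subst hx <;> subst hy <;>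
      simp [h11, h1ne, swapAut_mul_self]

/-- The wreathed 2-group `W = (C_{2^n} × C_{2^n}) ⋊ C_2`,
i.e. the wreath product `Z_{2^n} ≀ Z_2`. -/
abbrev W (n : ℕ) : Type := (C n × C n) ⋊[act n] (Multiplicative (ZMod 2))

/-- The element `a = ((g,1); 0)`. -/
def a (n : ℕ) : W n := SemidirectProduct.inl (Multiplicative.ofAdd 1, 1)

/-- The element `b = ((1,g); 0)`. -/
def b (n : ℕ) : W n := SemidirectProduct.inl (1, Multiplicative.ofAdd 1)

/-- The element `t = ((1,1); 1)`. -/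
def t (n : ℕ) : W n := SemidirectProduct.inr (Multiplicative.ofAdd 1)

/-- The base subgroup `A = ⟨a, b⟩`. -/
def A (n : ℕ) : Subgroup (W n) := Subgroup.closure {a n, b n}

/-- The diagonal `Δ = ⟨ab⟩`. -/
def diag (n : ℕ) : Subgroup (W n) := Subgroup.zpowers (a n * b n)

/-- The anti-diagonal `Δ⁻ = ⟨ab⁻¹⟩`. -/
def antidiag (n : ℕ) : Subgroup (W n) := Subgroup.zpowers (a n * (b n)⁻¹)

end Wreathed

/-- The subgroup of inner automorphisms of `G`, i.e. `Inn(G)` inside `Aut(G)`. -/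
def innAut (G : Type*) [Group G] : Subgroup (MulAut G) :=
  (MulAut.conj : G →* MulAut G).range

instance innAut_normal (G : Type*) [Group G] : (innAut G).Normal := by
  constructor
  intro x hx f
  obtain ⟨g, rfl⟩ := hx
  refine ⟨f g, ?_⟩
  ext y
  simp only [MulAut.conj_apply, MulAut.mul_apply, map_mul, map_inv,
    MulEquiv.apply_symm_apply, MulAut.inv_def]

/-- An automorphism is class-preserving if it maps every element to a conjugate. -/
def IsClassPreserving {G : Type*} [Group G] (φ : MulAut G) : Prop :=
  ∀ x : G, IsConj x (φ x)

/-- An automorphism is a Coleman automorphism if its restriction to every Sylow subgroup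
is induced by conjugation by a group element. -/
def IsColeman {G : Type*} [Group G] (φ : MulAut G) : Prop :=
  ∀ (p : ℕ), p.Prime → ∀ P : Sylow p G, ∃ y : G,
    ∀ u ∈ (P : Subgroup G), φ u = y⁻¹ * u * y

/-- The subgroup `Aut_c(G)` of class-preserving automorphisms. -/
def autC (G : Type*) [Group G] : Subgroup (MulAut G) where
  carrier := {φ | IsClassPreserving φ}
  one_mem' := fun x => by simpa using IsConj.refl x
  mul_mem' := by
    intro φ ψ hφ hψ x
    exact (hψ x).trans (hφ (ψ x))
  inv_mem' := by
    intro φ hφ x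
    have := (hφ (φ⁻¹ x)).symm
    simpa using this

/-- The subgroup `Aut_Col(G)` of Coleman automorphisms. -/
def autCol (G : Type*) [Group G] : Subgroup (MulAut G) where
  carrier := {φ | IsColeman φ}
  one_mem' := fun p hp P => ⟨1, fun u _ => by simp⟩
  mul_mem' := by
    intro φ ψ hφ hψ p hp P
    obtain ⟨y, hy⟩ := hψ p hp P
    obtain ⟨z, hz⟩ := hφ p hp (y⁻¹ • P)
    refine ⟨y * z, fun u hu => ?_⟩
    have hmem : ψ u ∈ ((y⁻¹ • P : Sylow p G) : Subgroup G) := by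
      rw [Sylow.coe_subgroup_smul, Subgroup.mem_pointwise_smul_iff_inv_smul_mem]
      have : (MulAut.conj y⁻¹)⁻¹ • (ψ u) = u := by
        rw [hy u hu]
        simp [MulAut.smul_def, mul_assoc]
      rw [this]; exact hu
    have h2 := hz _ hmem
    calc (φ * ψ) u = φ (ψ u) := rfl
      _ = z⁻¹ * (ψ u) * z := h2
      _ = (y * z)⁻¹ * u * (y * z) := by rw [hy u hu]; group
  inv_mem' := by
    intro φ hφ p hp P
    obtain ⟨z, hz⟩ := hφ p hp (φ⁻¹ • P)
    refine ⟨z⁻¹, fun u hu => ?_⟩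
    have hmem : φ⁻¹ u ∈ ((φ⁻¹ • P : Sylow p G) : Subgroup G) := by
      rw [Sylow.pointwise_smul_def, Subgroup.mem_pointwise_smul_iff_inv_smul_mem]
      have : (φ⁻¹)⁻¹ • (φ⁻¹ u) = u := by
        simp [MulAut.smul_def]
      rw [this]; exact hu
    have h2 := hz _ hmem
    have : u = z⁻¹ * (φ⁻¹ u) * z := by
      conv_lhs => rw [show u = φ (φ⁻¹ u) by simp]
      exact h2
    rw [show (φ⁻¹ : MulAut G) u = (z⁻¹)⁻¹ * ((z⁻¹ * (φ⁻¹ u) * z) * z⁻¹) from by group]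
    rw [← this]; group

/-- The image `Out_c(G)` of `Aut_c(G)` in `Out(G) = Aut(G)/Inn(G)`. -/
def outC (G : Type*) [Group G] : Subgroup (MulAut G ⧸ innAut G) :=
  (autC G).map (QuotientGroup.mk' (innAut G))

/-- The image `Out_Col(G)` of `Aut_Col(G)` in `Out(G) = Aut(G)/Inn(G)`. -/
def outCol (G : Type*) [Group G] : Subgroup (MulAut G ⧸ innAut G) :=
  (autCol G).map (QuotientGroup.mk' (innAut G))

/-- A group has wreathed Sylow 2-subgroups if its Sylow 2-subgroups are isomorphic to
the wreathed 2-group `(C_{2^n} × C_{2^n}) ⋊ C_2` for some `n ≥ 2`. -/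
def HasWreathedSylow2 (G : Type*) [Group G] : Prop :=
  ∃ n : ℕ, 2 ≤ n ∧ ∀ P : Sylow 2 G, Nonempty ((P : Subgroup G) ≃* Wreathed.W n)

/-!
The split extension `(C₅² × C₃²) ⋊ (C₄ ≀ C₂)` of order 7200, in which the wreath product acts
monomially on `C₅²` and by quarter turns on `C₃²`, has an outer class-preserving Coleman
automorphism of order 2: it inverts `C₃²`. By minimality `|G| ≤ 7200`, and since a wreathed
`2`-group has order at least 32, a Sylow `2`-subgroup `P` of `G` has index at most 225. The order
of a nontrivial normal subgroup `N` of odd order divides this index, and Sylow counting then gives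
a nontrivial characteristic `p`-subgroup of `N`.

Suppose instead that `O_{2'}(G) = 1`. Up to an inner automorphism and an odd power, `φ`
centralizes `P`, so in `Γ = G ⋊ ⟨f⟩`, where `f` acts as `φ`, the element `f` is central in the
Sylow subgroup `T = P × ⟨f⟩`. Glauberman's `Z*`-theorem for `f` is replaced by the following
count. Let `u` be isolated, that is, distinct conjugates of `u` never lie in a common
`2`-subgroup, and let `u ^ 2` be central. The conjugates of `u` form a Latin quandle under
conjugation, and for suitable `S` and `v` commuting with `u` the number of conjugates of `u`
centralizing `S` is the product of the corresponding numbers for `S ∪ {v}` and `S ∪ {v * u}`.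
Comparing these products for involutions `v` of `P`, and using that the class size of an element
central in `T` divides the index of `T`, one finds an element `u`, central in `T`, whose class
size is a power of an odd prime `p`. As `φ` is a Coleman automorphism, some `f * s` centralizes a
Sylow `p`-subgroup, which is transitive on the class of `u`; hence `s` can be chosen such that
`f * s` centralizes the normal closure of `u`, and `O_{2'}(G) = 1` forces `f * s` to centralize
`G`, so that `φ` is inner.

The element to which this applies depends on the central involution `z` of `P`. If `z` is isolated
but not central, it is `z` itself; if `z` is central, it is a power of `f` or a square root of
`z`. If `z` is not isolated, some element of the normalizer of the base permutes its three
involutions cyclically. The product of the three corresponding conjugates of `f` is `f ^ 3` modulo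
`G`, so `φ` is inner if it is central; otherwise it is isolated, since its centralizer controls
the fusion of the base, and `u` is `z` times a power of it.
-/

namespace WreathedColeman

open Subgroup

/-! ### Isolated elements -/

section PElements

variable {Γ : Type*} [Group Γ] {p : ℕ}

/-- `x` is a `p`-element: its order is a power of `p`. -/
def IsPElement (p : ℕ) (x : Γ) : Prop := ∃ k : ℕ, x ^ p ^ k = 1

theorem eq_one_of_pow_eq_one_of_coprime {x : Γ} {m n : ℕ} (hm : x ^ m = 1) (hn : x ^ n = 1)
    (h : m.Coprime n) : x = 1 :=
  orderOf_eq_one_iff.mp <|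
    Nat.eq_one_of_dvd_coprimes h (orderOf_dvd_of_pow_eq_one hm) (orderOf_dvd_of_pow_eq_one hn)

theorem IsPElement.eq_one_of_pow_eq_one {x : Γ} {n : ℕ} (hx : IsPElement p x)
    (hn : n.Coprime p) (h : x ^ n = 1) : x = 1 :=
  let ⟨k, hk⟩ := hx
  eq_one_of_pow_eq_one_of_coprime h hk (hn.pow_right k)

theorem IsPElement.conj {x : Γ} (hx : IsPElement p x) (g : Γ) : IsPElement p (g * x * g⁻¹) :=
  let ⟨k, hk⟩ := hx
  ⟨k, by rw [conj_pow, hk, mul_one, mul_inv_cancel]⟩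

theorem IsPElement.pow {x : Γ} (hx : IsPElement p x) (n : ℕ) : IsPElement p (x ^ n) :=
  let ⟨k, hk⟩ := hx
  ⟨k, by rw [pow_right_comm, hk, one_pow]⟩

theorem IsPElement.of_mem {S : Subgroup Γ} (hS : IsPGroup p S) {x : Γ} (hx : x ∈ S) :
    IsPElement p x :=
  let ⟨k, hk⟩ := hS ⟨x, hx⟩
  ⟨k, by simpa [Subtype.ext_iff] using hk⟩

theorem isPGroup_of_forall_isPElement {S : Subgroup Γ} (hS : ∀ x ∈ S, IsPElement p x) :
    IsPGroup p S := fun ⟨x, hx⟩ =>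
  let ⟨k, hk⟩ := hS x hx
  ⟨k, Subtype.ext hk⟩

theorem IsPElement.isPGroup_zpowers {x : Γ} (hx : IsPElement p x) : IsPGroup p (zpowers x) := by
  obtain ⟨k, hk⟩ := hx
  refine isPGroup_of_forall_isPElement ?_
  rintro _ ⟨n, rfl⟩
  exact ⟨k, by rw [← zpow_natCast, ← zpow_mul, mul_comm, zpow_mul, zpow_natCast, hk, one_zpow]⟩

theorem exists_isPElement_pow_and_coprime_orderOf_pow [Finite Γ] [Fact p.Prime] (x : Γ) :
    ∃ k q : ℕ, q.Coprime p ∧ IsPElement p (x ^ q) ∧ (orderOf (x ^ p ^ k)).Coprime p := by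
  obtain ⟨k, q, hpq, hx⟩ :=
    Nat.exists_eq_pow_mul_and_not_dvd (orderOf_pos x).ne' p (Fact.out : p.Prime).ne_one
  have hq : q.Coprime p := ((Nat.Prime.coprime_iff_not_dvd Fact.out).mpr hpq).symm
  refine ⟨k, q, hq, ⟨k, ?_⟩, hq.coprime_dvd_left (orderOf_dvd_of_pow_eq_one ?_)⟩
  · rw [← pow_mul, mul_comm, ← hx, pow_orderOf_eq_one]
  · rw [← pow_mul, ← hx, pow_orderOf_eq_one]

theorem mem_of_pow_mem_of_pow_mem {D : Subgroup Γ} {x : Γ} {m n : ℕ} (h : m.Coprime n)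
    (hm : x ^ m ∈ D) (hn : x ^ n ∈ D) : x ∈ D := by
  obtain ⟨a, b, hab⟩ := Nat.isCoprime_iff_coprime.mpr h
  have hx : x = (x ^ m) ^ a * (x ^ n) ^ b := by
    rw [← zpow_natCast, ← zpow_natCast, ← zpow_mul, ← zpow_mul, ← zpow_add, mul_comm _ a,
      mul_comm _ b, hab, zpow_one]
  rw [hx]
  exact D.mul_mem (D.zpow_mem hm _) (D.zpow_mem hn _)

theorem mem_of_isPElement_and_coprime_powers_mem [Finite Γ] [Fact p.Prime] {D : Subgroup Γ} {x : Γ}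
    (hp : ∀ n : ℕ, IsPElement p (x ^ n) → x ^ n ∈ D)
    (hp' : ∀ n : ℕ, (orderOf (x ^ n)).Coprime p → x ^ n ∈ D) : x ∈ D :=
  let ⟨k, _, hq, hxq, hxk⟩ := exists_isPElement_pow_and_coprime_orderOf_pow (p := p) x
  mem_of_pow_mem_of_pow_mem (hq.pow_right k) (hp _ hxq) (hp' _ hxk)

theorem pow_conj_eq_pow_mul {x b c : Γ} (h : x * b * x⁻¹ = c * b) (hc : Commute x c) (n : ℕ) :
    x ^ n * b * (x ^ n)⁻¹ = c ^ n * b := by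
  induction n with
  | zero => simp
  | succ n ih =>
    calc x ^ (n + 1) * b * (x ^ (n + 1))⁻¹
        = x * (x ^ n * b * (x ^ n)⁻¹) * x⁻¹ := by rw [pow_succ']; group
      _ = (x * c ^ n * x⁻¹) * (x * b * x⁻¹) := by rw [ih]; group
      _ = c ^ (n + 1) * b := by rw [(hc.pow_right n).mul_inv_cancel, h, pow_succ, mul_assoc]

theorem commute_of_conj_eq_mul {x b c : Γ} (hx : (orderOf x).Coprime p)
    (h : x * b * x⁻¹ = c * b) (hxc : Commute x c) (hc : IsPElement p c) : Commute x b := by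
  have hpow : c ^ orderOf x = 1 := by
    simpa [pow_orderOf_eq_one] using (pow_conj_eq_pow_mul h hxc (orderOf x)).symm
  rw [hc.eq_one_of_pow_eq_one hx hpow, one_mul] at h
  exact mul_inv_eq_iff_eq_mul.mp h

theorem commute_of_forall_pow_eq_one_commute {x : Γ} (hx : (orderOf x).Coprime p) {B : Subgroup Γ}
    [IsMulCommutative B] (hB : IsPGroup p B) (hxB : ∀ b ∈ B, x * b * x⁻¹ ∈ B)
    (hΩ : ∀ b ∈ B, b ^ p = 1 → Commute x b) : ∀ b ∈ B, Commute x b := by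
  suffices key : ∀ k : ℕ, ∀ b ∈ B, b ^ p ^ k = 1 → Commute x b by
    intro b hb
    obtain ⟨k, hk⟩ := IsPElement.of_mem hB hb
    exact key k b hb hk
  intro k
  induction k with
  | zero => exact fun b _ h => by rw [pow_zero, pow_one] at h; exact h ▸ Commute.one_right x
  | succ k ih =>
    intro b hb h
    have hbp : Commute x (b ^ p) := ih _ (B.pow_mem hb p) (by rw [← pow_mul, ← pow_succ', h])
    have hcB : x * b * x⁻¹ * b⁻¹ ∈ B := B.mul_mem (hxB b hb) (B.inv_mem hb)
    have hcomm : Commute (x * b * x⁻¹) b⁻¹ :=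
      setLike_mul_comm (hxB b hb) (B.inv_mem hb)
    have hcp : (x * b * x⁻¹ * b⁻¹) ^ p = 1 := by
      rw [hcomm.mul_pow, conj_pow, hbp.mul_inv_cancel, inv_pow, mul_inv_cancel]
    exact commute_of_conj_eq_mul hx (inv_mul_cancel_right _ _).symm (hΩ _ hcB hcp)
      (IsPElement.of_mem hB hcB)

end PElements

section Isolated

variable {Γ : Type*} [Group Γ] {p : ℕ}

theorem exists_conj_mem_of_isPGroup [Finite Γ] [Fact p.Prime] {D S R : Subgroup Γ} (hSD : S ≤ D)
    (hRD : R ≤ D) (hS : IsPGroup p S) (hR : IsPGroup p R) :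
    ∃ g ∈ D, ∃ Q : Subgroup Γ, IsPGroup p Q ∧ S ≤ Q ∧ ∀ r ∈ R, g * r * g⁻¹ ∈ Q := by
  obtain ⟨P, hP⟩ := (hS.of_equiv (subgroupOfEquivOfLe hSD).symm).exists_le_sylow
  obtain ⟨P', hP'⟩ := (hR.of_equiv (subgroupOfEquivOfLe hRD).symm).exists_le_sylow
  obtain ⟨g, rfl⟩ := MulAction.exists_smul_eq D P' P
  refine ⟨g, g.2, _, (g • P').2.map D.subtype,
    fun s hs => ⟨⟨s, hSD hs⟩, hP (mem_subgroupOf.mpr hs), rfl⟩, fun r hr => ?_⟩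
  exact ⟨_, smul_mem_pointwise_smul _ (MulAut.conj g) _
    (hP' (mem_subgroupOf.mpr hr : (⟨r, hRD hr⟩ : D) ∈ _)), rfl⟩

theorem exists_conj_mem_sylow_of_le [Finite Γ] [Fact p.Prime] (T : Sylow p Γ) {D S : Subgroup Γ}
    (hT : (T : Subgroup Γ) ≤ D) (hS : S ≤ D) (hp : IsPGroup p S) :
    ∃ g ∈ D, ∀ s ∈ S, g * s * g⁻¹ ∈ T := by
  obtain ⟨g, hg, Q, hQ, hTQ, hgQ⟩ := exists_conj_mem_of_isPGroup hT hS T.2 hp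
  refine ⟨g, hg, fun s hs => ?_⟩
  rw [← SetLike.mem_coe, ← Sylow.coe_coe, ← T.3 hQ hTQ]
  exact hgQ s hs

theorem exists_conj_mem_sylow [Finite Γ] [Fact p.Prime] (T : Sylow p Γ) {x : Γ}
    (hx : IsPElement p x) : ∃ g, g * x * g⁻¹ ∈ T := by
  obtain ⟨g, _, hg⟩ := exists_conj_mem_sylow_of_le T le_top le_top hx.isPGroup_zpowers
  exact ⟨g, hg x (mem_zpowers x)⟩

/-- `u` is isolated with respect to `p`: distinct conjugates of `u` never lie in a common
`p`-subgroup. For a `p`-element this says that `u` is the only conjugate of `u` in any Sylow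
`p`-subgroup containing it. -/
def IsIsolated (p : ℕ) (u : Γ) : Prop :=
  ∀ S : Subgroup Γ, IsPGroup p S → ∀ a ∈ S, ∀ b ∈ S, IsConj u a → IsConj u b → a = b

theorem isIsolated_of_sylow [Finite Γ] [Fact p.Prime] (T : Sylow p Γ) {u : Γ}
    (h : ∀ g, g * u * g⁻¹ ∈ T → g * u * g⁻¹ = u) : IsIsolated p u := by
  intro S hS a ha b hb hua hub
  obtain ⟨g, _, hg⟩ := exists_conj_mem_sylow_of_le T le_top le_top hS
  have key : ∀ c ∈ S, IsConj u c → g * c * g⁻¹ = u := by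
    rintro _ hc huc
    obtain ⟨x, rfl⟩ := isConj_iff.mp huc
    have hconj : g * (x * u * x⁻¹) * g⁻¹ = g * x * u * (g * x)⁻¹ := by group
    rw [hconj]
    exact h _ (hconj ▸ hg _ hc)
  exact mul_left_cancel (mul_right_cancel ((key a ha hua).trans (key b hb hub).symm))

theorem IsIsolated.conj_eq_of_mem {u : Γ} (h : IsIsolated p u) (T : Sylow p Γ) (hu : u ∈ T) {g : Γ}
    (hg : g * u * g⁻¹ ∈ T) : g * u * g⁻¹ = u :=
  h T T.2 _ hg _ hu (isConj_iff.mpr ⟨g, rfl⟩) (IsConj.refl u)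

theorem isPGroup_zpowers_sup_zpowers {x y : Γ} (hx : IsPElement p x) (hy : IsPElement p y)
    (h : y * x * y⁻¹ = x ∨ y * x * y⁻¹ = x⁻¹) :
    IsPGroup p (zpowers y ⊔ zpowers x : Subgroup Γ) := by
  have hconj : zpowers (y * x * y⁻¹) = zpowers x := by
    rcases h with h | h <;> rw [h]
    exact zpowers_inv
  refine hy.isPGroup_zpowers.to_sup_of_normal_right' hx.isPGroup_zpowers (zpowers_le.mpr ?_)
  rw [mem_normalizer_iff_map_conj_eq, MonoidHom.map_zpowers]
  exact hconj

theorem IsIsolated.eq_of_commute {u a b : Γ} (h : IsIsolated p u) (hu : IsPElement p u)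
    (ha : IsConj u a) (hb : IsConj u b) (hab : Commute a b) : a = b := by
  obtain ⟨g, rfl⟩ := isConj_iff.mp ha
  obtain ⟨k, rfl⟩ := isConj_iff.mp hb
  exact h _ (isPGroup_zpowers_sup_zpowers (hu.conj k) (hu.conj g) (.inl hab.mul_inv_cancel)) _
    (mem_sup_left (mem_zpowers _)) _ (mem_sup_right (mem_zpowers _)) ha hb

theorem IsIsolated.exists_commute_conj_eq [Finite Γ] [Fact p.Prime] {u s g : Γ}
    (h : IsIsolated p u) (hu : IsPElement p u) (hs : Commute s u)
    (hg : Commute (g * s * g⁻¹) u) : ∃ k, Commute k u ∧ k * s * k⁻¹ = g * s * g⁻¹ := by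
  have hgu : Commute (g * u * g⁻¹) (g * s * g⁻¹) := by
    rw [Commute, SemiconjBy, conj_mul, conj_mul, hs.eq]
  obtain ⟨k, hk, S, hS, huS, hkS⟩ := exists_conj_mem_of_isPGroup
    (zpowers_le.mpr (mem_centralizer_singleton_iff.mpr hg.symm.eq))
    (zpowers_le.mpr (mem_centralizer_singleton_iff.mpr hgu.eq))
    hu.isPGroup_zpowers (hu.conj g).isPGroup_zpowers
  have hconj (x : Γ) : k * g * x * (k * g)⁻¹ = k * (g * x * g⁻¹) * k⁻¹ := by group
  have hkg : k * g * u * (k * g)⁻¹ = u := by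
    rw [hconj]
    exact h S hS _ (hkS _ (mem_zpowers _)) _ (huS (mem_zpowers u))
      (isConj_iff.mpr ⟨k * g, hconj u⟩) (IsConj.refl u)
  refine ⟨k * g, mul_inv_eq_iff_eq_mul.mp hkg, ?_⟩
  rw [hconj]
  exact Commute.mul_inv_cancel (mem_centralizer_singleton_iff.mp hk)

end Isolated

/-! ### The quandle of conjugates of an isolated element -/

section Latin

variable {Γ : Type*} [Group Γ]

/-- `u` is an isolated `2`-element with central square. Its conjugates then form a Latin quandle:
left translations `ω ↦ μ * ω * μ⁻¹` and right translations `μ ↦ μ * ω * μ⁻¹` of the conjugacy class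
are both bijective. -/
structure IsLatin (u : Γ) : Prop where
  isIsolated : IsIsolated 2 u
  isPElement : IsPElement 2 u
  sq_mem_center : u ^ 2 ∈ center Γ

/-- The conjugates of `u` that commute with every element of `S`. -/
def conjugatesCentralizing (u : Γ) (S : Set Γ) : Set Γ :=
  {ω | IsConj u ω ∧ ∀ s ∈ S, Commute s ω}

theorem isConj_conj {u a : Γ} (ha : IsConj u a) (g : Γ) : IsConj u (g * a * g⁻¹) :=
  ha.trans (isConj_iff.mpr ⟨g, rfl⟩)

theorem pow_conj_of_conj_eq_inv {d ω : Γ} (hd : ω * d * ω⁻¹ = d⁻¹) (k : ℕ) :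
    d ^ k * ω * (d ^ k)⁻¹ = d ^ (2 * k) * ω := by
  have hk : ω * (d ^ k)⁻¹ * ω⁻¹ = d ^ k := by rw [← conj_inv, ← conj_pow, hd, inv_pow, inv_inv]
  calc d ^ k * ω * (d ^ k)⁻¹ = d ^ k * (ω * (d ^ k)⁻¹ * ω⁻¹) * ω := by group
    _ = d ^ (2 * k) * ω := by rw [hk, two_mul, pow_add]

theorem eq_of_sq_eq_sq_of_odd_orderOf {a b : Γ} (ha : Odd (orderOf a)) (hb : Odd (orderOf b))
    (h : a ^ 2 = b ^ 2) : a = b := by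
  obtain ⟨k, hk⟩ := ha.mul hb
  have key {c : Γ} (hc : orderOf c ∣ orderOf a * orderOf b) : (c ^ 2) ^ (k + 1) = c := by
    rw [← pow_mul, mul_add, mul_one, ← add_assoc _ 1 1, ← hk, pow_succ,
      orderOf_dvd_iff_pow_eq_one.mp hc, one_mul]
  rw [← key (Dvd.intro _ rfl), h, key (Dvd.intro_left _ rfl)]

namespace IsLatin

variable {u μ ν ω : Γ}

theorem sq_eq (h : IsLatin u) (hω : IsConj u ω) : ω ^ 2 = u ^ 2 := by
  obtain ⟨g, rfl⟩ := isConj_iff.mp hω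
  rw [conj_pow]
  exact Commute.mul_inv_cancel (mem_center_iff.mp h.sq_mem_center g)

theorem sq_conj_eq (h : IsLatin u) (hμ : IsConj u μ) (g : Γ) : μ * (μ * g * μ⁻¹) * μ⁻¹ = g :=
  calc μ * (μ * g * μ⁻¹) * μ⁻¹ = μ ^ 2 * g * (μ ^ 2)⁻¹ := by rw [pow_two]; group
    _ = g := by
      rw [h.sq_eq hμ]
      exact Commute.mul_inv_cancel (mem_center_iff.mp h.sq_mem_center g).symm

theorem conj_mul_inv (h : IsLatin u) (hμ : IsConj u μ) (hω : IsConj u ω) :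
    ω * (μ * ω⁻¹) * ω⁻¹ = (μ * ω⁻¹)⁻¹ := by
  have hsq : ω ^ 2 = μ ^ 2 := by rw [h.sq_eq hμ, h.sq_eq hω]
  calc ω * (μ * ω⁻¹) * ω⁻¹ = ω * μ * (ω ^ 2)⁻¹ := by group
    _ = (μ * ω⁻¹)⁻¹ := by rw [hsq]; group

theorem conj_eq (h : IsLatin u) (hμ : IsConj u μ) (hω : IsConj u ω) :
    μ * ω * μ⁻¹ = (μ * ω⁻¹) ^ 2 * ω := by
  have := pow_conj_of_conj_eq_inv (h.conj_mul_inv hμ hω) 1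
  rw [pow_one, mul_one] at this
  rw [← this]
  group

theorem commute_mul_iff (h : IsLatin u) (hμ : IsConj u μ) {v x : Γ} (hv : Commute v μ) :
    Commute (v * μ) x ↔ μ * x * μ⁻¹ = v * x * v⁻¹ := by
  have hvx : v * μ * x * (v * μ)⁻¹ = μ * (v * x * v⁻¹) * μ⁻¹ := by rw [hv.eq]; group
  calc Commute (v * μ) x ↔ μ * (v * x * v⁻¹) * μ⁻¹ = μ * (μ * x * μ⁻¹) * μ⁻¹ := by
        rw [h.sq_conj_eq hμ, ← hvx, mul_inv_eq_iff_eq_mul]; rfl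
    _ ↔ μ * x * μ⁻¹ = v * x * v⁻¹ := by rw [mul_left_inj, mul_right_inj, eq_comm]

variable [Finite Γ]

/-- `μ` and `ω` generate a generalized dihedral group; an even order of the rotation `μ * ω⁻¹`
would produce two distinct conjugates of `u` in a common `2`-subgroup. -/
theorem odd_orderOf_mul_inv (h : IsLatin u) (hμ : IsConj u μ) (hω : IsConj u ω) :
    Odd (orderOf (μ * ω⁻¹)) := by
  set d := μ * ω⁻¹ with hd
  have hinv : ω * d * ω⁻¹ = d⁻¹ := h.conj_mul_inv hμ hω
  obtain ⟨-, q, hq, hdq, -⟩ := exists_isPElement_pow_and_coprime_orderOf_pow (p := 2) d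
  rw [Nat.coprime_two_right] at hq
  obtain ⟨m, hm⟩ := id hq
  have hω2 : IsPElement 2 ω := by
    obtain ⟨g, rfl⟩ := isConj_iff.mp hω
    exact h.isPElement.conj g
  have hconj : d ^ q * ω = d ^ m * μ * (d ^ m)⁻¹ := by
    calc d ^ q * ω = d * (d ^ (2 * m) * ω) := by rw [hm, pow_succ', mul_assoc]
      _ = d * (d ^ m * ω * (d ^ m)⁻¹) := by rw [pow_conj_of_conj_eq_inv hinv]
      _ = d ^ m * (d * ω) * (d ^ m)⁻¹ := by simp only [← mul_assoc, ← pow_succ', ← pow_succ]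
      _ = d ^ m * μ * (d ^ m)⁻¹ := by rw [hd, inv_mul_cancel_right]
  have hS := isPGroup_zpowers_sup_zpowers hdq hω2 (.inr (by rw [← conj_pow, hinv, inv_pow]))
  have hdqω : d ^ q * ω = ω := h.isIsolated _ hS _
    (mul_mem (mem_sup_right (mem_zpowers _)) (mem_sup_left (mem_zpowers _))) _
    (mem_sup_left (mem_zpowers _)) (hconj ▸ isConj_conj hμ _) hω
  exact hq.of_dvd_nat (orderOf_dvd_of_pow_eq_one (mul_eq_right.mp hdqω))

theorem eq_of_conj_eq (h : IsLatin u) (hμ : IsConj u μ) (hν : IsConj u ν) (hω : IsConj u ω)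
    (he : μ * ω * μ⁻¹ = ν * ω * ν⁻¹) : μ = ν := by
  rw [h.conj_eq hμ hω, h.conj_eq hν hω] at he
  exact mul_right_cancel (eq_of_sq_eq_sq_of_odd_orderOf (h.odd_orderOf_mul_inv hμ hω)
    (h.odd_orderOf_mul_inv hν hω) (mul_right_cancel he))

theorem exists_conj_eq (h : IsLatin u) (hω : IsConj u ω) (hν : IsConj u ν) :
    ∃ μ, IsConj u μ ∧ μ * ω * μ⁻¹ = ν := by
  let f : {x // IsConj u x} → {x // IsConj u x} := fun μ => ⟨μ * ω * (μ : Γ)⁻¹, isConj_conj hω _⟩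
  have hf : Function.Injective f := fun a b hab =>
    Subtype.ext (h.eq_of_conj_eq a.2 b.2 hω (congrArg Subtype.val hab))
  obtain ⟨μ, hμ⟩ := Finite.injective_iff_surjective.mp hf ⟨ν, hν⟩
  exact ⟨μ, μ.2, congrArg Subtype.val hμ⟩

theorem commute_of_conj_conj_eq (h : IsLatin u) (hμ : IsConj u μ) (hω : IsConj u ω) {g : Γ}
    (he : μ * (g * ω * g⁻¹) * μ⁻¹ = g * (μ * ω * μ⁻¹) * g⁻¹) : Commute g μ := by
  refine mul_inv_eq_iff_eq_mul.mp (h.eq_of_conj_eq (isConj_conj hμ g) hμ (isConj_conj hω g) ?_)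
  rw [he]
  group

theorem commute_of_commute_conj (h : IsLatin u) (hμ : IsConj u μ) (hω : IsConj u ω) {g : Γ}
    (hgω : Commute g ω) (hg : Commute g (μ * ω * μ⁻¹)) : Commute g μ :=
  h.commute_of_conj_conj_eq hμ hω (by rw [hgω.mul_inv_cancel, hg.mul_inv_cancel])

theorem exists_midpoint (h : IsLatin u) {S : Set Γ} {v : Γ}
    (hω : ω ∈ conjugatesCentralizing u S) (hvω : v * ω * v⁻¹ ∈ conjugatesCentralizing u S)
    (hv : Commute (v ^ 2) ω) :
    ∃ μ ∈ conjugatesCentralizing u (insert v S), Commute (v * μ) ω := by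
  obtain ⟨μ, hμ, hμω⟩ := h.exists_conj_eq hω.1 hvω.1
  have hvμ : Commute v μ := h.commute_of_conj_conj_eq hμ hω.1 <|
    calc μ * (v * ω * v⁻¹) * μ⁻¹ = ω := by rw [← hμω, h.sq_conj_eq hμ]
      _ = v ^ 2 * ω * (v ^ 2)⁻¹ := hv.mul_inv_cancel.symm
      _ = v * (μ * ω * μ⁻¹) * v⁻¹ := by rw [hμω, pow_two]; group
  refine ⟨μ, ⟨hμ, ?_⟩, (h.commute_mul_iff hμ hvμ).mpr hμω⟩
  rintro s (rfl | hs)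
  · exact hvμ
  · exact h.commute_of_commute_conj hμ hω.1 (hω.2 s hs) (hμω ▸ hvω.2 s hs)

theorem exists_conj_eq_and_forall_commute (h : IsLatin u) {S : Set Γ}
    (hS : ∀ s ∈ S, Commute s u) :
    ∃ g : Γ → Γ, ∀ μ ∈ conjugatesCentralizing u S,
      g μ * u * (g μ)⁻¹ = μ ∧ ∀ s ∈ S, Commute s (g μ) := by
  have hg (μ : Γ) : ∃ g, μ ∈ conjugatesCentralizing u S →
      g * u * g⁻¹ = μ ∧ ∀ s ∈ S, Commute s g := by
    by_cases hμ : μ ∈ conjugatesCentralizing u S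
    · obtain ⟨g, hg, rfl⟩ := h.exists_conj_eq (IsConj.refl u) hμ.1
      exact ⟨g, fun _ => ⟨rfl, fun s hs =>
        h.commute_of_commute_conj hg (IsConj.refl u) (hS s hs) (hμ.2 s hs)⟩⟩
    · exact ⟨1, fun hμ' => absurd hμ' hμ⟩
  choose g hg using hg
  exact ⟨g, hg⟩

/-- The product formula. The elements `ω` counted on the left are fibred by the conjugate `μ` of
`u` with `μ * ω * μ⁻¹ = v * ω * v⁻¹`, and the fibres are translates of one another. -/
theorem ncard_conjugatesCentralizing (h : IsLatin u) {S : Set Γ} (hS : ∀ s ∈ S, Commute s u)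
    {v : Γ} (hv : Commute v u)
    (hvS : ∀ ω ∈ conjugatesCentralizing u S, v * ω * v⁻¹ ∈ conjugatesCentralizing u S)
    (hv2 : ∀ ω ∈ conjugatesCentralizing u S, Commute (v ^ 2) ω) :
    (conjugatesCentralizing u S).ncard =
      (conjugatesCentralizing u (insert v S)).ncard *
        (conjugatesCentralizing u (insert (v * u) S)).ncard := by
  obtain ⟨g, hg⟩ := h.exists_conj_eq_and_forall_commute (Set.forall_mem_insert.mpr ⟨hv, hS⟩)
  have hfibre {μ : Γ} (hμ : μ ∈ conjugatesCentralizing u (insert v S)) (ω : Γ) :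
      Commute (v * μ) (g μ * ω * (g μ)⁻¹) ↔ Commute (v * u) ω := by
    obtain ⟨hgμ, hgS⟩ := hg μ hμ
    have hvμ : v * μ = g μ * (v * u) * (g μ)⁻¹ := by
      rw [← conj_mul, (hgS v (Set.mem_insert v S)).symm.mul_inv_cancel, hgμ]
    rw [hvμ, Commute.conj_iff]
  have hbij : Set.BijOn (fun x : Γ × Γ => g x.1 * x.2 * (g x.1)⁻¹)
      (conjugatesCentralizing u (insert v S) ×ˢ conjugatesCentralizing u (insert (v * u) S))
      (conjugatesCentralizing u S) := by
    refine ⟨fun ⟨μ, ω⟩ ⟨hμ, hω⟩ => ⟨isConj_conj hω.1 _, fun s hs => ?_⟩, ?_, fun ω hω => ?_⟩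
    · have hsg := (hg μ hμ).2 s (Set.mem_insert_of_mem v hs)
      exact (hsg.mul_right (hω.2 s (Set.mem_insert_of_mem _ hs))).mul_right hsg.inv_right
    · rintro ⟨μ, ω⟩ ⟨hμ, hω⟩ ⟨ν, ω'⟩ ⟨hν, hω'⟩ (he : g μ * ω * (g μ)⁻¹ = g ν * ω' * (g ν)⁻¹)
      have h₁ := (h.commute_mul_iff hμ.1 (hμ.2 v (Set.mem_insert v S))).mp
        ((hfibre hμ ω).mpr (hω.2 _ (Set.mem_insert _ S)))
      have h₂ := (h.commute_mul_iff hν.1 (hν.2 v (Set.mem_insert v S))).mp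
        ((hfibre hν ω').mpr (hω'.2 _ (Set.mem_insert _ S)))
      obtain rfl : μ = ν :=
        h.eq_of_conj_eq hμ.1 hν.1 (isConj_conj hω.1 _) (h₁.trans (by rw [he, h₂]))
      exact Prod.ext rfl (mul_left_cancel (mul_right_cancel he))
    · obtain ⟨μ, hμ, hμω⟩ := h.exists_midpoint hω (hvS ω hω) (hv2 ω hω)
      have hgS := (hg μ hμ).2
      refine ⟨(μ, (g μ)⁻¹ * ω * (g μ)⁻¹⁻¹), ⟨hμ, isConj_conj hω.1 _, ?_⟩, by group⟩
      refine Set.forall_mem_insert.mpr ⟨?_, fun s hs => ?_⟩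
      · exact (hfibre hμ _).mp (by simpa [mul_assoc] using hμω)
      · have hsg := hgS s (Set.mem_insert_of_mem v hs)
        exact (hsg.inv_right.mul_right (hω.2 s hs)).mul_right hsg.inv_right.inv_right
  rw [← hbij.ncard_eq, Set.ncard_prod]

end IsLatin

end Latin

/-! ### The residual `O^p(N)` -/

section Counting

variable {Γ : Type*} [Group Γ]

theorem ncard_conj_orbit (D : Subgroup Γ) (u : Γ) :
    {ω | ∃ g ∈ D, g * u * g⁻¹ = ω}.ncard = (centralizer {u}).relIndex D := by
  let _ : MulAction D Γ := MulAction.compHom Γ ((MulAut.conj : Γ →* MulAut Γ).comp D.subtype)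
  have hsmul (d : D) (x : Γ) : d • x = d * x * (d : Γ)⁻¹ := rfl
  have horbit : {ω | ∃ g ∈ D, g * u * g⁻¹ = ω} = MulAction.orbit D u := by
    ext ω
    simp only [Set.mem_ofPred_eq, MulAction.mem_orbit_iff, hsmul, Subtype.exists, exists_prop]
  have hstab : (centralizer {u}).subgroupOf D = MulAction.stabilizer D u := by
    ext g
    rw [mem_subgroupOf, mem_centralizer_singleton_iff, MulAction.mem_stabilizer_iff, hsmul,
      mul_inv_eq_iff_eq_mul]
  rw [horbit, relIndex, hstab, MulAction.index_stabilizer]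

theorem ncard_conjugatesCentralizing_empty (u : Γ) :
    (conjugatesCentralizing u ∅).ncard = (centralizer {u}).index := by
  rw [← relIndex_top_right, ← ncard_conj_orbit]
  congr 1
  ext ω
  simp [conjugatesCentralizing, isConj_iff]

theorem ncard_eq_of_forall_conj_mem_iff {X Y : Set Γ} (g : Γ)
    (h : ∀ ω, g * ω * g⁻¹ ∈ Y ↔ ω ∈ X) : X.ncard = Y.ncard := by
  have hbij : Set.BijOn (MulAut.conj g) X Y :=
    (MulAut.conj g).toEquiv.bijOn h
  exact hbij.ncard_eq

theorem pow_dvd_card_of_perm {α : Type*} {p n : ℕ} [Fact p.Prime] {σ : Equiv.Perm α}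
    (hσ : σ ^ p ^ (n + 1) = 1) (hfree : ∀ x, (σ ^ p ^ n) x ≠ x) : p ^ (n + 1) ∣ Nat.card α := by
  have hperiod (x : α) : Function.minimalPeriod (σ • ·) x = p ^ (n + 1) := by
    refine Function.minimalPeriod_eq_prime_pow ?_ ?_ <;>
      rw [Function.IsPeriodicPt, smul_iterate, Function.IsFixedPt, Equiv.Perm.smul_def]
    · exact hfree x
    · rw [hσ, Equiv.Perm.one_apply]
  have hstab (x : α) : MulAction.stabilizer (zpowers σ) x = ⊥ := by
    rw [eq_bot_iff]
    rintro ⟨_, k, rfl⟩ hk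
    obtain ⟨j, rfl⟩ := hperiod x ▸ MulAction.zpow_smul_eq_iff_minimalPeriod_dvd.mp
      (MulAction.mem_stabilizer_iff.mp hk)
    have hone : σ ^ (((p ^ (n + 1) : ℕ) : ℤ) * j) = 1 := by
      rw [zpow_mul, zpow_natCast, hσ, one_zpow]
    exact mem_bot.mpr (Subtype.ext hone)
  rcases isEmpty_or_nonempty α with _ | ⟨⟨x⟩⟩
  · simp
  have hcard := Nat.card_congr (MulAction.selfEquivOrbitsQuotientProd hstab)
  rw [Nat.card_prod, Nat.card_zpowers] at hcard
  rw [hcard, ← hperiod x]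
  refine dvd_mul_of_dvd_right (Function.IsPeriodicPt.minimalPeriod_dvd ?_) _
  rw [Function.IsPeriodicPt, smul_iterate, pow_orderOf_eq_one]
  exact one_smul _ x

theorem ncard_modEq_one {p n : ℕ} [Fact p.Prime] {X : Set Γ} (hX : X.Finite) {κ x₀ : Γ}
    (hκ : κ ^ p ^ (n + 1) = 1) (hκX : ∀ ω, κ * ω * κ⁻¹ ∈ X ↔ ω ∈ X) (hx₀ : x₀ ∈ X)
    (hκx₀ : Commute κ x₀) (hfix : ∀ ω ∈ X, Commute (κ ^ p ^ n) ω → ω = x₀) :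
    X.ncard ≡ 1 [MOD p ^ (n + 1)] := by
  have := hX.to_subtype
  have hfixed (ω : Γ) : κ * ω * κ⁻¹ = x₀ ↔ ω = x₀ := by
    conv_lhs => rw [← hκx₀.mul_inv_cancel, mul_left_inj, mul_right_inj]
  let σ : Equiv.Perm ↥(X \ {x₀}) := Equiv.Perm.subtypePerm (MulAut.conj κ).toEquiv fun ω => by
    simp [hκX, hfixed]
  have hσ (k : ℕ) (ω : ↥(X \ {x₀})) : (((σ ^ k) ω : ↥(X \ {x₀})) : Γ) = κ ^ k * ω * (κ ^ k)⁻¹ := by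
    induction k generalizing ω with
    | zero => simp
    | succ k ih =>
      rw [pow_succ, Equiv.Perm.mul_apply, ih]
      change κ ^ k * (κ * ω * κ⁻¹) * (κ ^ k)⁻¹ = _
      rw [pow_succ]
      group
  have hdvd : p ^ (n + 1) ∣ (X \ {x₀}).ncard := by
    rw [← Nat.card_coe_set_eq]
    refine pow_dvd_card_of_perm (σ := σ) (Equiv.ext fun ω => Subtype.ext ?_) fun ω hω => ?_
    · rw [hσ, hκ]; simp
    · have := congrArg Subtype.val hω
      rw [hσ] at this
      exact ω.2.2 (hfix _ ω.2.1 (mul_inv_eq_iff_eq_mul.mp this))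
  rw [← Set.ncard_sdiff_singleton_add_one hx₀ hX]
  exact (Nat.modEq_zero_iff_dvd.mpr hdvd).add_right 1

theorem exists_mem_sylow_conj_eq [Finite Γ] {p a : ℕ} [Fact p.Prime] (Q : Sylow p Γ) {u ω : Γ}
    (h : (centralizer {u}).index = p ^ a) (hω : IsConj u ω) : ∃ q ∈ Q, q * u * q⁻¹ = ω := by
  have hdvd : p ^ a ∣ (centralizer {u}).relIndex Q * (Q : Subgroup Γ).index := by
    rw [← inf_relIndex_right, relIndex_mul_index inf_le_right, ← h]
    exact index_dvd_of_le inf_le_left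
  have hcop : (p ^ a).Coprime (Q : Subgroup Γ).index :=
    (((Fact.out : p.Prime).coprime_iff_not_dvd).mpr Q.not_dvd_index).pow_left a
  have hle : p ^ a ≤ (centralizer {u}).relIndex Q :=
    Nat.le_of_dvd (Nat.pos_of_ne_zero index_ne_zero_of_finite) (hcop.dvd_of_dvd_mul_right hdvd)
  have hsub : {ω | ∃ q ∈ (Q : Subgroup Γ), q * u * q⁻¹ = ω} ⊆ conjugatesCentralizing u ∅ := by
    rintro ω ⟨q, -, hq⟩
    exact ⟨isConj_iff.mpr ⟨q, hq⟩, by simp⟩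
  have heq := Set.eq_of_subset_of_ncard_le hsub
    (by rwa [ncard_conj_orbit, ncard_conjugatesCentralizing_empty, h]) (Set.toFinite _)
  exact heq.symm.subset (show ω ∈ conjugatesCentralizing u ∅ from ⟨hω, by simp⟩)

end Counting

section Residual

variable {Γ : Type*} [Group Γ] {p : ℕ}

/-- The subgroup generated by the elements of `N` of order prime to `p`. For finite normal `N` this
is `O^p(N)`, the smallest normal subgroup with `p`-group quotient. -/
def pResidual (p : ℕ) (N : Subgroup Γ) : Subgroup Γ :=
  closure {x | x ∈ N ∧ (orderOf x).Coprime p}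

theorem pResidual_le (N : Subgroup Γ) : pResidual p N ≤ N :=
  (closure_le N).mpr fun _ hx => hx.1

theorem mem_pResidual {N : Subgroup Γ} {x : Γ} (hx : x ∈ N) (h : (orderOf x).Coprime p) :
    x ∈ pResidual p N :=
  subset_closure ⟨hx, h⟩

instance pResidual_normal (N : Subgroup Γ) [hN : N.Normal] : (pResidual p N).Normal := by
  rw [← normalizer_eq_top_iff, eq_top_iff, pResidual, le_normalizer_closure_iff]
  intro g _ x hx
  refine mem_pResidual (hN.conj_mem x hx.1 g) ?_
  rw [← MulAut.conj_apply, MulEquiv.orderOf_eq]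
  exact hx.2

theorem isPGroup_of_pResidual_eq_bot [Finite Γ] [Fact p.Prime] {N : Subgroup Γ}
    (h : pResidual p N = ⊥) : IsPGroup p N := by
  refine isPGroup_of_forall_isPElement fun x hx => ?_
  obtain ⟨k, -, -, -, hk⟩ := exists_isPElement_pow_and_coprime_orderOf_pow (p := p) x
  exact ⟨k, mem_bot.mp (h ▸ mem_pResidual (N.pow_mem hx _) hk)⟩

theorem exists_coprime_pow_map_eq_one [Fact p.Prime] (N : Subgroup Γ) {C : Type*} [CommGroup C]
    [Finite C] (f : pResidual p N →* C) : ∃ m : ℕ, m.Coprime p ∧ ∀ x, f x ^ m = 1 := by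
  obtain ⟨k, m, hm, hcard⟩ :=
    Nat.exists_eq_pow_mul_and_not_dvd (Nat.card_pos (α := C)).ne' p (Fact.out : p.Prime).ne_one
  refine ⟨m, ((Nat.Prime.coprime_iff_not_dvd Fact.out).mpr hm).symm, ?_⟩
  have htriv : (powMonoidHom m).comp f = 1 := by
    refine MonoidHom.eq_of_eqOn_dense (closure_closure_coe_preimage (k := {x | x ∈ N ∧ _})) ?_
    rintro x ⟨-, hx⟩
    have hdvd : orderOf (f x) ∣ p ^ k * m := hcard ▸ orderOf_dvd_natCard (f x)
    have hcop : (orderOf (f x)).Coprime (p ^ k) :=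
      (hx.coprime_dvd_left ((orderOf_map_dvd f x).trans (orderOf_coe x).symm.dvd)).pow_right k
    exact orderOf_dvd_iff_pow_eq_one.mp (hcop.dvd_of_dvd_mul_left hdvd)
  exact DFunLike.congr_fun htriv

theorem map_eq_one_of_isPElement [Fact p.Prime] {N : Subgroup Γ} {C : Type*} [CommGroup C]
    [Finite C] (f : pResidual p N →* C) {x : pResidual p N} (hx : IsPElement p (f x)) : f x = 1 :=
  let ⟨_, hm, hfm⟩ := exists_coprime_pow_map_eq_one N f
  hx.eq_one_of_pow_eq_one hm (hfm x)

theorem not_dvd_relIndex_of_normal [Finite Γ] [Fact p.Prime] (T : Sylow p Γ) (R : Subgroup Γ)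
    [R.Normal] : ¬ p ∣ (T : Subgroup Γ).relIndex R := by
  have hR : R.relIndex T ≠ 0 := index_ne_zero_of_finite
  have heq : R.relIndex T * (T : Subgroup Γ).relIndex (T ⊔ R) =
      R.relIndex T * (T : Subgroup Γ).relIndex R := by
    rw [← inf_relIndex_right R, relIndex_mul_relIndex _ _ _ inf_le_right le_sup_left,
      ← relIndex_mul_relIndex (R ⊓ T) R _ inf_le_left le_sup_right, relIndex_sup_right,
      inf_relIndex_left, mul_comm, inf_relIndex_right]
  rw [← Nat.eq_of_mul_eq_mul_left (Nat.pos_of_ne_zero hR) heq]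
  exact fun h => T.not_dvd_index (h.trans (relIndex_dvd_index_of_le le_sup_left))

theorem exists_sylow_eq_subgroupOf [Finite Γ] [Fact p.Prime] (T : Sylow p Γ) (R : Subgroup Γ)
    [R.Normal] : ∃ S : Sylow p R, (S : Subgroup R) = (T : Subgroup Γ).subgroupOf R :=
  ⟨(T.2.comap_of_injective R.subtype R.subtype_injective).toSylow
    (not_dvd_relIndex_of_normal T R), rfl⟩

theorem exists_mem_sylow_inf_centralizing [Finite Γ] [Fact p.Prime] (T : Sylow p Γ)
    {R : Subgroup Γ} [R.Normal] (hR : p ∣ Nat.card R) :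
    ∃ w ∈ T, w ∈ R ∧ w ≠ 1 ∧ ∀ x ∈ T, Commute x w := by
  have hU : p ∣ Nat.card (R.subgroupOf T) := by
    have hcard : Nat.card (R.subgroupOf T) * (T : Subgroup Γ).relIndex R = Nat.card R := by
      rw [← inf_relIndex_right, ← card_mul_index ((↑T ⊓ R).subgroupOf R), ← relIndex,
        Nat.card_congr (subgroupOfEquivOfLe (inf_le_right : ↑T ⊓ R ≤ R)).toEquiv, inf_comm,
        ← Nat.card_congr (subgroupOfEquivOfLe (inf_le_right : R ⊓ T ≤ T)).toEquiv,
        inf_subgroupOf_right]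
    exact ((Fact.out : p.Prime).dvd_mul.mp (hcard ▸ hR)).resolve_right
      (not_dvd_relIndex_of_normal T R)
  obtain ⟨w, hw, hne⟩ := T.2.of_equiv (ConjAct.toConjAct (G := T))
    |>.exists_fixed_point_of_prime_dvd_card_of_fixed_point (R.subgroupOf T) hU
      (a := 1) fun _ => smul_one _
  refine ⟨w, w.1.2, w.2, fun h => hne (Subtype.ext (Subtype.ext h.symm)), fun x hx => ?_⟩
  have hfix := congrArg (fun y : R.subgroupOf T => ((y : T) : Γ))
    (hw (ConjAct.toConjAct (⟨x, hx⟩ : T)))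
  exact mul_inv_eq_iff_eq_mul.mp hfix

/-- Transfer into an abelian Sylow subgroup of `O^p(N)` sends `z` to `z ^ index`. -/
theorem eq_one_of_forall_conj_pow_eq [Finite Γ] [Fact p.Prime] (T : Sylow p Γ) {N : Subgroup Γ}
    [N.Normal] {z : Γ} (hzT : z ∈ T) (hzR : z ∈ pResidual p N)
    (hz : ∀ k : ℕ, ∀ g ∈ pResidual p N, g * z ^ k * g⁻¹ ∈ T → g * z ^ k * g⁻¹ = z ^ k)
    (hcomm : ∀ x ∈ T, ∀ y ∈ T, x ∈ pResidual p N → y ∈ pResidual p N → Commute x y) : z = 1 := by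
  obtain ⟨S, hS⟩ := exists_sylow_eq_subgroupOf T (pResidual p N)
  have hmem (x : pResidual p N) : x ∈ (S : Subgroup (pResidual p N)) ↔ (x : Γ) ∈ T := by
    rw [hS, mem_subgroupOf]; rfl
  let _ : CommGroup S :=
    { (inferInstance : Group S) with
      mul_comm := fun a b => Subtype.ext <| Subtype.ext <|
        hcomm _ ((hmem _).mp a.2) _ ((hmem _).mp b.2) (a : pResidual p N).2 (b : pResidual p N).2 }
  let τ : pResidual p N →* S := MonoidHom.transfer (MonoidHom.id S)
  have hτ : τ ⟨z, hzR⟩ = 1 := map_eq_one_of_isPElement τ (S.2 _)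
  rw [MonoidHom.transfer_eq_pow _ _ fun k g hk => ?_] at hτ
  · have hpow : z ^ (S : Subgroup (pResidual p N)).index = 1 := by
      simpa [Subtype.ext_iff] using hτ
    exact (IsPElement.of_mem T.2 hzT).eq_one_of_pow_eq_one
      ((Nat.Prime.coprime_iff_not_dvd Fact.out).mpr S.not_dvd_index).symm hpow
  · have := hz k (g : Γ)⁻¹ (inv_mem g.2) (by simpa using (hmem _).mp hk)
    exact Subtype.ext (by simpa using this)

/-- A form of the focal subgroup theorem for the Sylow subgroup `T ⊓ O^p(N)` of `O^p(N)`. -/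
theorem sylow_inf_pResidual_le [Finite Γ] [Fact p.Prime] (T : Sylow p Γ) {N A : Subgroup Γ}
    [N.Normal] (hA : ∀ x ∈ T, x ∈ N → ∀ g, g * x * g⁻¹ ∈ T → x * (g * x * g⁻¹)⁻¹ ∈ A) :
    (T : Subgroup Γ) ⊓ pResidual p N ≤ A := by
  rintro v ⟨hvT, hvR⟩
  obtain ⟨S, hS⟩ := exists_sylow_eq_subgroupOf T (pResidual p N)
  have hmem (x : pResidual p N) : x ∈ (S : Subgroup (pResidual p N)) ↔ (x : Γ) ∈ T := by
    rw [hS, mem_subgroupOf]; rfl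
  have hcomm : (⟨v, hvR⟩ : pResidual p N) ∈ commutator (pResidual p N) := by
    rw [← Abelianization.ker_of, MonoidHom.mem_ker]
    obtain ⟨k, hk⟩ := IsPElement.of_mem T.2 hvT
    exact map_eq_one_of_isPElement _ ⟨k, by
      rw [← map_pow, show (⟨v, hvR⟩ : pResidual p N) ^ p ^ k = 1 from Subtype.ext hk, map_one]⟩
  have hfocal : (⟨v, hvR⟩ : pResidual p N) ∈ (S : Subgroup (pResidual p N)).focalSubgroup := by
    rw [← commutator_inf_eq_focalSubgroup]
    exact ⟨hcomm, (hmem _).mpr hvT⟩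
  have hle : (S : Subgroup (pResidual p N)).focalSubgroup ≤ A.subgroupOf (pResidual p N) := by
    rw [focalSubgroup_def, closure_le]
    rintro _ ⟨hg, x, hx, w, rfl⟩
    rw [hmem] at hg hx
    have heq : (x : Γ) * w * (x : Γ)⁻¹ * (w : Γ)⁻¹ = x * ((w : Γ) * x * (w : Γ)⁻¹)⁻¹ := by group
    replace hg : (x : Γ) * ((w : Γ) * x * (w : Γ)⁻¹)⁻¹ ∈ T := heq ▸ hg
    have hmemA := hA x hx (pResidual_le N x.2) w (by simpa using mul_mem (inv_mem hg) hx)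
    rwa [← heq] at hmemA
  exact hle hfocal

end Residual

/-! ### Central extensions of wreathed Sylow subgroups -/

theorem commute_iff_conj_eq {Γ : Type*} [Group Γ] {g x : Γ} : Commute g x ↔ g * x * g⁻¹ = x :=
  mul_inv_eq_iff_eq_mul.symm

/-- A group `Γ = G⟨f⟩` with `G` normal and `f` central in a Sylow `2`-subgroup `T`, such that
`G ⊓ T` looks like a wreathed `2`-group. Of the wreath product `(⟨a⟩ × ⟨a'⟩) ⋊ ⟨t⟩` we only record
that the base `A` is abelian of index `2`, with `t` outside of it, and that its involutions are
`κ ^ 2`, its `t`-conjugate and their product, where `κ` is a power of `a` of order `4`. -/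
structure WreathedExtension (Γ : Type*) [Group Γ] where
  G : Subgroup Γ
  normal_G : G.Normal
  T : Sylow 2 Γ
  f : Γ
  f_mem_T : f ∈ T
  commute_f : ∀ x ∈ T, Commute f x
  exists_eq_mul_pow : ∀ γ, ∃ g ∈ G, ∃ i : ℕ, γ = g * f ^ i
  A : Subgroup Γ
  A_le_G : A ≤ G
  A_le_T : A ≤ T
  commute_A : ∀ a ∈ A, ∀ b ∈ A, Commute a b
  mul_mem_A : ∀ x ∈ G ⊓ T, ∀ y ∈ G ⊓ T, x ∉ A → y ∉ A → x * y ∈ A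
  t : Γ
  t_mem : t ∈ G ⊓ T
  t_notMem_A : t ∉ A
  κ : Γ
  κ_mem_A : κ ∈ A
  κ_pow_four : κ ^ 4 = 1
  κ_sq_ne_one : κ ^ 2 ≠ 1
  conj_κ_sq_ne : t * κ ^ 2 * t⁻¹ ≠ κ ^ 2
  eq_of_sq_eq_one : ∀ x ∈ A, x ^ 2 = 1 →
    x = 1 ∨ x = κ ^ 2 ∨ x = t * κ ^ 2 * t⁻¹ ∨ x = κ ^ 2 * (t * κ ^ 2 * t⁻¹)

namespace WreathedExtension

variable {Γ : Type*} [Group Γ] (d : WreathedExtension Γ)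

/-- The first involution of the base `A`. -/
def e₁ : Γ := d.κ ^ 2

/-- The second involution of the base `A`, swapped with the first one by `t`. -/
def e₂ : Γ := d.t * d.e₁ * d.t⁻¹

/-- The central involution of `G ⊓ T`. -/
def z : Γ := d.e₁ * d.e₂

/-- A square root of `z` which is central in `T`. -/
def ι : Γ := d.κ * (d.t * d.κ * d.t⁻¹)

theorem commutator_mem_G (a b : Γ) : a * b * a⁻¹ * b⁻¹ ∈ d.G := by
  have := d.normal_G
  have hpow (x : Γ) : ∃ i : ℕ, (x : Γ ⧸ d.G) = (d.f : Γ ⧸ d.G) ^ i := by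
    obtain ⟨g, hg, i, rfl⟩ := d.exists_eq_mul_pow x
    exact ⟨i, by rw [QuotientGroup.mk_mul, (QuotientGroup.eq_one_iff g).mpr hg, one_mul,
      QuotientGroup.mk_pow]⟩
  obtain ⟨i, hi⟩ := hpow a
  obtain ⟨j, hj⟩ := hpow b
  rw [← QuotientGroup.eq_one_iff, QuotientGroup.mk_mul, QuotientGroup.mk_mul, QuotientGroup.mk_mul,
    QuotientGroup.mk_inv, QuotientGroup.mk_inv, hi, hj, (Commute.pow_pow_self _ i j).mul_inv_cancel,
    mul_inv_cancel]

theorem conj_mem_G {x : Γ} (hx : x ∈ d.G) (g : Γ) : g * x * g⁻¹ ∈ d.G :=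
  d.normal_G.conj_mem x hx g

theorem isPElement_of_mem_T {x : Γ} (hx : x ∈ d.T) : IsPElement 2 x :=
  IsPElement.of_mem d.T.2 hx

theorem conj_mem_T {x y : Γ} (hx : x ∈ d.T) (hy : y ∈ d.T) : y * x * y⁻¹ ∈ d.T :=
  mul_mem (mul_mem hy hx) (inv_mem hy)

theorem mem_sylow_of_mem_A {a : Γ} (ha : a ∈ d.A) : a ∈ d.G ⊓ d.T :=
  ⟨d.A_le_G ha, d.A_le_T ha⟩

theorem commute_f_pow {x : Γ} (hx : x ∈ d.T) (i : ℕ) : Commute (d.f ^ i) x :=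
  (d.commute_f x hx).pow_left i

theorem exists_eq_mul_pow_of_mem_T {x : Γ} (hx : x ∈ d.T) :
    ∃ p ∈ d.G ⊓ d.T, ∃ i : ℕ, x = p * d.f ^ i := by
  obtain ⟨g, hg, i, rfl⟩ := d.exists_eq_mul_pow x
  exact ⟨g, ⟨hg, (mul_mem_cancel_right (pow_mem d.f_mem_T i)).mp hx⟩, i, rfl⟩

theorem sylow_conj_mem_A {p a : Γ} (hp : p ∈ d.G ⊓ d.T) (ha : a ∈ d.A) : p * a * p⁻¹ ∈ d.A := by
  by_cases h : p ∈ d.A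
  · exact mul_mem (mul_mem h ha) (inv_mem h)
  · exact d.mul_mem_A _ (mul_mem hp (d.mem_sylow_of_mem_A ha)) _ (inv_mem hp)
      (mt (mul_mem_cancel_right ha).mp h) (mt inv_mem_iff.mp h)

theorem sq_mem_A {p : Γ} (hp : p ∈ d.G ⊓ d.T) : p ^ 2 ∈ d.A := by
  by_cases h : p ∈ d.A
  · exact pow_mem h 2
  · exact sq p ▸ d.mul_mem_A p hp p hp h h

theorem conj_eq_t_conj {v a : Γ} (hv : v ∈ d.G ⊓ d.T) (hvA : v ∉ d.A) (ha : a ∈ d.A) :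
    v * a * v⁻¹ = d.t * a * d.t⁻¹ := by
  have hvt : v * d.t⁻¹ ∈ d.A :=
    d.mul_mem_A v hv _ (inv_mem d.t_mem) hvA (mt inv_mem_iff.mp d.t_notMem_A)
  calc v * a * v⁻¹ = v * d.t⁻¹ * (d.t * a * d.t⁻¹) * (v * d.t⁻¹)⁻¹ := by group
    _ = d.t * a * d.t⁻¹ := (d.commute_A _ hvt _ (d.sylow_conj_mem_A d.t_mem ha)).mul_inv_cancel

theorem t_conj_t_conj {a : Γ} (ha : a ∈ d.A) : d.t * (d.t * a * d.t⁻¹) * d.t⁻¹ = a := by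
  calc d.t * (d.t * a * d.t⁻¹) * d.t⁻¹ = d.t ^ 2 * a * (d.t ^ 2)⁻¹ := by rw [sq]; group
    _ = a := (d.commute_A _ (d.sq_mem_A d.t_mem) a ha).mul_inv_cancel

theorem e₁_mem_A : d.e₁ ∈ d.A := pow_mem d.κ_mem_A 2

theorem e₂_mem_A : d.e₂ ∈ d.A := d.sylow_conj_mem_A d.t_mem d.e₁_mem_A

theorem z_mem_A : d.z ∈ d.A := mul_mem d.e₁_mem_A d.e₂_mem_A

theorem t_conj_κ_mem_A : d.t * d.κ * d.t⁻¹ ∈ d.A := d.sylow_conj_mem_A d.t_mem d.κ_mem_A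

theorem ι_mem_A : d.ι ∈ d.A := mul_mem d.κ_mem_A d.t_conj_κ_mem_A

theorem e₁_sq : d.e₁ ^ 2 = 1 := by rw [e₁, ← pow_mul, d.κ_pow_four]

theorem e₂_sq : d.e₂ ^ 2 = 1 := by rw [e₂, conj_pow, e₁_sq, mul_one, mul_inv_cancel]

theorem e₂_mul_self : d.e₂ * d.e₂ = 1 := sq d.e₂ ▸ d.e₂_sq

theorem commute_e₁_e₂ : Commute d.e₁ d.e₂ := d.commute_A _ d.e₁_mem_A _ d.e₂_mem_A

theorem z_sq : d.z ^ 2 = 1 := by rw [z, d.commute_e₁_e₂.mul_pow, e₁_sq, e₂_sq, one_mul]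

theorem ι_sq : d.ι ^ 2 = d.z := by
  rw [ι, (d.commute_A _ d.κ_mem_A _ d.t_conj_κ_mem_A).mul_pow, conj_pow]
  rfl

theorem e₁_ne_e₂ : d.e₁ ≠ d.e₂ := d.conj_κ_sq_ne.symm

theorem e₁_ne_one : d.e₁ ≠ 1 := d.κ_sq_ne_one

theorem e₂_ne_one : d.e₂ ≠ 1 := mt conj_eq_one_iff.mp d.e₁_ne_one

theorem z_mul_e₂ : d.z * d.e₂ = d.e₁ := by rw [z, mul_assoc, e₂_mul_self, mul_one]

theorem e₁_mul_z : d.e₁ * d.z = d.e₂ := by rw [z, ← mul_assoc, ← sq, e₁_sq, one_mul]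

theorem z_ne_one : d.z ≠ 1 := fun h => d.e₁_ne_e₂ (by rw [← d.z_mul_e₂, h, one_mul])

theorem z_ne_e₁ : d.z ≠ d.e₁ := fun h => d.e₂_ne_one (mul_eq_left.mp h)

theorem t_conj_e₂ : d.t * d.e₂ * d.t⁻¹ = d.e₁ := d.t_conj_t_conj d.e₁_mem_A

theorem commute_t_z : Commute d.t d.z := by
  rw [commute_iff_conj_eq, z, ← conj_mul, t_conj_e₂, d.commute_e₁_e₂]
  rfl

theorem commute_t_ι : Commute d.t d.ι := by
  rw [commute_iff_conj_eq, ι, ← conj_mul, d.t_conj_t_conj d.κ_mem_A,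
    (d.commute_A _ d.κ_mem_A _ d.t_conj_κ_mem_A).eq]

theorem not_commute_t_e₁ : ¬ Commute d.t d.e₁ := fun h =>
  d.e₁_ne_e₂ (commute_iff_conj_eq.mp h).symm

theorem commute_of_commute_notMem_A {v a : Γ} (hv : v ∈ d.G ⊓ d.T) (hvA : v ∉ d.A) (ha : a ∈ d.A)
    (h : Commute v a) : ∀ x ∈ d.T, Commute x a := by
  intro x hx
  obtain ⟨p, hp, i, rfl⟩ := d.exists_eq_mul_pow_of_mem_T hx
  refine Commute.mul_left ?_ (d.commute_f_pow (d.A_le_T ha) i)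
  by_cases hpA : p ∈ d.A
  · exact d.commute_A p hpA a ha
  · rw [commute_iff_conj_eq, d.conj_eq_t_conj hp hpA ha, ← d.conj_eq_t_conj hv hvA ha,
      h.mul_inv_cancel]

theorem commute_of_commute_t {a : Γ} (ha : a ∈ d.A) (h : Commute d.t a) :
    ∀ x ∈ d.T, Commute x a :=
  d.commute_of_commute_notMem_A d.t_mem d.t_notMem_A ha h

theorem commute_z : ∀ x ∈ d.T, Commute x d.z := d.commute_of_commute_t d.z_mem_A d.commute_t_z

theorem commute_ι : ∀ x ∈ d.T, Commute x d.ι := d.commute_of_commute_t d.ι_mem_A d.commute_t_ι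

theorem conj_e₁_of_notMem_A {v : Γ} (hv : v ∈ d.G ⊓ d.T) (hvA : v ∉ d.A) :
    v * d.e₁ * v⁻¹ = d.e₂ :=
  d.conj_eq_t_conj hv hvA d.e₁_mem_A

theorem mem_A_of_commute_e₁ {x : Γ} (hx : x ∈ d.G ⊓ d.T) (h : Commute x d.e₁) : x ∈ d.A := by
  by_contra hA
  exact d.e₁_ne_e₂ (h.mul_inv_cancel.symm.trans (d.conj_e₁_of_notMem_A hx hA))

theorem eq_one_or_e₁_or_e₂_or_z {a : Γ} (ha : a ∈ d.A) (h : a ^ 2 = 1) :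
    a = 1 ∨ a = d.e₁ ∨ a = d.e₂ ∨ a = d.z :=
  d.eq_of_sq_eq_one a ha h

theorem eq_one_or_eq_z {a : Γ} (ha : a ∈ d.A) (ha2 : a ^ 2 = 1) (h : Commute d.t a) :
    a = 1 ∨ a = d.z := by
  rcases d.eq_one_or_e₁_or_e₂_or_z ha ha2 with rfl | rfl | rfl | rfl
  · exact .inl rfl
  · exact absurd h d.not_commute_t_e₁
  · exact absurd (h.mul_inv_cancel.symm.trans d.t_conj_e₂) d.e₁_ne_e₂.symm
  · exact .inr rfl

theorem commute_t_of_sq {y : Γ} (hy : y ∈ d.A) (h : Commute d.t (y ^ 2)) :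
    Commute d.t y ∨ Commute d.t (y * d.e₁) := by
  let w := d.t * y * d.t⁻¹ * y⁻¹
  have hty := d.sylow_conj_mem_A d.t_mem hy
  have hwA : w ∈ d.A := mul_mem hty (inv_mem hy)
  have hw2 : w ^ 2 = 1 := by
    rw [(d.commute_A _ hty _ (inv_mem hy)).mul_pow, conj_pow, h.mul_inv_cancel, inv_pow,
      mul_inv_cancel]
  have htw : Commute d.t w := by
    have hinv : w⁻¹ = w := inv_eq_of_mul_eq_one_left (sq w ▸ hw2)
    rw [commute_iff_conj_eq]
    calc d.t * w * d.t⁻¹ = d.t * (d.t * y * d.t⁻¹) * d.t⁻¹ * (d.t * y * d.t⁻¹)⁻¹ := by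
          simp only [w]; group
      _ = w⁻¹ := by rw [d.t_conj_t_conj hy]; simp only [w]; group
      _ = w := hinv
  have hconj : d.t * y * d.t⁻¹ = w * y := (inv_mul_cancel_right _ y).symm
  simp only [commute_iff_conj_eq]
  rcases d.eq_one_or_eq_z hwA hw2 htw with hw | hw
  · exact .inl (by rw [hconj, hw, one_mul])
  · refine .inr ?_
    rw [← conj_mul, hconj, hw, (d.commute_A _ d.z_mem_A y hy).eq, mul_assoc]
    exact congrArg (y * ·) d.z_mul_e₂

theorem mem_normalizer_A [Finite Γ] {j : Γ} (h : ∀ a ∈ d.A, j * a * j⁻¹ ∈ d.T) :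
    j ∈ normalizer (d.A : Set Γ) := by
  refine mem_normalizer_fintype fun a ha => ?_
  by_contra hv
  have hP : ∀ a ∈ d.A, j * a * j⁻¹ ∈ d.G ⊓ d.T := fun a ha => ⟨d.conj_mem_G (d.A_le_G ha) j, h a ha⟩
  have hz {k : Γ} (hk : k ∈ d.A) (hk1 : k ^ 2 ≠ 1) (hk2 : (k ^ 2) ^ 2 = 1) :
      j * k ^ 2 * j⁻¹ = d.z := by
    have hkA : j * k ^ 2 * j⁻¹ ∈ d.A := by
      rw [← conj_pow]
      exact d.sq_mem_A (hP k hk)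
    have hcomm := d.commute_of_commute_notMem_A (hP a ha) hv hkA
      ((d.commute_A a ha _ (pow_mem hk 2)).conj j)
    refine (d.eq_one_or_eq_z hkA ?_ (hcomm d.t d.t_mem.2)).resolve_left (mt conj_eq_one_iff.mp hk1)
    rw [conj_pow, hk2, mul_one, mul_inv_cancel]
  have hκ := hz d.κ_mem_A d.e₁_ne_one d.e₁_sq
  have hκ' := hz d.t_conj_κ_mem_A (by rw [conj_pow]; exact d.e₂_ne_one)
    (by rw [conj_pow]; exact d.e₂_sq)
  rw [conj_pow] at hκ'
  exact d.e₁_ne_e₂ (conj_injective (hκ.trans hκ'.symm))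

/-- The centralizer of the base `A` in `T`; it is the abelian group `A⟨f⟩`. -/
def B : Subgroup Γ := (d.T : Subgroup Γ) ⊓ centralizer (d.A : Set Γ)

/-- The common normalizer of `A` and `B`, which controls the fusion of elements of `B`. -/
def M : Subgroup Γ := normalizer (d.A : Set Γ) ⊓ normalizer (d.B : Set Γ)

theorem mem_B_iff {x : Γ} : x ∈ d.B ↔ x ∈ d.T ∧ ∀ a ∈ d.A, Commute x a :=
  and_congr Iff.rfl (forall₂_congr fun _ _ => eq_comm)

theorem A_le_B : d.A ≤ d.B := fun a ha => d.mem_B_iff.mpr ⟨d.A_le_T ha, d.commute_A a ha⟩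

theorem B_le_T : d.B ≤ d.T := inf_le_left

theorem f_mem_B : d.f ∈ d.B := d.mem_B_iff.mpr ⟨d.f_mem_T, fun a ha => d.commute_f a (d.A_le_T ha)⟩

theorem mem_B_of_commute {u : Γ} (hu : u ∈ d.T) (h : ∀ x ∈ d.T, Commute x u) : u ∈ d.B :=
  d.mem_B_iff.mpr ⟨hu, fun a ha => (h a (d.A_le_T ha)).symm⟩

theorem mem_A_of_mem_B {x : Γ} (hx : x ∈ d.B) (hG : x ∈ d.G) : x ∈ d.A :=
  d.mem_A_of_commute_e₁ ⟨hG, d.B_le_T hx⟩ ((d.mem_B_iff.mp hx).2 _ d.e₁_mem_A)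

theorem mem_B_of_commute_e₁ {x : Γ} (hx : x ∈ d.T) (h : Commute x d.e₁) : x ∈ d.B := by
  obtain ⟨p, hp, i, rfl⟩ := d.exists_eq_mul_pow_of_mem_T hx
  have hpe : Commute p d.e₁ := by
    simpa using h.mul_left (d.commute_f_pow (d.A_le_T d.e₁_mem_A) i).inv_left
  exact mul_mem (d.A_le_B (d.mem_A_of_commute_e₁ hp hpe)) (pow_mem d.f_mem_B i)

theorem commute_B {x y : Γ} (hx : x ∈ d.B) (hy : y ∈ d.B) : Commute x y := by
  obtain ⟨p, hp, i, rfl⟩ := d.exists_eq_mul_pow_of_mem_T (d.B_le_T hx)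
  have hpA : p ∈ d.A :=
    d.mem_A_of_mem_B ((mul_mem_cancel_right (pow_mem d.f_mem_B i)).mp hx) hp.1
  exact ((d.mem_B_iff.mp hy).2 p hpA).symm.mul_left (d.commute_f_pow (d.B_le_T hy) i)

theorem conj_e₁_of_notMem_B {x : Γ} (hx : x ∈ d.T) (h : x ∉ d.B) : x * d.e₁ * x⁻¹ = d.e₂ := by
  obtain ⟨p, hp, i, rfl⟩ := d.exists_eq_mul_pow_of_mem_T hx
  have hpA : p ∉ d.A := fun hA => h (mul_mem (d.A_le_B hA) (pow_mem d.f_mem_B i))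
  calc p * d.f ^ i * d.e₁ * (p * d.f ^ i)⁻¹
      = p * (d.f ^ i * d.e₁ * (d.f ^ i)⁻¹) * p⁻¹ := by group
    _ = d.e₂ := by
      rw [(d.commute_f_pow (d.A_le_T d.e₁_mem_A) i).mul_inv_cancel,
        d.conj_e₁_of_notMem_A hp hpA]

theorem conj_mem_A {m a : Γ} (hm : m ∈ d.M) (ha : a ∈ d.A) : m * a * m⁻¹ ∈ d.A :=
  (mem_normalizer_iff.mp hm.1 a).mp ha

theorem conj_mem_B {m b : Γ} (hm : m ∈ d.M) (hb : b ∈ d.B) : m * b * m⁻¹ ∈ d.B :=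
  (mem_normalizer_iff.mp hm.2 b).mp hb

theorem conj_e₁_eq {m : Γ} (hm : m ∈ d.M) :
    m * d.e₁ * m⁻¹ = d.e₁ ∨ m * d.e₁ * m⁻¹ = d.e₂ ∨ m * d.e₁ * m⁻¹ = d.z :=
  (d.eq_one_or_e₁_or_e₂_or_z (d.conj_mem_A hm d.e₁_mem_A)
    (by rw [conj_pow, e₁_sq, mul_one, mul_inv_cancel])).resolve_left
    (mt conj_eq_one_iff.mp d.e₁_ne_one)

theorem commute_of_sq_eq_one {σ a : Γ} (h₁ : Commute σ d.e₁) (h₂ : Commute σ d.e₂) (ha : a ∈ d.A)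
    (ha2 : a ^ 2 = 1) : Commute σ a := by
  rcases d.eq_one_or_e₁_or_e₂_or_z ha ha2 with rfl | rfl | rfl | rfl
  exacts [Commute.one_right σ, h₁, h₂, h₁.mul_right h₂]

theorem commute_B_of_coprime {τ : Γ} (hτ : (orderOf τ).Coprime 2) (hM : τ ∈ d.M)
    (h₁ : Commute τ d.e₁) (h₂ : Commute τ d.e₂) : ∀ b ∈ d.B, Commute τ b := by
  have : IsMulCommutative d.A :=
    ⟨⟨fun a b => Subtype.ext (d.commute_A a a.2 b b.2)⟩⟩
  have hA := commute_of_forall_pow_eq_one_commute hτ (d.T.2.to_le d.A_le_T)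
    (fun a ha => d.conj_mem_A hM ha) fun a ha ha2 => d.commute_of_sq_eq_one h₁ h₂ ha ha2
  intro b hb
  have hc : τ * b * τ⁻¹ * b⁻¹ ∈ d.A :=
    d.mem_A_of_mem_B (mul_mem (d.conj_mem_B hM hb) (inv_mem hb)) (d.commutator_mem_G τ b)
  exact commute_of_conj_eq_mul hτ (inv_mul_cancel_right _ b).symm (hA _ hc)
    (d.isPElement_of_mem_T (d.A_le_T hc))

variable [Finite Γ]

theorem mem_M_of_forall_conj_mem_T {x : Γ} (h : ∀ b ∈ d.B, x * b * x⁻¹ ∈ d.T) : x ∈ d.M := by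
  have hA := d.mem_normalizer_A fun a ha => h a (d.A_le_B ha)
  refine ⟨hA, mem_normalizer_fintype fun b hb => d.mem_B_iff.mpr ⟨h b hb, fun a ha => ?_⟩⟩
  have hconj := (d.mem_B_iff.mp hb).2 _ ((mem_normalizer_iff''.mp hA a).mp ha)
  simpa [mul_assoc] using hconj.conj x

theorem T_le_M : (d.T : Subgroup Γ) ≤ d.M := fun _ hx =>
  d.mem_M_of_forall_conj_mem_T fun _ hb => d.conj_mem_T (d.B_le_T hb) hx

theorem commute_B_of_isPElement {τ : Γ} (hτ : IsPElement 2 τ) (hM : τ ∈ d.M)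
    (h₁ : Commute τ d.e₁) (h₂ : Commute τ d.e₂) : ∀ b ∈ d.B, Commute τ b := by
  obtain ⟨γ, hγ, hT⟩ :=
    exists_conj_mem_sylow_of_le d.T d.T_le_M (zpowers_le.mpr hM) hτ.isPGroup_zpowers
  have hcomm : Commute τ (γ⁻¹ * d.e₁ * γ) := by
    have hA := d.conj_mem_A (inv_mem hγ) d.e₁_mem_A
    rw [inv_inv] at hA
    refine d.commute_of_sq_eq_one h₁ h₂ hA ?_
    have hpow : (γ⁻¹ * d.e₁ * γ⁻¹⁻¹) ^ 2 = _ := conj_pow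
    rw [inv_inv, e₁_sq] at hpow
    rw [hpow, mul_one, inv_mul_cancel]
  have hB : γ * τ * γ⁻¹ ∈ d.B :=
    d.mem_B_of_commute_e₁ (hT _ (mem_zpowers τ)) (by simpa [mul_assoc] using hcomm.conj γ)
  exact fun b hb => d.commute_B ((mem_normalizer_iff.mp hγ.2 τ).mpr hB) hb

theorem commute_B_of_commute {σ : Γ} (hσ : σ ∈ d.M) (h₁ : Commute σ d.e₁) (h₂ : Commute σ d.e₂) :
    ∀ b ∈ d.B, Commute σ b := by
  have key : σ ∈ centralizer (d.B : Set Γ) :=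
    mem_of_isPElement_and_coprime_powers_mem (p := 2)
      (fun n hn b hb => (d.commute_B_of_isPElement hn (pow_mem hσ n) (h₁.pow_left n)
        (h₂.pow_left n) b hb).symm)
      (fun n hn b hb => (d.commute_B_of_coprime hn (pow_mem hσ n) (h₁.pow_left n)
        (h₂.pow_left n) b hb).symm)
  exact fun b hb => (mem_centralizer_iff.mp key b hb).symm

theorem commute_of_commute_z {σ b : Γ} (hσ : σ ∈ d.M) (hz : Commute σ d.z) (hb : b ∈ d.B)
    (htb : Commute d.t b) : Commute σ b := by
  have hB {τ : Γ} (hτ : τ ∈ d.M) (hz : Commute τ d.z) (h₁ : Commute τ d.e₁) : Commute τ b :=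
    d.commute_B_of_commute hτ h₁ (d.e₁_mul_z ▸ h₁.mul_right hz) b hb
  rcases d.conj_e₁_eq hσ with h | h | h
  · exact hB hσ hz (commute_iff_conj_eq.mpr h)
  · have ht₁ : Commute (d.t * σ) d.e₁ := by
      rw [commute_iff_conj_eq]
      calc d.t * σ * d.e₁ * (d.t * σ)⁻¹ = d.t * (σ * d.e₁ * σ⁻¹) * d.t⁻¹ := by group
        _ = d.e₁ := by rw [h, t_conj_e₂]
    simpa using htb.inv_left.mul_left
      (hB (mul_mem (d.T_le_M d.t_mem.2) hσ) (d.commute_t_z.mul_left hz) ht₁)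
  · exact absurd (conj_injective (h.trans hz.mul_inv_cancel.symm)) d.z_ne_e₁.symm

/-- Sylow's theorem in the centralizer of `u`. -/
theorem exists_conj_eq_and_conj_mem_T {u : Γ} (hu : ∀ x ∈ d.T, Commute x u) (γ : Γ) :
    ∃ j, j * (γ * u * γ⁻¹) * j⁻¹ = u ∧
      ∀ s ∈ d.T, Commute s (γ * u * γ⁻¹) → j * s * j⁻¹ ∈ d.T := by
  let S := ((d.T : Subgroup Γ) ⊓ centralizer {γ * u * γ⁻¹}).map (MulAut.conj γ⁻¹).toMonoidHom
  have hS : S ≤ centralizer {u} := by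
    rintro _ ⟨x, hx, rfl⟩
    have hcomm := (Commute.conj (mem_centralizer_singleton_iff.mp hx.2) γ⁻¹)
    refine mem_centralizer_singleton_iff.mpr (Commute.eq ?_)
    simpa [mul_assoc] using hcomm
  obtain ⟨δ, hδ, hδT⟩ := exists_conj_mem_sylow_of_le d.T
    (fun x hx => mem_centralizer_singleton_iff.mpr (hu x hx)) hS
    (IsPGroup.map (d.T.2.to_le inf_le_left) _)
  refine ⟨δ * γ⁻¹, ?_, fun s hs hsu => ?_⟩
  · calc δ * γ⁻¹ * (γ * u * γ⁻¹) * (δ * γ⁻¹)⁻¹ = δ * u * δ⁻¹ := by group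
      _ = u := commute_iff_conj_eq.mp (mem_centralizer_singleton_iff.mp hδ)
  · have hmem := hδT (γ⁻¹ * s * γ) ⟨s, ⟨hs, mem_centralizer_singleton_iff.mpr hsu⟩, by simp⟩
    simpa [mul_assoc] using hmem

theorem conj_eq_of_conj_mem_B {u : Γ} (hu : ∀ x ∈ d.T, Commute x u)
    (hM : ∀ m ∈ d.M, Commute m u) {γ : Γ} (hγ : γ * u * γ⁻¹ ∈ d.B) : γ * u * γ⁻¹ = u := by
  obtain ⟨j, hj, hjT⟩ := d.exists_conj_eq_and_conj_mem_T hu γ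
  have hjM : j ∈ d.M :=
    d.mem_M_of_forall_conj_mem_T fun b hb => hjT b (d.B_le_T hb) (d.commute_B hb hγ)
  exact conj_injective (hj.trans (hM j hjM).mul_inv_cancel.symm)

theorem isIsolated_of_commute_M {u : Γ} (huT : u ∈ d.T) (hu : ∀ x ∈ d.T, Commute x u)
    (hM : ∀ m ∈ d.M, Commute m u) : IsIsolated 2 u := by
  refine isIsolated_of_sylow d.T fun γ hγ => ?_
  by_cases hB : γ * u * γ⁻¹ ∈ d.B
  · exact d.conj_eq_of_conj_mem_B hu hM hB
  obtain ⟨j, hj, hjT⟩ := d.exists_conj_eq_and_conj_mem_T hu γ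
  generalize γ * u * γ⁻¹ = v at *
  have hve : v * d.e₁ = d.e₂ * v := mul_inv_eq_iff_eq_mul.mp (d.conj_e₁_of_notMem_B hγ hB)
  have hev : d.e₁ * v * d.e₁⁻¹ = d.z * v := by
    rw [mul_inv_eq_iff_eq_mul, mul_assoc, hve, ← mul_assoc, z_mul_e₂]
  have hzA : j * d.z * j⁻¹ ∈ d.A := by
    rw [← d.ι_sq, ← conj_pow]
    exact d.sq_mem_A ⟨d.conj_mem_G (d.A_le_G d.ι_mem_A) j,
      hjT _ (d.A_le_T d.ι_mem_A) (d.commute_ι v hγ).symm⟩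
  have hconj : (j * d.e₁ * j⁻¹) * u * (j * d.e₁ * j⁻¹)⁻¹ = (j * d.z * j⁻¹) * u := by
    calc (j * d.e₁ * j⁻¹) * u * (j * d.e₁ * j⁻¹)⁻¹
        = (j * d.e₁ * j⁻¹) * (j * v * j⁻¹) * (j * d.e₁ * j⁻¹)⁻¹ := by rw [hj]
      _ = j * (d.e₁ * v * d.e₁⁻¹) * j⁻¹ := by group
      _ = (j * d.z * j⁻¹) * (j * v * j⁻¹) := by rw [hev]; group
      _ = (j * d.z * j⁻¹) * u := by rw [hj]
  have hfix := d.conj_eq_of_conj_mem_B hu hM (γ := j * d.e₁ * j⁻¹)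
    (hconj ▸ mul_mem (d.A_le_B hzA) (d.mem_B_of_commute huT hu))
  exact absurd (conj_eq_one_iff.mp (mul_eq_right.mp (hconj ▸ hfix))) d.z_ne_one

end WreathedExtension

section Centralizer

variable {Γ : Type*} [Group Γ] {p : ℕ} {u x : Γ}

theorem IsPElement.exists_pow_ne_one (hx : IsPElement p x) (h : x ≠ 1) :
    ∃ n : ℕ, x ^ n ≠ 1 ∧ (x ^ n) ^ p = 1 := by
  obtain ⟨k, hk⟩ := hx
  induction k with
  | zero => exact absurd (by simpa using hk) h
  | succ k ih =>
    by_cases hk' : x ^ p ^ k = 1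
    · exact ih hk'
    · exact ⟨p ^ k, hk', by rw [← pow_mul, ← pow_succ, hk]⟩

theorem eq_top_of_forall_sylow_le [Finite Γ] {H : Subgroup Γ}
    (h : ∀ p : ℕ, p.Prime → ∃ Q : Sylow p Γ, (Q : Subgroup Γ) ≤ H) : H = ⊤ := by
  rw [← index_eq_one]
  by_contra hne
  obtain ⟨p, hp, hdvd⟩ := Nat.exists_prime_and_dvd hne
  have := Fact.mk hp
  obtain ⟨Q, hQ⟩ := h p hp
  exact Q.not_dvd_index (hdvd.trans (index_dvd_of_le hQ))

/-- The normal subgroup `[u, Γ]`. -/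
abbrev commutatorWith (u : Γ) : Subgroup Γ := ⁅normalClosure {u}, ⊤⁆

theorem conj_mul_inv_mem_commutatorWith (u γ : Γ) :
    γ * u * γ⁻¹ * u⁻¹ ∈ commutatorWith u := by
  rw [← commutatorElement_def, ← commutatorElement_inv]
  exact inv_mem (commutator_mem_commutator (subset_normalClosure rfl) (mem_top γ))

theorem mem_centralizer_normalClosure :
    x ∈ centralizer (normalClosure {u} : Set Γ) ↔ ∀ ω, IsConj u ω → Commute x ω := by
  rw [normalClosure, centralizer_closure, mem_centralizer_iff]
  simp only [Group.mem_conjugatesOfSet_iff, Set.mem_singleton_iff, exists_eq_left]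
  exact forall₂_congr fun _ _ => eq_comm

theorem commute_of_mem_commutatorWith {y : Γ}
    (hx : x ∈ centralizer (normalClosure {u} : Set Γ))
    (hy : y ∈ commutatorWith u) : Commute x y :=
  (mem_centralizer_iff.mp hx y (commutator_le_left _ _ hy)).symm

theorem IsIsolated.not_isPGroup_commutatorWith (h : IsIsolated p u)
    (T : Sylow p Γ) (hu : u ∈ T) (hne : ¬ ∀ γ, Commute γ u) :
    ¬ IsPGroup p (commutatorWith u) := by
  refine fun hp => hne fun γ => commute_iff_conj_eq.mpr (h.conj_eq_of_mem T hu ?_)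
  have hcomm : γ * u * γ⁻¹ * u⁻¹ ∈ T :=
    hp.le_sylow_of_normal T (conj_mul_inv_mem_commutatorWith u γ)
  simpa using mul_mem hcomm hu

end Centralizer

namespace WreathedExtension

variable {Γ : Type*} [Group Γ] (d : WreathedExtension Γ)

/-- `Γ` has no nontrivial normal subgroup of odd order inside `G`. -/
def HasTrivialOddCore : Prop :=
  ∀ N : Subgroup Γ, N.Normal → N ≤ d.G → ¬ 2 ∣ Nat.card N → N = ⊥

/-- `f` acts as an inner automorphism of `G` on some Sylow `p`-subgroup, for every odd `p`. -/
def IsLocallyInner : Prop :=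
  ∀ p, p.Prime → Odd p → ∃ Q : Sylow p Γ, ∃ y ∈ d.G, ∀ q ∈ Q, Commute (d.f * y) q

/-- `f` acts as an inner automorphism on `G`. -/
def IsInner : Prop := ∃ s ∈ d.G, ∀ x ∈ d.G, Commute (d.f * s) x

theorem commutator_le_G : ⁅(⊤ : Subgroup Γ), ⊤⁆ ≤ d.G :=
  commutator_le.mpr fun a _ b _ => d.commutator_mem_G a b

theorem commutatorWith_le_G (u : Γ) : commutatorWith u ≤ d.G :=
  (commutator_mono le_top le_rfl).trans d.commutator_le_G

theorem mem_A_of_commute {x : Γ} (hx : x ∈ d.G ⊓ d.T) (h : ∀ y ∈ d.T, Commute y x) : x ∈ d.A :=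
  d.mem_A_of_commute_e₁ hx (h _ (d.A_le_T d.e₁_mem_A)).symm

theorem eq_z_of_commute {x : Γ} (hx : x ∈ d.G ⊓ d.T) (h : ∀ y ∈ d.T, Commute y x)
    (hx2 : x ^ 2 = 1) (hx1 : x ≠ 1) : x = d.z :=
  (d.eq_one_or_eq_z (d.mem_A_of_commute hx h) hx2 (h _ d.t_mem.2)).resolve_left hx1

theorem mem_A_of_commute_div {x : Γ} (hx : x ∈ d.G ⊓ d.T)
    (h : Commute x (d.κ * (d.t * d.κ * d.t⁻¹)⁻¹)) : x ∈ d.A := by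
  by_contra hA
  set κ' := d.t * d.κ * d.t⁻¹ with hκ'
  have hmem : d.κ * κ'⁻¹ ∈ d.A := mul_mem d.κ_mem_A (inv_mem d.t_conj_κ_mem_A)
  have hinv : κ' * d.κ⁻¹ = d.κ * κ'⁻¹ :=
    calc κ' * d.κ⁻¹ = d.t * (d.κ * κ'⁻¹) * d.t⁻¹ := by
          rw [← conj_mul, ← conj_inv, d.t_conj_t_conj d.κ_mem_A]
      _ = d.κ * κ'⁻¹ :=
          (d.commute_of_commute_notMem_A hx hA hmem h _ d.t_mem.2).mul_inv_cancel
  refine d.e₁_ne_e₂ ?_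
  have hcomm : Commute d.κ κ' := d.commute_A _ d.κ_mem_A _ d.t_conj_κ_mem_A
  calc d.e₁ = d.κ * κ'⁻¹ * (κ' * d.κ) := by rw [e₁, sq]; group
    _ = κ' * d.κ⁻¹ * (d.κ * κ') := by rw [hinv, hcomm.eq]
    _ = d.e₂ := by rw [e₂, e₁, ← conj_pow, ← hκ', sq]; group

theorem commutator_mem_inf_centralizer {u s : Γ}
    (hsu : d.f * s ∈ centralizer (normalClosure {u} : Set Γ)) (x : Γ) :
    x * (d.f * s) * x⁻¹ * (d.f * s)⁻¹ ∈ d.G ⊓ centralizer (normalClosure {u} : Set Γ) :=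
  ⟨d.commutator_mem_G _ _,
    (centralizer _).mul_mem (Normal.conj_mem inferInstance _ hsu x)
      ((centralizer _).inv_mem hsu)⟩

theorem mem_G_of_coprime {x : Γ} (hx : (orderOf x).Coprime 2) : x ∈ d.G := by
  have := d.normal_G
  obtain ⟨g, hg, i, rfl⟩ := d.exists_eq_mul_pow x
  rw [← QuotientGroup.eq_one_iff] at hg ⊢
  obtain ⟨k, hk⟩ := d.isPElement_of_mem_T (pow_mem d.f_mem_T i)
  have hp : IsPElement 2 ((g * d.f ^ i : Γ) : Γ ⧸ d.G) :=
    ⟨k, by rw [QuotientGroup.mk_mul, hg, one_mul, ← QuotientGroup.mk_pow, hk, QuotientGroup.mk_one]⟩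
  exact hp.eq_one_of_pow_eq_one hx
    (by rw [← QuotientGroup.mk_pow, pow_orderOf_eq_one, QuotientGroup.mk_one])

theorem isInner_of_isPGroup_G (h : IsPGroup 2 d.G) : d.IsInner :=
  have := d.normal_G
  ⟨1, one_mem _, fun x hx => by rw [mul_one]; exact d.commute_f x (h.le_sylow_of_normal d.T hx)⟩

variable [Finite Γ]

section Transfer

variable {N : Subgroup Γ} [N.Normal]

theorem z_mem_of_normal (hO : d.HasTrivialOddCore) (hG : N ≤ d.G) (hne : N ≠ ⊥) : d.z ∈ N := by
  obtain ⟨w, hwT, hwN, hw1, hwc⟩ := exists_mem_sylow_inf_centralizing d.T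
    (not_not.mp fun h => hne (hO N ‹_› hG h))
  obtain ⟨n, hn1, hn2⟩ := (d.isPElement_of_mem_T hwT).exists_pow_ne_one hw1
  rw [← d.eq_z_of_commute (pow_mem (show w ∈ d.G ⊓ d.T from ⟨hG hwN, hwT⟩) n)
    (fun y hy => (hwc y hy).pow_right n) hn2 hn1]
  exact pow_mem hwN n

theorem exists_mem_pResidual_notMem_A (hO : d.HasTrivialOddCore) (hG : N ≤ d.G)
    (hne : pResidual 2 N ≠ ⊥)
    (hz : ∀ γ ∈ pResidual 2 N, γ * d.z * γ⁻¹ ∈ d.T → γ * d.z * γ⁻¹ = d.z) :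
    ∃ v ∈ d.T, v ∈ pResidual 2 N ∧ v ∉ d.A := by
  by_contra! hA
  refine d.z_ne_one (eq_one_of_forall_conj_pow_eq d.T (N := N) (d.A_le_T d.z_mem_A)
    (d.z_mem_of_normal hO ((pResidual_le N).trans hG) hne) (fun k γ hγ hT => ?_)
    fun x hx y hy hxN hyN => d.commute_A x (hA x hx hxN) y (hA y hy hyN))
  obtain ⟨m, rfl | rfl⟩ := k.even_or_odd'
  · simp [pow_mul, d.z_sq]
  · rw [pow_succ, pow_mul, d.z_sq, one_pow, one_mul] at hT ⊢
    exact hz γ hγ hT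

theorem commute_of_commute_pResidual (hO : d.HasTrivialOddCore) (hG : N ≤ d.G)
    (h2 : ¬ IsPGroup 2 N) (hz : ∀ x ∈ N, Commute x d.z) {x : Γ} (hx : x ∈ d.G ⊓ d.T)
    (hc : ∀ y ∈ d.T, y ∈ pResidual 2 N → Commute x y) : ∀ y ∈ d.T, Commute y x := by
  obtain ⟨v, hvT, hvN, hvA⟩ := d.exists_mem_pResidual_notMem_A hO hG
    (mt isPGroup_of_pResidual_eq_bot h2)
    fun γ hγ _ => (hz γ (pResidual_le N hγ)).mul_inv_cancel
  have hv : v ∈ d.G ⊓ d.T := ⟨hG (pResidual_le N hvN), hvT⟩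
  have hdiv : d.κ * v * d.κ⁻¹ * v⁻¹ = d.κ * (d.t * d.κ * d.t⁻¹)⁻¹ := by
    rw [← d.conj_eq_t_conj hv hvA d.κ_mem_A]; group
  have hdivN : d.κ * (d.t * d.κ * d.t⁻¹)⁻¹ ∈ pResidual 2 N :=
    hdiv ▸ mul_mem (Normal.conj_mem inferInstance v hvN _) (inv_mem hvN)
  have hxA := d.mem_A_of_commute_div hx
    (hc _ (d.A_le_T (mul_mem d.κ_mem_A (inv_mem d.t_conj_κ_mem_A))) hdivN)
  exact d.commute_of_commute_notMem_A hv hvA hxA (hc v hvT hvN).symm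

end Transfer

theorem commute_of_z_mem_centralizer (hO : d.HasTrivialOddCore) {u : Γ}
    (h2 : ¬ IsPGroup 2 (commutatorWith u))
    (hz : d.z ∈ centralizer (normalClosure {u} : Set Γ)) :
    (∀ x ∈ d.G ⊓ centralizer (normalClosure {u} : Set Γ), x ∈ d.T ∧ ∀ y ∈ d.T, Commute y x) ∧
      ∀ γ, Commute γ d.z := by
  have := d.normal_G
  set K := d.G ⊓ centralizer (normalClosure {u} : Set Γ)
  have hKT {x : Γ} (hx : x ∈ K) (hxT : x ∈ d.T) : ∀ y ∈ d.T, Commute y x :=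
    d.commute_of_commute_pResidual hO (d.commutatorWith_le_G u) h2
      (fun y hy => (commute_of_mem_commutatorWith hz hy).symm) ⟨hx.1, hxT⟩
      fun y _ hy => commute_of_mem_commutatorWith hx.2 (pResidual_le _ hy)
  have hconj (γ : Γ) : γ * d.z * γ⁻¹ ∈ K :=
    (inferInstance : K.Normal).conj_mem d.z ⟨d.A_le_G d.z_mem_A, hz⟩ γ
  have hzz (γ : Γ) (hγ : γ * d.z * γ⁻¹ ∈ d.T) : γ * d.z * γ⁻¹ = d.z :=
    d.eq_z_of_commute ⟨(hconj γ).1, hγ⟩ (hKT (hconj γ) hγ) (by rw [conj_pow, d.z_sq]; simp)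
      (mt conj_eq_one_iff.mp d.z_ne_one)
  have hR : pResidual 2 K = ⊥ := by
    by_contra hne
    obtain ⟨v, hvT, hvR, hvA⟩ :=
      d.exists_mem_pResidual_notMem_A hO inf_le_left hne fun γ _ => hzz γ
    have hvK := pResidual_le K hvR
    exact hvA (d.mem_A_of_commute ⟨hvK.1, hvT⟩ (hKT hvK hvT))
  have hle := (isPGroup_of_pResidual_eq_bot hR).le_sylow_of_normal d.T
  exact ⟨fun x hx => ⟨hle hx, hKT hx (hle hx)⟩,
    fun γ => commute_iff_conj_eq.mpr (hzz γ (hle (hconj γ)))⟩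

theorem commute_of_commute_T_of_commute_coprime {w : Γ} (hT : ∀ x ∈ d.T, Commute x w)
    (hodd : ∀ x ∈ d.G, (orderOf x).Coprime 2 → Commute x w) (x : Γ) : Commute x w := by
  have hmem (x : Γ) : x ∈ centralizer {w} ↔ Commute x w := mem_centralizer_singleton_iff
  have htop : centralizer {w} = ⊤ := eq_top_of_forall_sylow_le fun p hp => by
    rcases hp.eq_two_or_odd' with rfl | hp2
    · exact ⟨d.T, fun y hy => (hmem y).mpr (hT y hy)⟩
    · obtain ⟨Q⟩ : Nonempty (Sylow p Γ) := inferInstance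
      refine ⟨Q, fun y hy => (hmem y).mpr ?_⟩
      obtain ⟨k, hk⟩ := IsPElement.of_mem Q.2 hy
      have hy2 : (orderOf y).Coprime 2 := (hp2.coprime_two_right.pow_left k).coprime_dvd_left
        (orderOf_dvd_of_pow_eq_one hk)
      exact hodd y (d.mem_G_of_coprime hy2) hy2
  exact (hmem x).mp (htop ▸ mem_top x)

theorem exists_isPElement_pow {y : Γ} (hy : y ∈ d.G) :
    ∃ m : ℕ, IsPElement 2 ((d.f * y) ^ m) ∧ d.f⁻¹ * (d.f * y) ^ m ∈ d.G := by
  have := d.normal_G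
  obtain ⟨-, q, hq, hp, -⟩ := exists_isPElement_pow_and_coprime_orderOf_pow (p := 2) (d.f * y)
  obtain ⟨k, hk⟩ := d.isPElement_of_mem_T d.f_mem_T
  obtain ⟨m, hm0, hm1⟩ := Nat.chineseRemainder (hq.pow_right k) 0 1
  obtain ⟨c, rfl⟩ := Nat.modEq_zero_iff_dvd.mp hm0
  have hf : d.f ^ (q * c) = d.f := by
    conv_rhs => rw [← pow_one d.f]
    exact pow_eq_pow_iff_modEq.mpr (hm1.of_dvd (orderOf_dvd_of_pow_eq_one hk))
  refine ⟨q * c, by rw [pow_mul]; exact hp.pow c, ?_⟩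
  rw [← QuotientGroup.eq_one_iff] at hy ⊢
  rw [QuotientGroup.mk_mul, QuotientGroup.mk_pow, QuotientGroup.mk_mul, hy, mul_one,
    ← QuotientGroup.mk_pow, hf, ← QuotientGroup.mk_mul, inv_mul_cancel, QuotientGroup.mk_one]

theorem exists_mul_mem_centralizer_normalClosure (hf : d.IsLocallyInner) {u : Γ}
    (hu : ∀ x ∈ d.T, Commute x u) {p a : ℕ} (hp : p.Prime) (hodd : Odd p)
    (hcard : (centralizer {u}).index = p ^ a) :
    ∃ s ∈ d.G ⊓ d.T, d.f * s ∈ centralizer (normalClosure {u} : Set Γ) := by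
  have := Fact.mk hp
  obtain ⟨Q, y, hy, hQ⟩ := hf p hp hodd
  obtain ⟨m, hm2, hmG⟩ := d.exists_isPElement_pow hy
  set h := (d.f * y) ^ m
  obtain ⟨γ, hγT⟩ := exists_conj_mem_sylow d.T hm2
  have hhK : h ∈ centralizer (normalClosure {u} : Set Γ) := by
    have hQconj {q x : Γ} (hq : q ∈ Q) : Commute h (q * x * q⁻¹) ↔ Commute h x := by
      have hqh : q * h * q⁻¹ = h := ((hQ q hq).pow_left m).symm.mul_inv_cancel
      conv_lhs => rw [← hqh, Commute.conj_iff]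
    have hhu : Commute h (γ⁻¹ * u * γ⁻¹⁻¹) := by
      simpa [mul_assoc] using (hu _ hγT).conj γ⁻¹
    obtain ⟨q, hq, hqu⟩ := exists_mem_sylow_conj_eq Q hcard (isConj_iff.mpr ⟨γ⁻¹, rfl⟩)
    rw [← hqu, hQconj hq] at hhu
    refine mem_centralizer_normalClosure.mpr fun ω hω => ?_
    obtain ⟨r, hr, rfl⟩ := exists_mem_sylow_conj_eq Q hcard hω
    exact (hQconj hr).mpr hhu
  have hs : d.f * (d.f⁻¹ * (γ * h * γ⁻¹)) = γ * h * γ⁻¹ := mul_inv_cancel_left _ _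
  refine ⟨d.f⁻¹ * (γ * h * γ⁻¹), ⟨?_, d.T.mul_mem (d.T.inv_mem d.f_mem_T) hγT⟩, ?_⟩
  · have := mul_mem (d.commutator_mem_G d.f⁻¹ γ) (d.conj_mem_G hmG γ)
    simpa [mul_assoc] using this
  · rw [hs]
    exact Normal.conj_mem inferInstance h hhK γ

theorem commute_of_coprime_of_z_mem_centralizer (hO : d.HasTrivialOddCore) {u s : Γ}
    (h2 : ¬ IsPGroup 2 (commutatorWith u))
    (hz : d.z ∈ centralizer (normalClosure {u} : Set Γ))
    (hsu : d.f * s ∈ centralizer (normalClosure {u} : Set Γ)) {x : Γ} (hx : (orderOf x).Coprime 2) :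
    Commute x (d.f * s) := by
  have := d.normal_G
  obtain ⟨hK, hzc⟩ := d.commute_of_z_mem_centralizer hO h2 hz
  set K := d.G ⊓ centralizer (normalClosure {u} : Set Γ)
  have : IsMulCommutative K :=
    ⟨⟨fun a b => Subtype.ext ((hK b b.2).2 a (hK a a.2).1)⟩⟩
  have hKT : K ≤ d.T := fun a ha => (hK a ha).1
  have hxK : ∀ a ∈ K, Commute x a :=
    commute_of_forall_pow_eq_one_commute hx (d.T.2.to_le hKT)
      (fun a ha => Normal.conj_mem inferInstance a ha x) fun a ha ha2 => by
        by_cases ha1 : a = 1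
        · exact ha1 ▸ Commute.one_right x
        · exact d.eq_z_of_commute ⟨ha.1, hKT ha⟩ (hK a ha).2 ha2 ha1 ▸ hzc x
  have hc := d.commutator_mem_inf_centralizer hsu x
  exact commute_of_conj_eq_mul hx (c := x * (d.f * s) * x⁻¹ * (d.f * s)⁻¹) (by group) (hxK _ hc)
    (d.isPElement_of_mem_T (hKT hc))

theorem isInner_of_z_mem_centralizer (hO : d.HasTrivialOddCore) {u s : Γ}
    (h2 : ¬ IsPGroup 2 (commutatorWith u))
    (hz : d.z ∈ centralizer (normalClosure {u} : Set Γ))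
    (hsu : d.f * s ∈ centralizer (normalClosure {u} : Set Γ))
    (hs : s ∈ d.G ⊓ d.T) : d.IsInner := by
  have := d.normal_G
  by_cases hG : IsPGroup 2 d.G
  · exact d.isInner_of_isPGroup_G hG
  have hodd {x : Γ} (hx : (orderOf x).Coprime 2) : Commute x (d.f * s) :=
    d.commute_of_coprime_of_z_mem_centralizer hO h2 hz hsu hx
  have hR : pResidual 2 d.G ≤ centralizer {d.f * s} :=
    (closure_le _).mpr fun x hx => mem_centralizer_singleton_iff.mpr (hodd hx.2)
  have hsT : ∀ y ∈ d.T, Commute y s :=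
    d.commute_of_commute_pResidual hO le_rfl hG
      (fun x _ => (d.commute_of_z_mem_centralizer hO h2 hz).2 x) hs fun y hyT hyR => by
        have hy : Commute y (d.f * s) := mem_centralizer_singleton_iff.mp (hR hyR)
        simpa using ((d.commute_f y hyT).symm.inv_right.mul_right hy).symm
  exact ⟨s, hs.1, fun x _ => (d.commute_of_commute_T_of_commute_coprime
    (fun y hy => (d.commute_f y hy).symm.mul_right (hsT y hy)) (fun _ _ => hodd) x).symm⟩

theorem isInner_of_index_centralizer_eq_pow (hO : d.HasTrivialOddCore) (hf : d.IsLocallyInner)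
    {u : Γ} (hu : ∀ x ∈ d.T, Commute x u) (h2 : ¬ IsPGroup 2 (commutatorWith u)) {p a : ℕ}
    (hp : p.Prime) (hodd : Odd p) (hcard : (centralizer {u}).index = p ^ a) : d.IsInner := by
  have := d.normal_G
  obtain ⟨s, hs, hsu⟩ := d.exists_mul_mem_centralizer_normalClosure hf hu hp hodd hcard
  by_cases hz : d.z ∈ centralizer (normalClosure {u} : Set Γ)
  · exact d.isInner_of_z_mem_centralizer hO h2 hz hsu hs
  · have hbot : d.G ⊓ centralizer (normalClosure {u} : Set Γ) = ⊥ := by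
      by_contra hne
      exact hz (d.z_mem_of_normal hO inf_le_left hne).2
    refine ⟨s, hs.1, fun x _ => (commute_iff_conj_eq.mpr (mul_inv_eq_one.mp ?_)).symm⟩
    exact mem_bot.mp (hbot ▸ d.commutator_mem_inf_centralizer hsu x)

end WreathedExtension

/-! ### The product formula for three involutions -/

section ConjugatesCentralizing

variable {Γ : Type*} [Group Γ] {u v x y c : Γ}

theorem commute_of_commute_mul_left {ω : Γ} (hx : Commute x ω) (h : Commute (x * y) ω) :
    Commute y ω := by
  simpa using hx.inv_left.mul_left h

theorem ncard_conjugatesCentralizing_image_conj (S : Set Γ) (g : Γ) :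
    (conjugatesCentralizing u ((fun x => g * x * g⁻¹) '' S)).ncard =
      (conjugatesCentralizing u S).ncard := by
  refine (ncard_eq_of_forall_conj_mem_iff g fun ω => ?_).symm
  simp only [conjugatesCentralizing, Set.forall_mem_image, Set.mem_ofPred_eq, Commute.conj_iff]
  refine and_congr_left fun _ => ⟨fun h => ?_, fun h => isConj_conj h g⟩
  simpa [mul_assoc] using isConj_conj h g⁻¹

theorem ncard_conjugatesCentralizing_singleton_conj (g : Γ) :
    (conjugatesCentralizing u {g * x * g⁻¹}).ncard = (conjugatesCentralizing u {x}).ncard := by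
  simpa using ncard_conjugatesCentralizing_image_conj {x} g

theorem ncard_conjugatesCentralizing_singleton_one :
    (conjugatesCentralizing u {1}).ncard = (centralizer {u}).index := by
  rw [← ncard_conjugatesCentralizing_empty]
  simp [conjugatesCentralizing]

theorem conjugatesCentralizing_singleton_mul (hc : ∀ γ, Commute γ c) :
    conjugatesCentralizing u {c * x} = conjugatesCentralizing u {x} := by
  ext ω
  simp only [conjugatesCentralizing, Set.mem_singleton_iff, forall_eq, Set.mem_ofPred_eq]
  exact and_congr_right fun _ => ⟨commute_of_commute_mul_left (hc ω).symm,
    (hc ω).symm.mul_left⟩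

theorem conjugatesCentralizing_pair_mul :
    conjugatesCentralizing u {x, x * y} = conjugatesCentralizing u {x, y} := by
  ext ω
  simp only [conjugatesCentralizing, Set.mem_insert_iff, Set.mem_singleton_iff, forall_eq_or_imp,
    forall_eq, Set.mem_ofPred_eq]
  exact and_congr_right fun _ => and_congr_right fun h =>
    ⟨commute_of_commute_mul_left h, h.mul_left⟩

theorem IsPElement.exists_pow_noncentral (h : IsPElement 2 v) (hv : ¬ ∀ γ, Commute γ v) :
    ∃ n : ℕ, (¬ ∀ γ, Commute γ (v ^ n)) ∧ ∀ γ, Commute γ ((v ^ n) ^ 2) := by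
  obtain ⟨k, hk⟩ := h
  replace hk : ∀ γ, Commute γ (v ^ 2 ^ k) := fun γ => hk ▸ Commute.one_right γ
  induction k with
  | zero => exact absurd (by simpa using hk) hv
  | succ k ih =>
    by_cases hk' : ∀ γ, Commute γ (v ^ 2 ^ k)
    · exact ih hk'
    · exact ⟨2 ^ k, hk', fun γ => by rw [← pow_mul, ← pow_succ]; exact hk γ⟩

/-- Two involutions commuting with `u` that commute with each other modulo the center. -/
structure IsCentralPair (u a b : Γ) : Prop where
  commute_left : Commute a u
  commute_right : Commute b u
  left_sq : a ^ 2 = 1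
  right_sq : b ^ 2 = 1
  exists_conj_eq : ∃ c, (∀ γ, Commute γ c) ∧ a * b * a⁻¹ = c * b

theorem IsCentralPair.symm {a b : Γ} (h : IsCentralPair u a b) : IsCentralPair u b a where
  commute_left := h.commute_right
  commute_right := h.commute_left
  left_sq := h.right_sq
  right_sq := h.left_sq
  exists_conj_eq := by
    obtain ⟨c, hc, hab⟩ := h.exists_conj_eq
    refine ⟨c⁻¹, fun γ => (hc γ).inv_right, ?_⟩
    calc b * a * b⁻¹ = c⁻¹ * (c * b) * a * b⁻¹ := by group
      _ = c⁻¹ * a := by rw [← hab]; group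

theorem IsCentralPair.exists_conj_mul_eq {a b : Γ} (h : IsCentralPair u a b) :
    ∃ c, (∀ γ, Commute γ c) ∧ a * (a * b) * a⁻¹ = c * (a * b) := by
  obtain ⟨c, hc, hab⟩ := h.exists_conj_eq
  exact ⟨c, hc, by rw [mul_assoc a (a * b), hab, ← mul_assoc, (hc a).eq, mul_assoc]⟩

variable [Finite Γ]

theorem ncard_conjugatesCentralizing_pos {S : Set Γ} (h : ∀ s ∈ S, Commute s u) :
    0 < (conjugatesCentralizing u S).ncard :=
  (Set.ncard_pos (Set.toFinite _)).mpr ⟨u, IsConj.refl u, h⟩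

theorem mem_centralizer_normalClosure_of_ncard_eq
    (h : (conjugatesCentralizing u ∅).ncard = (conjugatesCentralizing u {v}).ncard) :
    v ∈ centralizer (normalClosure {u} : Set Γ) := by
  have hsub : conjugatesCentralizing u {v} ⊆ conjugatesCentralizing u ∅ :=
    fun ω hω => ⟨hω.1, by simp⟩
  have heq := Set.eq_of_subset_of_ncard_le hsub h.le
  refine mem_centralizer_normalClosure.mpr fun ω hω => ?_
  have hmem : ω ∈ conjugatesCentralizing u {v} := heq ▸ ⟨hω, by simp⟩
  exact hmem.2 v rfl

namespace IsLatin

theorem index_centralizer_eq_mul (h : IsLatin u) (hv : Commute v u)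
    (hv2 : ∀ γ, Commute γ (v ^ 2)) :
    (centralizer {u}).index =
      (conjugatesCentralizing u {v}).ncard * (conjugatesCentralizing u {v * u}).ncard := by
  have := h.ncard_conjugatesCentralizing (S := ∅) (by simp) hv
    (fun ω hω => ⟨isConj_conj hω.1 v, by simp⟩) (fun ω _ => (hv2 ω).symm)
  simpa [ncard_conjugatesCentralizing_empty] using this

theorem ncard_conjugatesCentralizing_singleton (h : IsLatin u) (hx : Commute x u)
    (hv : Commute v u) (hv2 : ∀ γ, Commute γ (v ^ 2)) (hc : ∀ γ, Commute γ c)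
    (hvx : v * x * v⁻¹ = c * x) :
    (conjugatesCentralizing u {x}).ncard =
      (conjugatesCentralizing u {v, x}).ncard * (conjugatesCentralizing u {v * u, x}).ncard := by
  refine h.ncard_conjugatesCentralizing (by simpa using hx) hv (fun ω hω => ?_)
    (fun ω _ => (hv2 ω).symm)
  rw [← conjugatesCentralizing_singleton_mul hc, ← hvx]
  exact ⟨isConj_conj hω.1 v, by simpa [Commute.conj_iff] using hω.2⟩

end IsLatin

namespace IsCentralPair

variable {a b : Γ}

theorem index_centralizer_eq_mul (h : IsCentralPair u a b) (hu : IsLatin u) :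
    (centralizer {u}).index =
      (conjugatesCentralizing u {b}).ncard * (conjugatesCentralizing u {b * u}).ncard :=
  hu.index_centralizer_eq_mul h.commute_right fun γ => h.right_sq ▸ Commute.one_right γ

theorem ncard_of_conj_eq (h : IsCentralPair u a b) (hu : IsLatin u) (hx : Commute x u)
    (hax : ∃ c, (∀ γ, Commute γ c) ∧ a * x * a⁻¹ = c * x) :
    (conjugatesCentralizing u {x}).ncard =
      (conjugatesCentralizing u {a, x}).ncard * (conjugatesCentralizing u {a * u, x}).ncard := by
  obtain ⟨c, hc, hax⟩ := hax
  exact hu.ncard_conjugatesCentralizing_singleton hx h.commute_left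
    (fun γ => h.left_sq ▸ Commute.one_right γ) hc hax

theorem ncard_right (h : IsCentralPair u a b) (hu : IsLatin u) :
    (conjugatesCentralizing u {b}).ncard =
      (conjugatesCentralizing u {a, b}).ncard * (conjugatesCentralizing u {a * u, b}).ncard :=
  h.ncard_of_conj_eq hu h.commute_right h.exists_conj_eq

theorem ncard_left (h : IsCentralPair u a b) (hu : IsLatin u) :
    (conjugatesCentralizing u {a}).ncard =
      (conjugatesCentralizing u {a, b}).ncard * (conjugatesCentralizing u {a, b * u}).ncard := by
  rw [h.symm.ncard_right hu, Set.pair_comm b, Set.pair_comm (b * u)]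

theorem ncard_right_mul (h : IsCentralPair u a b) (hu : IsLatin u) :
    (conjugatesCentralizing u {b * u}).ncard =
      (conjugatesCentralizing u {a, b * u}).ncard *
        (conjugatesCentralizing u {a * u, b * u}).ncard := by
  obtain ⟨c, hc, hab⟩ := h.exists_conj_eq
  refine h.ncard_of_conj_eq hu (h.commute_right.mul_left (Commute.refl u)) ⟨c, hc, ?_⟩
  rw [← conj_mul, hab, h.commute_left.mul_inv_cancel, mul_assoc]

theorem ncard_mul (h : IsCentralPair u a b) (hu : IsLatin u) :
    (conjugatesCentralizing u {a * b}).ncard =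
      (conjugatesCentralizing u {a, b}).ncard *
        (conjugatesCentralizing u {a * u, b * u}).ncard := by
  have hmul : a * u * (a * b) = b * u := by
    rw [h.commute_left.eq, mul_assoc, ← mul_assoc a, ← pow_two, h.left_sq, one_mul,
      h.commute_right.eq]
  rw [h.ncard_of_conj_eq hu (h.commute_left.mul_left h.commute_right) h.exists_conj_mul_eq,
    conjugatesCentralizing_pair_mul, ← conjugatesCentralizing_pair_mul (x := a * u), hmul]

theorem ncard_mul_mul (h : IsCentralPair u a b) (hu : IsLatin u) :
    (conjugatesCentralizing u {a * b * u}).ncard =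
      (conjugatesCentralizing u {a, b * u}).ncard *
        (conjugatesCentralizing u {a * u, b}).ncard := by
  have habu := h.commute_left.mul_left h.commute_right
  obtain ⟨c, hc, hab⟩ := h.exists_conj_mul_eq
  rw [h.ncard_of_conj_eq hu (habu.mul_left (Commute.refl u))
    ⟨c, hc, by rw [← conj_mul, hab, h.commute_left.mul_inv_cancel, mul_assoc]⟩]
  congr 2
  · rw [mul_assoc, conjugatesCentralizing_pair_mul]
  · rw [mul_assoc, h.commute_right.eq, ← mul_assoc, conjugatesCentralizing_pair_mul]

theorem exists_index_centralizer_eq_mul_pow_three (h : IsCentralPair u a b) (hu : IsLatin u)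
    (heq : (conjugatesCentralizing u {a}).ncard = (conjugatesCentralizing u {b}).ncard)
    (hb : b ∉ centralizer (normalClosure {u} : Set Γ))
    (hab : a * b ∉ centralizer (normalClosure {u} : Set Γ))
    (hmul : (conjugatesCentralizing u {a}).ncard = (conjugatesCentralizing u {a * b}).ncard ∨
      (conjugatesCentralizing u {a}).ncard = (conjugatesCentralizing u {a * b * u}).ncard) :
    ∃ α β : ℕ, (centralizer {u}).index = α * β ^ 3 ∧ β ≠ 1 := by
  have hpos : 0 < (conjugatesCentralizing u {a, b}).ncard :=
    ncard_conjugatesCentralizing_pos (by simp [h.commute_left, h.commute_right])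
  have hpos' : 0 < (conjugatesCentralizing u {a, b * u}).ncard :=
    ncard_conjugatesCentralizing_pos
      (by simp [h.commute_left, h.commute_right.mul_left (Commute.refl u)])
  have hne {v : Γ} (hv : v ∉ centralizer (normalClosure {u} : Set Γ)) :
      (centralizer {u}).index ≠ (conjugatesCentralizing u {v}).ncard := fun hcard =>
    hv (mem_centralizer_normalClosure_of_ncard_eq
      ((ncard_conjugatesCentralizing_empty u).trans hcard))
  replace hb := hne hb
  replace hab := hne hab
  rw [h.ncard_left hu, h.ncard_mul hu, h.ncard_mul_mul hu] at hmul
  rw [h.ncard_left hu, h.ncard_right hu, Nat.mul_right_inj hpos.ne'] at heq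
  rw [h.index_centralizer_eq_mul hu, h.ncard_right hu, h.ncard_right_mul hu] at hb hab ⊢
  rw [h.ncard_mul hu] at hab
  rcases hmul with hmul | hmul
  · rw [Nat.mul_right_inj hpos.ne'] at hmul
    rw [← heq, ← hmul] at hb ⊢
    exact ⟨(conjugatesCentralizing u {a, b}).ncard, (conjugatesCentralizing u {a, b * u}).ncard,
      by ring, fun h1 => hb (by simp [h1])⟩
  · rw [mul_comm, Nat.mul_right_inj hpos'.ne'] at hmul
    rw [heq, ← hmul] at hab ⊢
    exact ⟨(conjugatesCentralizing u {a * u, b * u}).ncard,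
      (conjugatesCentralizing u {a, b}).ncard, by ring, fun h1 => hab (by simp [h1])⟩

end IsCentralPair

end ConjugatesCentralizing

theorem eq_one_and_eq_three_of_mul_pow_three_le {α β : ℕ} (hodd : Odd (α * β ^ 3))
    (hβ : β ≠ 1) (hle : 3 * (α * β ^ 3) ≤ 225) : α = 1 ∧ β = 3 := by
  obtain ⟨hα, hβ3⟩ := Nat.odd_mul.mp hodd
  obtain ⟨j, rfl⟩ := hα
  obtain ⟨k, rfl⟩ := (Nat.odd_pow_iff (by norm_num)).mp hβ3
  have hk : k < 2 := by
    by_contra! hk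
    have := Nat.pow_le_pow_left (show 5 ≤ 2 * k + 1 by omega) 3
    nlinarith
  obtain rfl : k = 1 := by omega
  omega

namespace WreathedExtension

variable {Γ : Type*} [Group Γ] (d : WreathedExtension Γ)

theorem T_le_centralizer {u : Γ} (hu : ∀ x ∈ d.T, Commute x u) :
    (d.T : Subgroup Γ) ≤ centralizer {u} :=
  fun x hx => mem_centralizer_singleton_iff.mpr (hu x hx)

theorem commute_z_mul {u : Γ} (hu : ∀ x ∈ d.T, Commute x u) : ∀ x ∈ d.T, Commute x (d.z * u) :=
  fun x hx => (d.commute_z x hx).mul_right (hu x hx)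

theorem isLatin_z (hz : IsIsolated 2 d.z) : IsLatin d.z where
  isIsolated := hz
  isPElement := d.isPElement_of_mem_T (d.A_le_T d.z_mem_A)
  sq_mem_center := d.z_sq ▸ one_mem _

theorem κ_conj_of_notMem_A {a : Γ} (ha : a ∈ d.G ⊓ d.T) (haA : a ∉ d.A) :
    d.κ * a * d.κ⁻¹ = d.ι * (a * d.e₁) := by
  have hae : a * d.e₁ * a⁻¹ = d.e₂ := d.conj_eq_t_conj ha haA d.e₁_mem_A
  have hsq : (d.t * d.κ * d.t⁻¹) ^ 2 = d.e₂ := conj_pow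
  have hinv : (d.t * d.κ * d.t⁻¹)⁻¹ = d.t * d.κ * d.t⁻¹ * d.e₂ := by
    rw [inv_eq_iff_mul_eq_one, ← mul_assoc, ← pow_two, hsq, d.e₂_mul_self]
  calc d.κ * a * d.κ⁻¹ = d.κ * (a * d.κ * a⁻¹)⁻¹ * a := by group
    _ = d.κ * (d.t * d.κ * d.t⁻¹) * (d.e₂ * a) := by
      rw [d.conj_eq_t_conj ha haA d.κ_mem_A, hinv]
      group
    _ = d.ι * (a * d.e₁) := by rw [mul_inv_eq_iff_eq_mul.mp hae, ι]

theorem isCentralPair_e₁ (hz : ∀ γ, Commute γ d.z) {u a : Γ} (hu : ∀ x ∈ d.T, Commute x u)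
    (ha : a ∈ d.G ⊓ d.T) (haA : a ∉ d.A) (ha2 : a ^ 2 = 1) : IsCentralPair u a d.e₁ where
  commute_left := hu a ha.2
  commute_right := hu _ (d.A_le_T d.e₁_mem_A)
  left_sq := ha2
  right_sq := d.e₁_sq
  exists_conj_eq := ⟨d.z, hz, by
    rw [d.conj_eq_t_conj ha haA d.e₁_mem_A, ← (hz _).eq, d.e₁_mul_z, e₂]⟩

variable [Finite Γ]

theorem odd_index_T : Odd (d.T : Subgroup Γ).index :=
  Nat.not_even_iff_odd.mp (mt even_iff_two_dvd.mp d.T.not_dvd_index)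

theorem odd_index_centralizer {u : Γ} (hu : ∀ x ∈ d.T, Commute x u) :
    Odd (centralizer {u}).index :=
  d.odd_index_T.of_dvd_nat (index_dvd_of_le (d.T_le_centralizer hu))

theorem index_centralizer_le {u : Γ} (hu : ∀ x ∈ d.T, Commute x u) :
    (centralizer {u}).index ≤ (d.T : Subgroup Γ).index :=
  Nat.le_of_dvd d.odd_index_T.pos (index_dvd_of_le (d.T_le_centralizer hu))

theorem three_mul_index_centralizer_le {u δ : Γ} (hu : ∀ x ∈ d.T, Commute x u)
    (hδ : Commute δ u) (hδT : δ ∉ d.T) :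
    3 * (centralizer {u}).index ≤ (d.T : Subgroup Γ).index := by
  have hmul := relIndex_mul_index (d.T_le_centralizer hu)
  have hne : (d.T : Subgroup Γ).relIndex (centralizer {u}) ≠ 1 := fun h =>
    hδT (relIndex_eq_one.mp h (mem_centralizer_singleton_iff.mpr hδ))
  obtain ⟨k, hk⟩ := d.odd_index_T.of_dvd_nat (Dvd.intro _ hmul)
  rw [← hmul]
  exact Nat.mul_le_mul_right _ (by omega)

theorem ncard_conjugatesCentralizing_z_mul {u : Γ} (hu : ∀ x ∈ d.T, Commute x u)
    (hL : IsLatin u) :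
    (conjugatesCentralizing u {d.z * u}).ncard =
      (conjugatesCentralizing u {d.e₂, d.z * u}).ncard ^ 2 := by
  have hzu := d.commute_z_mul hu
  have he₁ := d.A_le_T d.e₁_mem_A
  have hmul : d.e₁ * u = d.z * u * d.e₂ := by
    rw [← d.z_mul_e₂, mul_assoc, hu _ (d.A_le_T d.e₂_mem_A), mul_assoc]
  have hpair : conjugatesCentralizing u {d.e₁ * u, d.z * u} =
      conjugatesCentralizing u {d.e₂, d.z * u} := by
    rw [hmul, Set.pair_comm, conjugatesCentralizing_pair_mul, Set.pair_comm]
  have hconj : (conjugatesCentralizing u {d.e₁, d.z * u}).ncard =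
      (conjugatesCentralizing u {d.e₂, d.z * u}).ncard := by
    rw [← ncard_conjugatesCentralizing_image_conj _ d.t, Set.image_pair,
      (hzu _ d.t_mem.2).mul_inv_cancel, e₂]
  rw [hL.ncard_conjugatesCentralizing_singleton
    ((hu _ (d.A_le_T d.z_mem_A)).mul_left (Commute.refl u)) (hu _ he₁)
    (fun γ => d.e₁_sq ▸ Commute.one_right γ) Commute.one_right
    ((hzu _ he₁).mul_inv_cancel.trans (one_mul _).symm), hpair, hconj, pow_two]

theorem ncard_conjugatesCentralizing_e₂_modEq_one {u : Γ} (hu : ∀ x ∈ d.T, Commute x u)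
    (hL : IsLatin u) :
    (conjugatesCentralizing u {d.e₂, d.z * u}).ncard ≡ 1 [MOD 4] := by
  have hκT := d.A_le_T d.κ_mem_A
  have he₂ : Commute d.κ d.e₂ := d.commute_A _ d.κ_mem_A _ d.e₂_mem_A
  have hzu : Commute d.κ (d.z * u) := d.commute_z_mul hu _ hκT
  refine ncard_modEq_one (p := 2) (n := 1) (κ := d.κ) (x₀ := u) (Set.toFinite _) d.κ_pow_four
    (fun ω => ?_) ⟨IsConj.refl _, ?_⟩ (hu _ hκT) fun ω hω hωκ => ?_
  · simp only [conjugatesCentralizing, Set.mem_singleton_iff, Set.mem_insert_iff,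
      forall_eq_or_imp, forall_eq, Set.mem_ofPred_eq]
    rw [← he₂.mul_inv_cancel, ← hzu.mul_inv_cancel, Commute.conj_iff, Commute.conj_iff,
      he₂.mul_inv_cancel, hzu.mul_inv_cancel]
    refine and_congr_left fun _ => ⟨fun h => ?_, fun h => isConj_conj h _⟩
    simpa [mul_assoc] using isConj_conj h d.κ⁻¹
  · simpa using ⟨hu _ (d.A_le_T d.e₂_mem_A),
      (hu _ (d.A_le_T d.z_mem_A)).mul_left (Commute.refl u)⟩
  · have hz : Commute d.z ω := Commute.mul_left hωκ (hω.2 d.e₂ (by simp))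
    exact hL.isIsolated.eq_of_commute hL.isPElement hω.1 (IsConj.refl _)
      (commute_of_commute_mul_left hz (hω.2 _ (by simp))).symm

theorem isInner_of_isIsolated_z (hO : d.HasTrivialOddCore) (hf : d.IsLocallyInner)
    (hidx : (d.T : Subgroup Γ).index ≤ 225) (hz : IsIsolated 2 d.z)
    (hne : ¬ ∀ γ, Commute γ d.z) : d.IsInner := by
  have hcard := d.ncard_conjugatesCentralizing_z_mul d.commute_z (d.isLatin_z hz)
  have hmod := d.ncard_conjugatesCentralizing_e₂_modEq_one d.commute_z (d.isLatin_z hz)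
  rw [← pow_two, z_sq, ncard_conjugatesCentralizing_singleton_one] at hcard
  rw [← pow_two, z_sq] at hmod
  have hle := (d.index_centralizer_le d.commute_z).trans hidx
  have h2 := hz.not_isPGroup_commutatorWith d.T (d.A_le_T d.z_mem_A) hne
  generalize (conjugatesCentralizing d.z {d.e₂, _}).ncard = r at hcard hmod
  have hr : r ≤ 15 := by nlinarith
  have hpow {p a : ℕ} (hp : p.Prime) (hodd : Odd p) (h : r ^ 2 = p ^ a) : d.IsInner :=
    d.isInner_of_index_centralizer_eq_pow hO hf d.commute_z h2 hp hodd (hcard.trans h)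
  obtain rfl | rfl | rfl | rfl : r = 1 ∨ r = 5 ∨ r = 9 ∨ r = 13 := by
    rw [Nat.ModEq] at hmod
    omega
  · exact absurd (fun γ => (mem_centralizer_singleton_iff.mp
      (index_eq_one.mp hcard ▸ mem_top γ : γ ∈ centralizer {d.z}))) hne
  · exact hpow (p := 5) (a := 2) (by norm_num) (by decide) rfl
  · exact hpow (p := 3) (a := 4) (by norm_num) (by decide) rfl
  · exact hpow (p := 13) (a := 2) (by norm_num) (by decide) rfl

section Central

theorem isIsolated_of_z_central (hz : ∀ γ, Commute γ d.z) {x : Γ} (hxT : x ∈ d.T)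
    (hx : ∀ y ∈ d.T, Commute y x) : IsIsolated 2 x :=
  d.isIsolated_of_commute_M hxT hx fun m hm =>
    d.commute_of_commute_z hm (hz m) (d.mem_B_of_commute hxT hx) (hx _ d.t_mem.2)

theorem exists_conj_mem_A (hO : d.HasTrivialOddCore) (hz : ∀ γ, Commute γ d.z)
    (hG : ¬ IsPGroup 2 d.G) :
    ∃ s ∈ d.G ⊓ d.T, s ∉ d.A ∧ ∃ γ, γ * s * γ⁻¹ ∈ d.A := by
  have := d.normal_G
  by_contra! h
  obtain ⟨v, hvT, hvR, hvA⟩ := d.exists_mem_pResidual_notMem_A hO le_rfl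
    (mt isPGroup_of_pResidual_eq_bot hG) fun γ _ _ => (hz γ).mul_inv_cancel
  refine hvA (sylow_inf_pResidual_le d.T (N := d.G) (fun x hxT hxG g hg => ?_) ⟨hvT, hvR⟩)
  have hgG := d.conj_mem_G hxG g
  by_cases hxA : x ∈ d.A
  · by_cases hgA : g * x * g⁻¹ ∈ d.A
    · exact mul_mem hxA (inv_mem hgA)
    · exact absurd (by simpa [mul_assoc] using hxA) (h _ ⟨hgG, hg⟩ hgA g⁻¹)
  · exact d.mul_mem_A _ ⟨hxG, hxT⟩ _ (inv_mem (⟨hgG, hg⟩ : _ ∈ d.G ⊓ d.T)) hxA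
      (mt inv_mem_iff.mp (h x ⟨hxG, hxT⟩ hxA g))

theorem exists_conj_eq_e₁ (hO : d.HasTrivialOddCore) (hz : ∀ γ, Commute γ d.z)
    (hG : ¬ IsPGroup 2 d.G) :
    ∃ a ∈ d.G ⊓ d.T, a ∉ d.A ∧ ∃ γ, γ * a * γ⁻¹ = d.e₁ := by
  obtain ⟨s, hs, hsA, γ, hγ⟩ := d.exists_conj_mem_A hO hz hG
  generalize hy : γ * s * γ⁻¹ = y at hγ
  have hyT := d.A_le_T hγ
  have hs2A := d.sq_mem_A hs
  have hs2 := d.commute_of_commute_notMem_A hs hsA hs2A ((Commute.refl s).pow_right 2)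
  have hy2 : y ^ 2 = s ^ 2 := by
    rw [← hy, conj_pow]
    refine (d.isIsolated_of_z_central hz (d.A_le_T hs2A) hs2).conj_eq_of_mem d.T
      (d.A_le_T hs2A) ?_
    rw [← conj_pow, hy]
    exact pow_mem hyT 2
  have hty : ¬ Commute d.t y := fun h => by
    have hys : γ⁻¹ * y * γ⁻¹⁻¹ = s := by rw [← hy]; group
    have hconj := (d.isIsolated_of_z_central hz hyT (d.commute_of_commute_t hγ h)).conj_eq_of_mem
      d.T hyT (g := γ⁻¹) (hys ▸ hs.2)
    rw [hys] at hconj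
    exact hsA (hconj ▸ hγ)
  have hte := (d.commute_t_of_sq hγ (hy2 ▸ hs2 _ d.t_mem.2)).resolve_left hty
  set e := y * d.e₁ with he
  have heA : e ∈ d.A := mul_mem hγ d.e₁_mem_A
  have heT := d.commute_of_commute_t heA hte
  obtain ⟨δ, hδe, hδ⟩ := (d.isIsolated_of_z_central hz (d.A_le_T heA) heT).exists_commute_conj_eq
    (d.isPElement_of_mem_T (d.A_le_T heA)) (heT s hs.2) (g := γ) (hy ▸ heT y hyT)
  refine ⟨e⁻¹ * s, ⟨d.G.mul_mem (d.G.inv_mem (d.A_le_G heA)) hs.1,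
    d.T.mul_mem (d.T.inv_mem (d.A_le_T heA)) hs.2⟩,
    fun h => hsA ((d.A.mul_mem_cancel_left (d.A.inv_mem heA)).mp h), δ, ?_⟩
  rw [← conj_mul, hδe.inv_right.mul_inv_cancel, hδ, hy, he, mul_inv_rev, inv_mul_cancel_right]
  exact inv_eq_of_mul_eq_one_left ((pow_two d.e₁).symm.trans d.e₁_sq)

theorem exists_isLatin (hz : ∀ γ, Commute γ d.z) (hf : ¬ ∀ γ, Commute γ d.f) :
    ∃ u ∈ d.T, (∀ x ∈ d.T, Commute x u) ∧ (¬ ∀ γ, Commute γ u) ∧ IsLatin u ∧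
      (u = d.ι ∨ ∀ γ, Commute γ d.ι) := by
  have hL {u : Γ} (huT : u ∈ d.T) (hu : ∀ x ∈ d.T, Commute x u) (hu2 : ∀ γ, Commute γ (u ^ 2)) :
      IsLatin u :=
    ⟨d.isIsolated_of_z_central hz huT hu, d.isPElement_of_mem_T huT, mem_center_iff.mpr hu2⟩
  by_cases hι : ∀ γ, Commute γ d.ι
  · obtain ⟨n, hne, hsq⟩ := (d.isPElement_of_mem_T d.f_mem_T).exists_pow_noncentral hf
    have hfT : ∀ x ∈ d.T, Commute x (d.f ^ n) := fun x hx => (d.commute_f x hx).symm.pow_right n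
    have hmem := pow_mem d.f_mem_T n
    exact ⟨d.f ^ n, hmem, hfT, hne, hL hmem hfT hsq, Or.inr hι⟩
  · have hmem := d.A_le_T d.ι_mem_A
    exact ⟨d.ι, hmem, d.commute_ι, hι, hL hmem d.commute_ι (d.ι_sq ▸ hz), Or.inl rfl⟩

theorem exists_index_centralizer_eq_mul_pow_three (hO : d.HasTrivialOddCore)
    (hz : ∀ γ, Commute γ d.z) {u a : Γ} (hu : ∀ x ∈ d.T, Commute x u) (hL : IsLatin u)
    (h2 : ¬ IsPGroup 2 (commutatorWith u)) (hι : u = d.ι ∨ ∀ γ, Commute γ d.ι)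
    (ha : a ∈ d.G ⊓ d.T) (haA : a ∉ d.A) (hae : ∃ γ, γ * a * γ⁻¹ = d.e₁) :
    ∃ α β : ℕ, (centralizer {u}).index = α * β ^ 3 ∧ β ≠ 1 := by
  obtain ⟨γ, hγ⟩ := hae
  have ha2 : a ^ 2 = 1 := conj_eq_one_iff.mp ((conj_pow).symm.trans (hγ ▸ d.e₁_sq))
  have hpair := d.isCentralPair_e₁ hz hu ha haA ha2
  have hzK : d.z ∈ centralizer (normalClosure {u} : Set Γ) :=
    mem_centralizer_normalClosure.mpr fun ω _ => (hz ω).symm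
  have hK := (d.commute_of_z_mem_centralizer hO h2 hzK).1
  have hae₁G : a * d.e₁ ∈ d.G := mul_mem ha.1 (d.A_le_G d.e₁_mem_A)
  refine hpair.exists_index_centralizer_eq_mul_pow_three hL ?_ (fun h => ?_) (fun h => ?_) ?_
  · rw [← hγ, ncard_conjugatesCentralizing_singleton_conj]
  · exact d.not_commute_t_e₁ ((hK _ ⟨d.A_le_G d.e₁_mem_A, h⟩).2 _ d.t_mem.2)
  · obtain ⟨hT, hcomm⟩ := hK _ ⟨hae₁G, h⟩
    have hmem := d.mem_A_of_commute_e₁ ⟨hae₁G, hT⟩ (hcomm _ (d.A_le_T d.e₁_mem_A)).symm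
    exact haA ((d.A.mul_mem_cancel_right d.e₁_mem_A).mp hmem)
  · rw [← ncard_conjugatesCentralizing_singleton_conj (x := a) d.κ, d.κ_conj_of_notMem_A ha haA]
    rcases hι with rfl | hι
    · rw [(hpair.commute_left.mul_left hpair.commute_right).eq]
      exact Or.inr rfl
    · rw [conjugatesCentralizing_singleton_mul hι]
      exact Or.inl rfl

theorem isInner_of_z_central (hO : d.HasTrivialOddCore) (hf : d.IsLocallyInner)
    (hidx : (d.T : Subgroup Γ).index ≤ 225) (hz : ∀ γ, Commute γ d.z) : d.IsInner := by
  by_cases hG : IsPGroup 2 d.G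
  · exact d.isInner_of_isPGroup_G hG
  by_cases hfc : ∀ γ, Commute γ d.f
  · exact ⟨1, one_mem _, fun x _ => by rw [mul_one]; exact (hfc x).symm⟩
  obtain ⟨a, ha, haA, γ, hγ⟩ := d.exists_conj_eq_e₁ hO hz hG
  obtain ⟨u, huT, hu, hne, hL, hι⟩ := d.exists_isLatin hz hfc
  have h2 := hL.isIsolated.not_isPGroup_commutatorWith d.T huT hne
  obtain ⟨α, β, hcard, hβ⟩ :=
    d.exists_index_centralizer_eq_mul_pow_three hO hz hu hL h2 hι ha haA ⟨γ, hγ⟩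
  obtain ⟨δ, hδu, hδ⟩ := hL.isIsolated.exists_commute_conj_eq hL.isPElement (hu a ha.2) (g := γ)
    (hγ ▸ hu _ (d.A_le_T d.e₁_mem_A))
  have hδT : δ ∉ d.T := fun hδT => haA <| by
    have h := d.conj_mem_A (d.T_le_M (d.T.inv_mem hδT)) d.e₁_mem_A
    rw [← hγ, ← hδ] at h
    simpa [mul_assoc] using h
  have hle := (d.three_mul_index_centralizer_le hu hδu hδT).trans hidx
  rw [hcard] at hle
  obtain ⟨rfl, rfl⟩ := eq_one_and_eq_three_of_mul_pow_three_le
    (hcard ▸ d.odd_index_centralizer hu) hβ hle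
  exact d.isInner_of_index_centralizer_eq_pow hO hf hu h2 (p := 3) (a := 3) (by norm_num)
    (by decide) (hcard.trans (one_mul _))

end Central

end WreathedExtension

/-! ### Fusion of the three involutions -/

theorem mul_conj {Γ : Type*} [Group Γ] (a b c : Γ) :
    a * b * c * (a * b)⁻¹ = a * (b * c * b⁻¹) * a⁻¹ := by
  group

namespace WreathedExtension

variable {Γ : Type*} [Group Γ] (d : WreathedExtension Γ)

theorem conj_z_eq {m : Γ} (hm : m ∈ d.M) :
    m * d.z * m⁻¹ = d.e₁ ∨ m * d.z * m⁻¹ = d.e₂ ∨ m * d.z * m⁻¹ = d.z :=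
  (d.eq_one_or_e₁_or_e₂_or_z (d.conj_mem_A hm d.z_mem_A)
    (by rw [conj_pow, z_sq, mul_one, mul_inv_cancel])).resolve_left
    (mt conj_eq_one_iff.mp d.z_ne_one)

theorem conj_f_eq_mod_G (x : Γ) : ((x * d.f * x⁻¹ : Γ) : Γ ⧸ d.G) = (d.f : Γ ⧸ d.G) := by
  have := d.normal_G
  rw [← mul_inv_eq_one, ← QuotientGroup.mk_inv, ← QuotientGroup.mk_mul, QuotientGroup.eq_one_iff]
  exact d.commutator_mem_G x d.f

/-- The product of the conjugates of `f` under the powers of a three-cycle `j`. -/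
def fNorm (j : Γ) : Γ := d.f * (j * d.f * j⁻¹) * (j * j * d.f * (j * j)⁻¹)

theorem pow_three_inv_mul_fNorm_mem_G (j : Γ) : (d.f ^ 3)⁻¹ * d.fNorm j ∈ d.G := by
  have := d.normal_G
  rw [← QuotientGroup.eq, fNorm, QuotientGroup.mk_mul, QuotientGroup.mk_mul, conj_f_eq_mod_G,
    conj_f_eq_mod_G, QuotientGroup.mk_pow, pow_succ, pow_two]

theorem isInner_of_pow_three_inv_mul_mem_G {F : Γ} (hF : ∀ γ, Commute γ F)
    (hFG : (d.f ^ 3)⁻¹ * F ∈ d.G) : d.IsInner := by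
  have := d.normal_G
  obtain ⟨k, hk⟩ := d.isPElement_of_mem_T d.f_mem_T
  obtain ⟨m, hm⟩ : ∃ m : ℕ, (d.f ^ 3) ^ m = d.f := exists_pow_eq_self_of_coprime <|
    Nat.Coprime.of_dvd_right (orderOf_dvd_of_pow_eq_one hk) (Nat.Coprime.pow_right k (by decide))
  refine ⟨d.f⁻¹ * F ^ m, ?_, fun x _ => by
    rw [mul_inv_cancel_left]
    exact ((hF x).pow_right m).symm⟩
  have hFG' : ((d.f ^ 3 : Γ) : Γ ⧸ d.G) = F := QuotientGroup.eq.mpr hFG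
  rw [← QuotientGroup.eq, QuotientGroup.mk_pow, ← hFG', ← QuotientGroup.mk_pow, hm]

variable {j : Γ}

/-- An element of `M` which permutes the involutions of `A` cyclically. -/
structure IsThreeCycle (j : Γ) : Prop where
  mem_M : j ∈ d.M
  conj_z : j * d.z * j⁻¹ = d.e₁
  conj_e₁ : j * d.e₁ * j⁻¹ = d.e₂

namespace IsThreeCycle

variable {d}

theorem sq_conj_z (hj : d.IsThreeCycle j) : j * j * d.z * (j * j)⁻¹ = d.e₂ := by
  rw [mul_conj, hj.conj_z, hj.conj_e₁]

theorem conj_e₂ (hj : d.IsThreeCycle j) : j * d.e₂ * j⁻¹ = d.z := by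
  rw [← d.e₁_mul_z, ← conj_mul, hj.conj_e₁, hj.conj_z, z,
    (d.commute_A _ d.e₂_mem_A _ d.e₁_mem_A).eq]

theorem fNorm_mem_B (hj : d.IsThreeCycle j) : d.fNorm j ∈ d.B :=
  mul_mem (mul_mem d.f_mem_B (d.conj_mem_B hj.mem_M d.f_mem_B))
    (d.conj_mem_B (mul_mem hj.mem_M hj.mem_M) d.f_mem_B)

end IsThreeCycle

variable [Finite Γ]

theorem exists_mem_M_conj_z_eq_e₁_of_conj_mem_A {γ : Γ} (hA : γ * d.z * γ⁻¹ ∈ d.A)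
    (hne : γ * d.z * γ⁻¹ ≠ d.z) : ∃ j ∈ d.M, j * d.z * j⁻¹ = d.e₁ := by
  obtain ⟨j, hj, hjT⟩ := d.exists_conj_eq_and_conj_mem_T d.commute_z γ
  have hjM : j⁻¹ ∈ d.M := inv_mem <| d.mem_M_of_forall_conj_mem_T fun b hb =>
    hjT b (d.B_le_T hb) (d.commute_B hb (d.A_le_B hA))
  have hconj : j⁻¹ * d.z * j⁻¹⁻¹ = γ * d.z * γ⁻¹ := by
    conv_lhs => rw [← hj]
    group
  rcases d.conj_z_eq hjM with h | h | h
  · exact ⟨_, hjM, h⟩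
  · exact ⟨d.t * j⁻¹, mul_mem (d.T_le_M d.t_mem.2) hjM, by rw [mul_conj, h, t_conj_e₂]⟩
  · exact absurd (hconj.symm.trans h) hne

theorem exists_mem_M_conj_z_eq_e₁ (hz : ¬ IsIsolated 2 d.z) :
    ∃ j ∈ d.M, j * d.z * j⁻¹ = d.e₁ := by
  obtain ⟨γ, hγT, hγ⟩ : ∃ γ, γ * d.z * γ⁻¹ ∈ d.T ∧ γ * d.z * γ⁻¹ ≠ d.z := by
    by_contra! h
    exact hz (isIsolated_of_sylow d.T h)
  by_cases hA : γ * d.z * γ⁻¹ ∈ d.A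
  · exact d.exists_mem_M_conj_z_eq_e₁_of_conj_mem_A hA hγ
  obtain ⟨j, hj, hjT⟩ := d.exists_conj_eq_and_conj_mem_T d.commute_z γ
  have hιT : j * d.ι * j⁻¹ ∈ d.T := hjT _ (d.A_le_T d.ι_mem_A) (d.commute_ι _ hγT).symm
  refine d.exists_mem_M_conj_z_eq_e₁_of_conj_mem_A (γ := j) ?_ fun h => hγ ?_
  · rw [← d.ι_sq, ← conj_pow]
    exact d.sq_mem_A ⟨d.conj_mem_G (d.A_le_G d.ι_mem_A) j, hιT⟩
  · exact conj_injective (hj.trans h.symm)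

theorem exists_isThreeCycle (hz : ¬ IsIsolated 2 d.z) : ∃ j, d.IsThreeCycle j := by
  obtain ⟨j, hjM, hj⟩ := d.exists_mem_M_conj_z_eq_e₁ hz
  rcases d.conj_e₁_eq hjM with h | h | h
  · exact absurd (conj_injective (h.trans hj.symm)).symm d.z_ne_e₁
  · exact ⟨j, hjM, hj, h⟩
  · refine ⟨j * d.t, mul_mem hjM (d.T_le_M d.t_mem.2), ?_, ?_⟩
    · rw [mul_conj, d.commute_t_z.mul_inv_cancel, hj]
    · rw [mul_conj, ← e₂, ← d.e₁_mul_z, ← conj_mul, h, hj,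
        (d.commute_A _ d.z_mem_A _ d.e₁_mem_A).eq]

theorem conj_f_eq_of_conj_z_eq {m n : Γ} (hm : m ∈ d.M) (hn : n ∈ d.M)
    (h : m * d.z * m⁻¹ = n * d.z * n⁻¹) : m * d.f * m⁻¹ = n * d.f * n⁻¹ := by
  have hz : Commute (n⁻¹ * m) d.z := commute_iff_conj_eq.mpr <| by
    rw [mul_conj, h]
    group
  have hf := (d.commute_of_commute_z (mul_mem (inv_mem hn) hm) hz d.f_mem_B
    (d.commute_f _ d.t_mem.2).symm).mul_inv_cancel
  rw [← mul_inv_cancel_left n m, mul_conj, hf]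

namespace IsThreeCycle

variable {d}

theorem commute_fNorm (hj : d.IsThreeCycle j) : Commute j (d.fNorm j) := by
  have hB := d.conj_mem_B hj.mem_M d.f_mem_B
  have hB2 := d.conj_mem_B (mul_mem hj.mem_M hj.mem_M) d.f_mem_B
  have hf : j * (j * j * d.f * (j * j)⁻¹) * j⁻¹ = d.f := by
    have := d.conj_f_eq_of_conj_z_eq (mul_mem hj.mem_M (mul_mem hj.mem_M hj.mem_M)) (one_mem _)
      (by rw [mul_conj, hj.sq_conj_z, hj.conj_e₂, one_mul, inv_one, mul_one])
    rwa [mul_conj, one_mul, inv_one, mul_one] at this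
  rw [commute_iff_conj_eq, fNorm, ← conj_mul, ← conj_mul, hf, ← mul_conj j j, mul_assoc d.f]
  exact (d.commute_B (mul_mem hB hB2) d.f_mem_B).eq

theorem commute_t_fNorm (hj : d.IsThreeCycle j) : Commute d.t (d.fNorm j) := by
  have htM := d.T_le_M d.t_mem.2
  have hjM2 := mul_mem hj.mem_M hj.mem_M
  have h₁ := d.conj_f_eq_of_conj_z_eq (mul_mem htM hj.mem_M) hjM2
    (by rw [mul_conj, hj.conj_z, hj.sq_conj_z, e₂])
  have h₂ := d.conj_f_eq_of_conj_z_eq (mul_mem htM hjM2) hj.mem_M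
    (by rw [mul_conj, hj.sq_conj_z, hj.conj_z, t_conj_e₂])
  rw [mul_conj d.t] at h₁ h₂
  have hcomm := d.commute_B (d.conj_mem_B hj.mem_M d.f_mem_B) (d.conj_mem_B hjM2 d.f_mem_B)
  rw [commute_iff_conj_eq, fNorm, ← conj_mul, ← conj_mul, h₁, h₂,
    (d.commute_f _ d.t_mem.2).symm.mul_inv_cancel, mul_assoc, ← hcomm.eq, ← mul_assoc]

theorem commute_M_fNorm (hj : d.IsThreeCycle j) {m : Γ} (hm : m ∈ d.M) : Commute m (d.fNorm j) := by
  have hfix {n : Γ} (hn : n ∈ d.M) (hnF : Commute n (d.fNorm j))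
      (h : m * d.z * m⁻¹ = n * d.z * n⁻¹) : Commute m (d.fNorm j) := by
    have hz : Commute (n⁻¹ * m) d.z := commute_iff_conj_eq.mpr <| by
      rw [mul_conj, h]
      group
    rw [← mul_inv_cancel_left n m]
    exact hnF.mul_left (d.commute_of_commute_z (mul_mem (inv_mem hn) hm) hz hj.fNorm_mem_B
      hj.commute_t_fNorm)
  rcases d.conj_z_eq hm with h | h | h
  · exact hfix hj.mem_M hj.commute_fNorm (h.trans hj.conj_z.symm)
  · exact hfix (mul_mem hj.mem_M hj.mem_M) (hj.commute_fNorm.mul_left hj.commute_fNorm)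
      (h.trans hj.sq_conj_z.symm)
  · exact hfix (one_mem _) (Commute.one_left _) (by rw [h, one_mul, inv_one, mul_one])

end IsThreeCycle

section NotIsolated

variable {d} {u : Γ}

theorem not_isPGroup_commutatorWith_z_mul (hO : d.HasTrivialOddCore) (hu : IsIsolated 2 u)
    (huT : u ∈ d.T) (hne : ¬ ∀ γ, Commute γ u) (hzu : ¬ ∀ γ, Commute γ (d.z * u)) :
    ¬ IsPGroup 2 (commutatorWith (d.z * u)) := by
  intro h
  have hmem := conj_mul_inv_mem_commutatorWith (d.z * u)
  have hle := h.le_sylow_of_normal d.T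
  have hbot : commutatorWith (d.z * u) ≠ ⊥ := fun hb => hzu fun γ =>
    commute_iff_conj_eq.mpr (mul_inv_eq_one.mp (mem_bot.mp (hb ▸ hmem γ)))
  have hz := d.z_mem_of_normal hO (d.commutatorWith_le_G _) hbot
  have hzuT : d.z * u ∈ d.T := d.T.mul_mem (d.A_le_T d.z_mem_A) huT
  refine hne fun γ => commute_iff_conj_eq.mpr (hu.conj_eq_of_mem d.T huT ?_)
  have hzγ : γ * d.z * γ⁻¹ ∈ d.T := hle (Normal.conj_mem inferInstance _ hz γ)
  rw [← inv_mul_cancel_left d.z u, ← conj_mul, ← conj_inv]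
  refine d.T.mul_mem (d.T.inv_mem hzγ) ?_
  exact (d.T.mul_mem_cancel_right (d.T.inv_mem hzuT)).mp (hle (hmem γ))

theorem twentyFive_le_ncard_conjugatesCentralizing (hO : d.HasTrivialOddCore) (hL : IsLatin u)
    (hu : ∀ x ∈ d.T, Commute x u) (h2 : ¬ IsPGroup 2 (commutatorWith u))
    (hz : ¬ ∀ γ, Commute γ d.z) : 25 ≤ (conjugatesCentralizing u {d.z * u}).ncard := by
  have hsq := d.ncard_conjugatesCentralizing_z_mul hu hL
  have hmod := d.ncard_conjugatesCentralizing_e₂_modEq_one hu hL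
  have hne : (conjugatesCentralizing u {d.e₂, d.z * u}).ncard ≠ 1 := fun h1 => by
    have hcard := hL.index_centralizer_eq_mul (hu _ (d.A_le_T d.z_mem_A))
      fun γ => d.z_sq ▸ Commute.one_right γ
    rw [hsq, h1, one_pow, mul_one, ← ncard_conjugatesCentralizing_empty] at hcard
    exact hz (d.commute_of_z_mem_centralizer hO h2
      (mem_centralizer_normalClosure_of_ncard_eq hcard)).2
  rw [hsq]
  generalize (conjugatesCentralizing u _).ncard = r at hmod hne
  have hr : 5 ≤ r := by
    rw [Nat.ModEq] at hmod
    omega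
  nlinarith

theorem ncard_le_relIndex (hL : IsLatin u) {s : Γ} (hs : Commute s u) :
    (conjugatesCentralizing u {s}).ncard ≤ (centralizer {u}).relIndex (centralizer {s}) := by
  rw [← ncard_conj_orbit]
  refine Set.ncard_le_ncard fun ω hω => ?_
  obtain ⟨μ, hμ, hμω⟩ := hL.exists_conj_eq (IsConj.refl u) hω.1
  exact ⟨μ, mem_centralizer_singleton_iff.mpr (hL.commute_of_commute_conj hμ (IsConj.refl u) hs
    (hμω ▸ hω.2 s rfl)).symm, hμω⟩

theorem index_centralizer_z_mul_le (hu : ∀ x ∈ d.T, Commute x u)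
    (hidx : (d.T : Subgroup Γ).index ≤ 225)
    (hle : 25 ≤ (centralizer {u}).relIndex (centralizer {d.z * u})) :
    (centralizer {d.z * u}).index ≤ 9 := by
  have hmul := relIndex_mul_index (d.T_le_centralizer (d.commute_z_mul hu))
  have hpos := Nat.pos_of_mul_pos_right (hmul ▸ d.odd_index_T.pos)
  have := Nat.le_of_dvd hpos
    (relIndex_dvd_of_le_left (centralizer {d.z * u}) (d.T_le_centralizer hu))
  nlinarith

theorem isInner_of_isLatin (hO : d.HasTrivialOddCore) (hf : d.IsLocallyInner)
    (hidx : (d.T : Subgroup Γ).index ≤ 225) (hL : IsLatin u) (huT : u ∈ d.T)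
    (huM : ∀ m ∈ d.M, Commute m u) (hne : ¬ ∀ γ, Commute γ u) {j : Γ} (hj : d.IsThreeCycle j) :
    d.IsInner := by
  have hu : ∀ x ∈ d.T, Commute x u := fun x hx => huM x (d.T_le_M hx)
  have hjz : ¬ Commute j d.z := fun h => d.z_ne_e₁ (h.mul_inv_cancel.symm.trans hj.conj_z)
  have hzu : ¬ ∀ γ, Commute γ (d.z * u) := fun h => hjz <| by
    simpa using (h j).mul_right (huM j hj.mem_M).inv_right
  have h2 := not_isPGroup_commutatorWith_z_mul hO hL.isIsolated huT hne hzu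
  have hle : (centralizer {d.z * u}).index ≤ 9 := index_centralizer_z_mul_le hu hidx <|
    (twentyFive_le_ncard_conjugatesCentralizing hO hL hu
      (hL.isIsolated.not_isPGroup_commutatorWith d.T huT hne)
      fun h => hjz (h j)).trans
      (ncard_le_relIndex hL ((hu _ (d.A_le_T d.z_mem_A)).mul_left (Commute.refl u)))
  have hodd := d.odd_index_centralizer (d.commute_z_mul hu)
  have h1 : (centralizer {d.z * u}).index ≠ 1 := fun h => hzu fun γ =>
    mem_centralizer_singleton_iff.mp (index_eq_one.mp h ▸ mem_top γ)
  have hpow {p a : ℕ} (hp : p.Prime) (hp2 : Odd p) (h : (centralizer {d.z * u}).index = p ^ a) :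
      d.IsInner :=
    d.isInner_of_index_centralizer_eq_pow hO hf (d.commute_z_mul hu) h2 hp hp2 h
  obtain h | h | h | h : (centralizer {d.z * u}).index = 3 ∨ (centralizer {d.z * u}).index = 5 ∨
      (centralizer {d.z * u}).index = 7 ∨ (centralizer {d.z * u}).index = 9 := by
    obtain ⟨k, hk⟩ := hodd
    omega
  · exact hpow (p := 3) (a := 1) (by norm_num) (by decide) h
  · exact hpow (p := 5) (a := 1) (by norm_num) (by decide) h
  · exact hpow (p := 7) (a := 1) (by norm_num) (by decide) h
  · exact hpow (p := 3) (a := 2) (by norm_num) (by decide) h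

variable (d)

theorem isInner_of_not_isIsolated_z (hO : d.HasTrivialOddCore) (hf : d.IsLocallyInner)
    (hidx : (d.T : Subgroup Γ).index ≤ 225) (hz : ¬ IsIsolated 2 d.z) : d.IsInner := by
  obtain ⟨j, hj⟩ := d.exists_isThreeCycle hz
  have hFT := d.B_le_T hj.fNorm_mem_B
  by_cases hF : ∀ γ, Commute γ (d.fNorm j)
  · exact d.isInner_of_pow_three_inv_mul_mem_G hF (d.pow_three_inv_mul_fNorm_mem_G j)
  obtain ⟨n, hne, hsq⟩ := (d.isPElement_of_mem_T hFT).exists_pow_noncentral hF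
  have huT := pow_mem hFT n
  have huM : ∀ m ∈ d.M, Commute m (d.fNorm j ^ n) := fun m hm =>
    (hj.commute_M_fNorm hm).pow_right n
  have hiso := d.isIsolated_of_commute_M huT (fun x hx => huM x (d.T_le_M hx)) huM
  exact isInner_of_isLatin hO hf hidx
    ⟨hiso, d.isPElement_of_mem_T huT, mem_center_iff.mpr hsq⟩ huT huM hne hj

end NotIsolated

theorem isInner (hO : d.HasTrivialOddCore) (hf : d.IsLocallyInner)
    (hidx : (d.T : Subgroup Γ).index ≤ 225) : d.IsInner := by
  by_cases hz : ∀ γ, Commute γ d.z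
  · exact d.isInner_of_z_central hO hf hidx hz
  by_cases hiso : IsIsolated 2 d.z
  · exact d.isInner_of_isIsolated_z hO hf hidx hiso hz
  · exact d.isInner_of_not_isIsolated_z hO hf hidx hiso

end WreathedExtension

/-! ### The cyclic extension -/

section WreathProduct

open Wreathed

theorem commute_of_right_eq_one {n : ℕ} {x y : W n} (hx : x.right = 1) (hy : y.right = 1) :
    Commute x y := by
  change x * y = y * x
  ext <;> simp [hx, hy, mul_comm]

theorem right_mul_eq_one {n : ℕ} {x y : W n} (hx : x.right ≠ 1) (hy : y.right ≠ 1) :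
    (x * y).right = 1 := by
  rw [SemidirectProduct.mul_right, (two_cases x.right).resolve_left hx,
    (two_cases y.right).resolve_left hy]
  decide

theorem t_conj_inl {n : ℕ} (x : C n × C n) :
    t n * SemidirectProduct.inl x * (t n)⁻¹ = SemidirectProduct.inl (x.2, x.1) := by
  rw [t, ← map_inv, ← SemidirectProduct.inl_aut]
  rfl

theorem two_pow_ne_zero (n : ℕ) : (2 ^ n : ZMod (2 ^ (n + 1))) ≠ 0 := fun h =>
  Nat.not_dvd_of_pos_of_lt (by positivity) (Nat.pow_lt_pow_succ one_lt_two)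
    ((ZMod.natCast_eq_zero_iff _ _).mp (by exact_mod_cast h))

theorem eq_zero_or_eq_two_pow_of_add_self_eq_zero {n : ℕ} {x : ZMod (2 ^ (n + 1))}
    (h : x + x = 0) : x = 0 ∨ x = 2 ^ n := by
  have hval : ((2 * x.val : ℕ) : ZMod (2 ^ (n + 1))) = 0 := by
    rw [two_mul, Nat.cast_add, ZMod.natCast_zmod_val, h]
  obtain ⟨k, hk⟩ : 2 ^ n ∣ x.val := Nat.dvd_of_mul_dvd_mul_left two_pos <|
    pow_succ' 2 n ▸ (ZMod.natCast_eq_zero_iff _ _).mp hval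
  have hlt : k < 2 := by
    have := x.val_lt
    rw [hk, pow_succ] at this
    exact Nat.lt_of_mul_lt_mul_left this
  rw [← ZMod.natCast_zmod_val x, hk]
  interval_cases k <;> simp

/-- An element of order `4` of the first factor of the base of `C_{2^(m+2)} ≀ C_2`. -/
def quarter (m : ℕ) : W (m + 2) := SemidirectProduct.inl (Multiplicative.ofAdd (2 ^ m), 1)

theorem quarter_sq (m : ℕ) :
    quarter m ^ 2 = SemidirectProduct.inl (Multiplicative.ofAdd (2 ^ (m + 1)), 1) := by
  rw [quarter, ← map_pow, Prod.pow_mk, ← ofAdd_nsmul, one_pow, nsmul_eq_mul, Nat.cast_ofNat,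
    ← pow_succ']

theorem quarter_pow_four (m : ℕ) : quarter m ^ 4 = 1 := by
  have h : (2 : ZMod (2 ^ (m + 2))) ^ (m + 2) = 0 := by
    exact_mod_cast ZMod.natCast_self (2 ^ (m + 2))
  rw [pow_mul (quarter m) 2 2, quarter_sq, ← map_pow, Prod.pow_mk, ← ofAdd_nsmul, one_pow,
    nsmul_eq_mul, Nat.cast_ofNat, ← pow_succ', h]
  rfl

theorem quarter_sq_ne_one (m : ℕ) : quarter m ^ 2 ≠ 1 := by
  rw [quarter_sq, Ne, ← map_one SemidirectProduct.inl, SemidirectProduct.inl_inj, Prod.mk_eq_one]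
  exact fun h => two_pow_ne_zero _ h.1

theorem t_conj_quarter_sq_ne (m : ℕ) : t _ * quarter m ^ 2 * (t _)⁻¹ ≠ quarter m ^ 2 := by
  rw [quarter_sq, t_conj_inl, Ne, SemidirectProduct.inl_inj, Prod.mk_inj]
  exact fun h => two_pow_ne_zero _ h.2

theorem eq_of_sq_eq_one_of_right_eq_one {m : ℕ} {x : W (m + 2)} (hx : x.right = 1)
    (h : x ^ 2 = 1) : x = 1 ∨ x = quarter m ^ 2 ∨ x = t _ * quarter m ^ 2 * (t _)⁻¹ ∨
      x = quarter m ^ 2 * (t _ * quarter m ^ 2 * (t _)⁻¹) := by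
  obtain ⟨⟨a, b⟩, rfl⟩ : ∃ y, x = SemidirectProduct.inl y := ⟨x.left, by ext <;> simp [hx]⟩
  rw [← map_pow, ← map_one SemidirectProduct.inl, SemidirectProduct.inl_inj, pow_two,
    Prod.mk_mul_mk, Prod.mk_eq_one] at h
  have hC (c : C (m + 2)) (hc : c * c = 1) : c = 1 ∨ c = Multiplicative.ofAdd (2 ^ (m + 1)) :=
    eq_zero_or_eq_two_pow_of_add_self_eq_zero (x := c.toAdd) hc
  rw [quarter_sq, t_conj_inl, ← map_mul, ← map_one SemidirectProduct.inl]
  simp only [SemidirectProduct.inl_inj]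
  rcases hC a h.1 with rfl | rfl <;> rcases hC b h.2 with rfl | rfl
  · exact Or.inl rfl
  · exact Or.inr (Or.inr (Or.inl rfl))
  · exact Or.inr (Or.inl rfl)
  · refine Or.inr (Or.inr (Or.inr ?_))
    rw [Prod.mk_mul_mk, mul_one, one_mul]

/-- A wreathed `2`-group embedded as `N ⊓ T` gives rise to a `WreathedExtension`. -/
def WreathedExtension.ofEmbedding {Γ : Type*} [Group Γ] {N : Subgroup Γ} (hN : N.Normal)
    (T : Sylow 2 Γ) {f : Γ} (hfT : f ∈ T) (hf : ∀ x ∈ T, Commute f x)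
    (hgen : ∀ γ, ∃ g ∈ N, ∃ i : ℕ, γ = g * f ^ i) {m : ℕ} {j : W (m + 2) →* Γ}
    (hj : Function.Injective j) (hrange : j.range = N ⊓ T) : WreathedExtension Γ :=
  have hmem (w : W (m + 2)) : j w ∈ N ⊓ T := hrange ▸ ⟨w, rfl⟩
  have hbase {w : W (m + 2)} : j w ∈ SemidirectProduct.rightHom.ker.map j ↔ w.right = 1 :=
    mem_map_iff_mem hj
  { G := N
    normal_G := hN
    T := T
    f := f
    f_mem_T := hfT
    commute_f := hf
    exists_eq_mul_pow := hgen
    A := SemidirectProduct.rightHom.ker.map j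
    A_le_G := (map_le_range _ _).trans (hrange.trans_le inf_le_left)
    A_le_T := (map_le_range _ _).trans (hrange.trans_le inf_le_right)
    commute_A := by
      rintro _ ⟨v, hv, rfl⟩ _ ⟨w, hw, rfl⟩
      exact (commute_of_right_eq_one hv hw).map j
    mul_mem_A := by
      rw [← hrange]
      rintro _ ⟨v, rfl⟩ _ ⟨w, rfl⟩ hv hw
      rw [hbase] at hv hw
      rw [← map_mul, hbase]
      exact right_mul_eq_one hv hw
    t := j (Wreathed.t _)
    t_mem := hmem _
    t_notMem_A := by
      rw [hbase]
      exact show (Multiplicative.ofAdd 1 : Multiplicative (ZMod 2)) ≠ 1 by decide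
    κ := j (quarter m)
    κ_mem_A := hbase.mpr rfl
    κ_pow_four := by rw [← map_pow, quarter_pow_four, map_one]
    κ_sq_ne_one := by
      rw [← map_pow, Ne, map_eq_one_iff j hj]
      exact quarter_sq_ne_one m
    conj_κ_sq_ne := by
      rw [← map_pow, ← map_inv, ← map_mul, ← map_mul, hj.ne_iff]
      exact t_conj_quarter_sq_ne m
    eq_of_sq_eq_one := by
      rintro _ ⟨w, hw, rfl⟩ h
      rw [← map_pow, map_eq_one_iff j hj] at h
      simp only [← map_pow, ← map_inv, ← map_mul, hj.eq_iff, map_eq_one_iff j hj]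
      exact eq_of_sq_eq_one_of_right_eq_one hw h }

end WreathProduct

section SemidirectProduct

variable {N H : Type*} [Group N] [Group H] {φ : H →* MulAut N} {p : ℕ}

/-- The subgroup `P ⋊ H` of `N ⋊ H`, for an `H`-invariant subgroup `P` of `N`. -/
def semidirectSubgroup (P : Subgroup N) (hP : ∀ h, ∀ x ∈ P, φ h x ∈ P) : Subgroup (N ⋊[φ] H) where
  carrier := {x | x.left ∈ P}
  one_mem' := P.one_mem
  mul_mem' hx hy := P.mul_mem hx (hP _ _ hy)
  inv_mem' hx := hP _ _ (P.inv_mem hx)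

theorem card_semidirectSubgroup (P : Subgroup N) (hP : ∀ h, ∀ x ∈ P, φ h x ∈ P) :
    Nat.card (semidirectSubgroup P hP) = Nat.card P * Nat.card H := by
  rw [← Nat.card_prod]
  exact Nat.card_congr
    { toFun x := (⟨x.1.left, x.2⟩, x.1.right)
      invFun y := ⟨⟨y.1, y.2⟩, y.1.2⟩ }

theorem exists_sylow_eq_map_inl [Finite N] [Fact p.Prime] (Q : Sylow p N)
    (h : ¬ p ∣ Nat.card H) :
    ∃ R : Sylow p (N ⋊[φ] H), (R : Subgroup (N ⋊[φ] H)) =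
      (Q : Subgroup N).map SemidirectProduct.inl := by
  have hindex : ((Q : Subgroup N).map (SemidirectProduct.inl : N →* N ⋊[φ] H)).index =
      (Q : Subgroup N).index * Nat.card H := by
    rw [index_map, (MonoidHom.ker_eq_bot_iff _).mpr SemidirectProduct.inl_injective, sup_bot_eq,
      SemidirectProduct.range_inl_eq_ker_rightHom, index_ker,
      MonoidHom.range_eq_top.mpr SemidirectProduct.rightHom_surjective, card_top]
  refine ⟨(Q.2.map _).toSylow ?_, rfl⟩
  rw [hindex, (Fact.out : p.Prime).dvd_mul]
  exact not_or_intro Q.not_dvd_index h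

variable [Finite N] [Finite H]

instance finite_semidirectProduct : Finite (N ⋊[φ] H) :=
  .of_equiv _ SemidirectProduct.equivProd.symm

theorem index_semidirectSubgroup (P : Subgroup N) (hP : ∀ h, ∀ x ∈ P, φ h x ∈ P) :
    (semidirectSubgroup P hP).index = P.index := by
  refine Nat.eq_of_mul_eq_mul_left (Nat.card_pos (α := semidirectSubgroup P hP)) ?_
  rw [card_mul_index, SemidirectProduct.card,
    card_semidirectSubgroup, ← P.card_mul_index, mul_right_comm]

theorem isPGroup_semidirectSubgroup [Fact p.Prime] {P : Subgroup N}
    (hP : ∀ h, ∀ x ∈ P, φ h x ∈ P) (hPp : IsPGroup p P) (hH : IsPGroup p H) :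
    IsPGroup p (semidirectSubgroup P hP) := by
  obtain ⟨a, ha⟩ := hPp.exists_card_eq
  obtain ⟨b, hb⟩ := hH.exists_card_eq
  exact IsPGroup.of_card (n := a + b) (by rw [card_semidirectSubgroup, ha, hb, pow_add])

end SemidirectProduct

section CyclicExtension

open SemidirectProduct

variable {G : Type*} [Group G] {ψ : MulAut G}

/-- The extension `G ⋊ ⟨ψ⟩` of `G` by an automorphism `ψ`. -/
abbrev CyclicExtension (ψ : MulAut G) : Type _ := G ⋊[(zpowers ψ).subtype] zpowers ψ

namespace CyclicExtension

/-- The element `ψ` of `G ⋊ ⟨ψ⟩`. -/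
def gen (ψ : MulAut G) : CyclicExtension ψ := inr ⟨ψ, mem_zpowers ψ⟩

theorem gen_conj_inl (g : G) : gen ψ * inl g * (gen ψ)⁻¹ = inl (ψ g) := by
  rw [gen, ← map_inv, ← inl_aut]
  rfl

theorem gen_mul_inl_conj_inl (s g : G) :
    gen ψ * inl s * inl g * (gen ψ * inl s)⁻¹ = inl (ψ (s * g * s⁻¹)) := by
  rw [← gen_conj_inl, map_mul, map_mul, map_inv]
  group

theorem apply_eq_of_mem_zpowers {x : G} (h : ψ x = x) {σ : MulAut G} (hσ : σ ∈ zpowers ψ) :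
    σ x = x := by
  have : zpowers ψ ≤ MulAction.stabilizer (MulAut G) x := zpowers_le.mpr h
  exact this hσ

theorem subtype_apply_mem {P : Subgroup G} (hfix : ∀ x ∈ P, ψ x = x) (σ : zpowers ψ) (x : G)
    (hx : x ∈ P) : (zpowers ψ).subtype σ x ∈ P :=
  (apply_eq_of_mem_zpowers (hfix x hx) σ.2).symm ▸ hx

theorem commute_gen {x : CyclicExtension ψ} (h : ψ x.left = x.left) : Commute (gen ψ) x := by
  change gen ψ * x = x * gen ψ
  ext1
  · simp [gen, mul_left, h]
  · exact mul_comm' _ x.right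

variable [Finite G]

theorem exists_eq_inl_mul_gen_pow (γ : CyclicExtension ψ) :
    ∃ g ∈ (inl : G →* CyclicExtension ψ).range, ∃ i : ℕ, γ = g * gen ψ ^ i := by
  obtain ⟨i, hi⟩ := mem_powers_iff_mem_zpowers.mpr γ.right.2
  refine ⟨inl γ.left, ⟨_, rfl⟩, i, ?_⟩
  rw [gen, ← map_pow, show (⟨ψ, mem_zpowers ψ⟩ : zpowers ψ) ^ i = γ.right from Subtype.ext hi,
    inl_left_mul_inr_right]

variable (P : Sylow 2 G) (hfix : ∀ x ∈ P, ψ x = x) (hψ : IsPGroup 2 (zpowers ψ)) {m : ℕ}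
  (e : (P : Subgroup G) ≃* Wreathed.W (m + 2))

/-- The Sylow `2`-subgroup `P ⋊ ⟨ψ⟩` of `G ⋊ ⟨ψ⟩`, when the `2`-element `ψ` centralizes `P`. -/
noncomputable def sylow : Sylow 2 (CyclicExtension ψ) :=
  (isPGroup_semidirectSubgroup (subtype_apply_mem hfix) P.2 hψ).toSylow
    (index_semidirectSubgroup (P : Subgroup G) (subtype_apply_mem hfix) ▸ P.not_dvd_index)

theorem index_sylow :
    (sylow P hfix hψ : Subgroup (CyclicExtension ψ)).index = (P : Subgroup G).index :=
  index_semidirectSubgroup _ (subtype_apply_mem hfix)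

/-- The embedding of the wreathed `2`-group into `G ⋊ ⟨ψ⟩` as the Sylow subgroup `P` of `G`. -/
def wreathedHom : Wreathed.W (m + 2) →* CyclicExtension ψ :=
  inl.comp ((P : Subgroup G).subtype.comp e.symm.toMonoidHom)

theorem range_wreathedHom :
    (wreathedHom P e : _ →* CyclicExtension ψ).range = inl.range ⊓ (sylow P hfix hψ) := by
  ext x
  constructor
  · rintro ⟨w, rfl⟩
    exact ⟨⟨_, rfl⟩, (e.symm w).2⟩
  · rintro ⟨⟨g, rfl⟩, hg⟩
    exact ⟨e ⟨g, hg⟩, by simp [wreathedHom]⟩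

/-- `G ⋊ ⟨ψ⟩`, as a `WreathedExtension` of `G`. -/
noncomputable def wreathedExtension : WreathedExtension (CyclicExtension ψ) :=
  .ofEmbedding (N := inl.range) (by rw [range_inl_eq_ker_rightHom]; infer_instance)
    (sylow P hfix hψ) (f := gen ψ) P.one_mem
    (fun _ hx => commute_gen (hfix _ hx))
    exists_eq_inl_mul_gen_pow
    (inl_injective.comp ((P : Subgroup G).subtype_injective.comp e.symm.injective))
    (range_wreathedHom P hfix hψ e)

theorem hasTrivialOddCore (hO : ∀ N : Subgroup G, N.Normal → ¬ 2 ∣ Nat.card N → N = ⊥) :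
    (wreathedExtension P hfix hψ e).HasTrivialOddCore := by
  intro N hN hle h2
  have hmap : (N.comap inl).map inl = N := map_comap_eq_self hle
  rw [← hmap, hO (N.comap inl) inferInstance, Subgroup.map_bot]
  rwa [← card_map_of_injective (inl_injective (φ := (zpowers ψ).subtype)), hmap]

theorem isLocallyInner (hcol : IsColeman ψ) :
    (wreathedExtension P hfix hψ e).IsLocallyInner := by
  intro p hp hodd
  have := Fact.mk hp
  obtain ⟨Q⟩ : Nonempty (Sylow p G) := inferInstance
  obtain ⟨y, hy⟩ := hcol p hp Q
  have hcard : ¬ p ∣ Nat.card (zpowers ψ) := by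
    obtain ⟨k, hk⟩ := hψ.exists_card_eq
    rw [hk]
    exact fun h => hodd.ne_two_of_dvd_nat dvd_rfl
      ((Nat.prime_dvd_prime_iff_eq hp Nat.prime_two).mp (hp.dvd_of_dvd_pow h))
  obtain ⟨R, hR⟩ := exists_sylow_eq_map_inl (φ := (zpowers ψ).subtype) Q hcard
  refine ⟨R, inl (ψ⁻¹ y), ⟨_, rfl⟩, fun x hx => ?_⟩
  rw [← SetLike.mem_coe, ← Sylow.coe_coe, hR] at hx
  obtain ⟨q, hq, rfl⟩ := hx
  refine commute_iff_conj_eq.mpr ((gen_mul_inl_conj_inl _ q).trans (congrArg inl ?_))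
  rw [map_mul ψ, map_mul ψ, map_inv ψ, hy q hq, MulAut.apply_inv_self]
  group

theorem mem_innAut_of_isInner (h : (wreathedExtension P hfix hψ e).IsInner) : ψ ∈ innAut G := by
  obtain ⟨_, ⟨s, rfl⟩, hs⟩ := h
  refine ⟨(ψ s)⁻¹, ?_⟩
  ext x
  have hx : inl (ψ (s * x * s⁻¹)) = (inl x : CyclicExtension ψ) :=
    (gen_mul_inl_conj_inl s x).symm.trans (hs (inl x) ⟨x, rfl⟩).mul_inv_cancel
  rw [inl_inj, map_mul, map_mul, map_inv] at hx
  rw [MulAut.conj_apply]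
  conv_lhs => rw [← hx]
  group

end CyclicExtension

end CyclicExtension

section TrivialOddCore

variable {G : Type*} [Group G]

theorem isColeman_conj (y : G) : IsColeman (MulAut.conj y) := fun _ _ _ =>
  ⟨y⁻¹, fun u _ => by rw [MulAut.conj_apply, inv_inv]⟩

theorem exists_conj_mul_apply_eq {φ : MulAut G} (hφ : IsColeman φ) {p : ℕ}
    (hp : p.Prime) (P : Sylow p G) : ∃ y, ∀ x ∈ P, (MulAut.conj y * φ : MulAut G) x = x := by
  obtain ⟨y, hy⟩ := hφ p hp P
  refine ⟨y, fun x hx => ?_⟩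
  rw [MulAut.mul_apply, MulAut.conj_apply, hy x hx]
  group

variable [Finite G] {P : Sylow 2 G} {m : ℕ}

theorem mem_innAut_of_apply_eq (hO : ∀ N : Subgroup G, N.Normal → ¬ 2 ∣ Nat.card N → N = ⊥)
    (e : (P : Subgroup G) ≃* Wreathed.W (m + 2)) (hidx : (P : Subgroup G).index ≤ 225)
    {ψ : MulAut G} (hfix : ∀ x ∈ P, ψ x = x) (hψ : IsPElement 2 ψ) (hcol : IsColeman ψ) :
    ψ ∈ innAut G :=
  have h2 := hψ.isPGroup_zpowers
  CyclicExtension.mem_innAut_of_isInner P hfix h2 e <| WreathedExtension.isInner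
    _ (CyclicExtension.hasTrivialOddCore P hfix h2 e hO)
    (CyclicExtension.isLocallyInner P hfix h2 e hcol)
    ((CyclicExtension.index_sylow P hfix h2).trans_le hidx)

theorem mem_innAut_of_trivial_oddCore
    (hO : ∀ N : Subgroup G, N.Normal → ¬ 2 ∣ Nat.card N → N = ⊥)
    (e : (P : Subgroup G) ≃* Wreathed.W (m + 2)) (hidx : (P : Subgroup G).index ≤ 225)
    {φ : MulAut G} (hφ : IsPElement 2 φ) (hcol : IsColeman φ) : φ ∈ innAut G := by
  obtain ⟨y, hfix⟩ := exists_conj_mul_apply_eq hcol Nat.prime_two P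
  set ψ := MulAut.conj y * φ
  have hψφ : (ψ : MulAut G ⧸ innAut G) = φ := by
    rw [QuotientGroup.mk_mul, (QuotientGroup.eq_one_iff (N := innAut G) _).mpr ⟨y, rfl⟩,
      one_mul]
  obtain ⟨k, q, hq, hord⟩ :=
    Nat.exists_eq_pow_mul_and_not_dvd (orderOf_pos ψ).ne' 2 (by norm_num)
  have hin : ψ ^ q ∈ innAut G := mem_innAut_of_apply_eq hO e hidx
    (fun x hx => CyclicExtension.apply_eq_of_mem_zpowers (hfix x hx) (pow_mem (mem_zpowers ψ) q))
    ⟨k, by rw [← pow_mul, mul_comm, ← hord, pow_orderOf_eq_one]⟩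
    ((autCol G).pow_mem ((autCol G).mul_mem (isColeman_conj y) hcol) q)
  rw [← QuotientGroup.eq_one_iff, QuotientGroup.mk_pow, hψφ] at hin
  obtain ⟨l, hl⟩ := hφ
  rw [← QuotientGroup.eq_one_iff]
  refine eq_one_of_pow_eq_one_of_coprime hin (n := 2 ^ l) ?_ ?_
  · rw [← QuotientGroup.mk_pow, hl, QuotientGroup.mk_one]
  · exact ((Nat.prime_two.coprime_iff_not_dvd).mpr hq).symm.pow_right l

end TrivialOddCore

/-! ### Groups of odd order at most 225 -/

section OddOrder

theorem exists_prime_forall_dvd_mod_eq_one : ∀ c < 226, c % 2 = 1 → c ≠ 1 → c ≠ 105 →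
    ∃ p ∈ c.primeFactors, ∀ d ∈ c.divisors, d % p = 1 → d = 1 := by
  decide +kernel

theorem exists_characteristic_isMulCommutative {N : Type*} [Group N] [Nontrivial N]
    [Group.IsSolvable N] :
    ∃ M : Subgroup N, M.Characteristic ∧ M ≠ ⊥ ∧ IsMulCommutative M := by
  classical
  have hex : ∃ n, derivedSeries N n = ⊥ := Group.IsSolvable.solvable
  obtain ⟨n, hn⟩ : ∃ n, Nat.find hex = n + 1 := Nat.exists_eq_succ_of_ne_zero fun h => by
    have htop := Nat.find_spec hex
    rw [h, derivedSeries_zero] at htop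
    exact top_ne_bot htop
  refine ⟨derivedSeries N n, inferInstance, Nat.find_min hex (by omega), ?_⟩
  have hbot := Nat.find_spec hex
  rw [hn, derivedSeries_succ, commutator_eq_bot_iff_le_centralizer] at hbot
  exact le_centralizer_iff_isMulCommutative.mp hbot

variable {N : Type*} [Group N] [Finite N]

theorem exists_characteristic_isPGroup_of_isSolvable [Nontrivial N] [Group.IsSolvable N] :
    ∃ p, p.Prime ∧ p ∣ Nat.card N ∧
      ∃ M : Subgroup N, M.Characteristic ∧ M ≠ ⊥ ∧ IsPGroup p M := by
  obtain ⟨A, hA, hne, hcomm⟩ := exists_characteristic_isMulCommutative (N := N)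
  obtain ⟨p, hp, hdvd⟩ := Nat.exists_prime_and_dvd (A.one_lt_card_iff_ne_bot.mpr hne).ne'
  have := Fact.mk hp
  let P : Sylow p A := default
  have hP : (P : Subgroup A).Characteristic := P.characteristic_of_normal inferInstance
  refine ⟨p, hp, hdvd.trans A.card_subgroup_dvd_card, (P : Subgroup A).map A.subtype,
    inferInstance, ?_, P.isPGroup'.map _⟩
  rw [Ne, map_eq_bot_iff_of_injective _ A.subtype_injective]
  exact P.ne_bot_of_dvd_card hdvd

-- 105 is the only odd order in this range for which Sylow counting does not isolate a prime.
theorem exists_characteristic_isPGroup_of_card_le [Nontrivial N] (hodd : Odd (Nat.card N))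
    (hle : Nat.card N ≤ 225) :
    ∃ p, p.Prime ∧ p ∣ Nat.card N ∧
      ∃ M : Subgroup N, M.Characteristic ∧ M ≠ ⊥ ∧ IsPGroup p M := by
  by_cases h105 : Nat.card N = 105
  · have hZ : IsZGroup N := IsZGroup.of_squarefree (by rw [h105]; decide +kernel)
    exact exists_characteristic_isPGroup_of_isSolvable
  obtain ⟨p, hpN, hd⟩ := exists_prime_forall_dvd_mod_eq_one (Nat.card N) (by omega)
    (Nat.odd_iff.mp hodd) Finite.one_lt_card.ne' h105
  have hp := Nat.prime_of_mem_primeFactors hpN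
  have hdvd := Nat.dvd_of_mem_primeFactors hpN
  have := Fact.mk hp
  let P : Sylow p N := default
  have hcard : Nat.card (Sylow p N) = 1 :=
    hd _ (Nat.mem_divisors.mpr ⟨P.card_dvd_index.trans (index_dvd_card _), Nat.card_pos.ne'⟩)
      (Eq.trans (card_sylow_modEq_one p N) (Nat.mod_eq_of_lt hp.one_lt))
  have := (Nat.card_eq_one_iff_unique.mp hcard).1
  exact ⟨p, hp, hdvd, P, P.characteristic_of_subsingleton, P.ne_bot_of_dvd_card hdvd, P.isPGroup'⟩

theorem exists_normal_isPGroup_of_card_le {G : Type*} [Group G] {N : Subgroup G} [Finite N]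
    [N.Normal] (hne : N ≠ ⊥) (hodd : Odd (Nat.card N)) (hle : Nat.card N ≤ 225) :
    ∃ p, p.Prime ∧ Odd p ∧ ∃ M : Subgroup G, M.Normal ∧ M ≠ ⊥ ∧ IsPGroup p M := by
  have := (nontrivial_iff_ne_bot N).mpr hne
  obtain ⟨p, hp, hdvd, M, hM, hMne, hMp⟩ := exists_characteristic_isPGroup_of_card_le hodd hle
  refine ⟨p, hp, hodd.of_dvd_nat hdvd, M.map N.subtype, inferInstance, ?_, hMp.map _⟩
  rwa [Ne, map_eq_bot_iff_of_injective _ N.subtype_injective]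

end OddOrder

/-! ### An example of order 7200 -/

theorem exists_forall_mem_sylow_apply_eq_conj {G : Type*} [Group G] {p : ℕ} [Fact p.Prime]
    [Finite (Sylow p G)] {φ : MulAut G} {P : Sylow p G} (hfix : ∀ x ∈ P, φ x = x) (Q : Sylow p G) :
    ∃ y : G, ∀ x ∈ (Q : Subgroup G), φ x = y⁻¹ * x * y := by
  obtain ⟨g, rfl⟩ := MulAction.exists_smul_eq G P Q
  refine ⟨g * (φ g)⁻¹, fun x hx => ?_⟩
  rw [Sylow.coe_subgroup_smul, mem_pointwise_smul_iff_inv_smul_mem, ← map_inv, MulAut.smul_def,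
    MulAut.conj_apply, inv_inv] at hx
  have hx' := hfix _ hx
  rw [map_mul, map_mul, map_inv, mul_assoc, inv_mul_eq_iff_eq_mul, ← eq_mul_inv_iff_mul_eq] at hx'
  rw [hx']
  group

section ExtendAut

open SemidirectProduct

variable {N W : Type*} [CommGroup N] [Group W] {φ : W →* MulAut N} {f : MulAut N}
  {hf : ∀ w, Commute f (φ w)}

/-- The automorphism of `N ⋊[φ] W` acting as `f` on `N` and trivially on `W`, for an automorphism
`f` of `N` that commutes with the action of `W`. -/
def extendAut (f : MulAut N) (hf : ∀ w, Commute f (φ w)) : MulAut (N ⋊[φ] W) :=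
  SemidirectProduct.congr f (MulEquiv.refl W) hf

theorem extendAut_mk (k : N) (w : W) : extendAut f hf ⟨k, w⟩ = ⟨f k, w⟩ := rfl

theorem extendAut_inl (k : N) : extendAut f hf (inl k) = inl (f k) := rfl

theorem extendAut_inr (w : W) : extendAut f hf (inr w) = inr w := by
  ext1
  · exact map_one f
  · rfl

theorem extendAut_pow_two (h : f ^ 2 = 1) : extendAut f hf ^ 2 = 1 := by
  ext1 x
  ext1
  · exact DFunLike.congr_fun h x.left
  · rfl

theorem mk_mul_mk_mul_inv {y w : W} (h : Commute y w) (l k : N) :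
    (⟨l, y⟩ : N ⋊[φ] W) * ⟨k, w⟩ * ⟨l, y⟩⁻¹ = ⟨l * φ y k * (φ w l)⁻¹, w⟩ := by
  rw [mul_inv_eq_iff_eq_mul]
  ext1
  · simp
  · exact h

theorem exists_apply_eq_of_extendAut_mem_innAut (h : extendAut f hf ∈ innAut (N ⋊[φ] W)) :
    ∃ y, φ y = f := by
  obtain ⟨⟨l, y⟩, hy⟩ := h
  refine ⟨y, MulEquiv.ext fun k => ?_⟩
  have hk : (⟨l, y⟩ : N ⋊[φ] W) * ⟨k, 1⟩ * ⟨l, y⟩⁻¹ = ⟨f k, 1⟩ := DFunLike.congr_fun hy (inl k)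
  rw [mk_mul_mk_mul_inv (Commute.one_right y), map_one, MulAut.one_apply,
    mul_inv_cancel_comm] at hk
  exact congrArg left hk

theorem isClassPreserving_extendAut
    (h : ∀ w k, ∃ y l, Commute y w ∧ l * φ y k * (φ w l)⁻¹ = f k) :
    IsClassPreserving (extendAut f hf) := fun ⟨k, w⟩ => by
  obtain ⟨y, l, hy, hl⟩ := h w k
  exact isConj_iff.mpr ⟨⟨l, y⟩, by rw [mk_mul_mk_mul_inv hy, hl, extendAut_mk]⟩

theorem eq_inl_left_of_isPElement {p q : ℕ} (hpq : p.Coprime q) (hW : IsPGroup p W)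
    {x : N ⋊[φ] W} (hx : IsPElement q x) : x = inl x.left := by
  obtain ⟨k, hk⟩ := hx
  obtain ⟨n, hn⟩ := hW x.right
  have hk' : x.right ^ q ^ k = 1 := (map_pow rightHom x _).symm.trans (congrArg rightHom hk)
  ext1
  · rfl
  · exact eq_one_of_pow_eq_one_of_coprime hn hk' (hpq.pow n k)

theorem isPElement_left_of_eq_inl {q : ℕ} {x : N ⋊[φ] W} (hx : IsPElement q x)
    (h : x = inl x.left) : IsPElement q x.left := by
  obtain ⟨k, hk⟩ := hx
  refine ⟨k, inl_injective (φ := φ) ?_⟩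
  rw [map_pow, ← h, hk, map_one]

variable [Finite W]

theorem index_range_inr : (inr : W →* N ⋊[φ] W).range.index = Nat.card N := by
  have hcard : Nat.card (inr : W →* N ⋊[φ] W).range = Nat.card W :=
    Nat.card_congr (MonoidHom.ofInjective inr_injective).toEquiv.symm
  refine Nat.eq_of_mul_eq_mul_right (Nat.card_pos (α := W)) ?_
  rw [← SemidirectProduct.card (φ := φ), ← index_mul_card inr.range, hcard]

theorem exists_sylow_eq_range_inr {p : ℕ} [Fact p.Prime] (hW : IsPGroup p W)
    (hN : ¬ p ∣ Nat.card N) :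
    ∃ P : Sylow p (N ⋊[φ] W), (P : Subgroup (N ⋊[φ] W)) = inr.range :=
  ⟨(hW.of_equiv (MonoidHom.ofInjective inr_injective)).toSylow (by rwa [index_range_inr]),
    rfl⟩

theorem isColeman_extendAut [Finite N] {p : ℕ} [Fact p.Prime] (hW : IsPGroup p W)
    (hN : ¬ p ∣ Nat.card N)
    (h : ∀ q, q.Prime → q ≠ p → ∃ y, ∀ k, IsPElement q k → f k = φ y k) :
    IsColeman (extendAut f hf) := by
  intro q hq Q
  have := Fact.mk hq
  obtain rfl | hqp := eq_or_ne q p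
  · obtain ⟨P, hP⟩ := exists_sylow_eq_range_inr (φ := φ) hW hN
    refine exists_forall_mem_sylow_apply_eq_conj (P := P) (fun x hx => ?_) Q
    obtain ⟨w, rfl⟩ := hP.le hx
    exact extendAut_inr w
  obtain ⟨y, hy⟩ := h q hq hqp
  refine ⟨(inr y)⁻¹, fun x hx => ?_⟩
  have hxq := IsPElement.of_mem Q.2 hx
  have hxl := eq_inl_left_of_isPElement ((Nat.coprime_primes Fact.out hq).mpr hqp.symm) hW hxq
  rw [hxl, extendAut_inl, hy _ (isPElement_left_of_eq_inl hxq hxl), inl_aut, inv_inv, map_inv]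

end ExtendAut

section Homs

open SemidirectProduct

/-- The homomorphism from `ℤ/n`, written multiplicatively, that sends the generator to `x`. -/
def zmodPowHom {M : Type*} [Monoid M] {n : ℕ} [NeZero n] (x : M) (h : x ^ n = 1) :
    Multiplicative (ZMod n) →* M where
  toFun k := x ^ k.toAdd.val
  map_one' := by rw [toAdd_one, ZMod.val_zero, pow_zero]
  map_mul' j k := by
    rw [toAdd_mul, ZMod.val_add, ← pow_eq_pow_mod _ h, pow_add]

/-- A pair of automorphisms acting componentwise on a product. -/
def prodCongrHom (X Y : Type*) [Group X] [Group Y] : MulAut X × MulAut Y →* MulAut (X × Y) where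
  toFun f := f.1.prodCongr f.2
  map_one' := rfl
  map_mul' _ _ := rfl

/-- The action of the wreath product `C n ≀ C_2` on `X × X` induced by an action of `C n`
on `X`. -/
def wreathAction {X : Type*} [Group X] {n : ℕ} (χ : Wreathed.C n →* MulAut X) :
    Wreathed.W n →* MulAut (X × X) :=
  SemidirectProduct.lift ((prodCongrHom X X).comp (χ.prodMap χ))
    (zmodPowHom (n := 2) MulEquiv.prodComm rfl) fun s => by
      rcases Wreathed.two_cases s with rfl | rfl <;> rfl

/-- The automorphism `(x, y) ↦ (y⁻¹, x)`. -/
def quarterTurn (X : Type*) [CommGroup X] : MulAut (X × X) where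
  toFun x := (x.2⁻¹, x.1)
  invFun x := (x.2, x.1⁻¹)
  left_inv x := by simp
  right_inv x := by simp
  map_mul' x y := by simp [mul_comm]

theorem quarterTurn_pow_two (X : Type*) [CommGroup X] : quarterTurn X ^ 2 = MulEquiv.inv (X × X) :=
  rfl

theorem quarterTurn_pow_four (X : Type*) [CommGroup X] : quarterTurn X ^ 4 = 1 := by
  rw [pow_mul (quarterTurn X) 2 2, quarterTurn_pow_two]
  exact MulEquiv.ext inv_inv

end Homs

section OrderSevenThousandTwoHundred

open Wreathed SemidirectProduct

/-- The cyclic group of order 5. -/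
abbrev C5 : Type := Multiplicative (ZMod 5)

/-- The cyclic group of order 3. -/
abbrev C3 : Type := Multiplicative (ZMod 3)

/-- The automorphism `x ↦ x ^ 2` of order 4 of the cyclic group of order 5. -/
def squareAut : MulAut C5 where
  toFun x := x ^ 2
  invFun x := x ^ 3
  left_inv := by decide
  right_inv := by decide
  map_mul' x y := mul_pow x y 2

theorem squareAut_pow_four : squareAut ^ 4 = 1 := by
  ext1 x
  revert x
  decide

/-- The monomial action of `C 2 ≀ C_2` on `C5 × C5`, induced by the faithful action of `C 2`
on `C5`. -/
def monomialHom : W 2 →* MulAut (C5 × C5) :=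
  wreathAction (zmodPowHom squareAut squareAut_pow_four)

/-- The action of `C 2` on `C3 × C3` in which the generator acts as a quarter turn. -/
def turnHom : C 2 →* MulAut (C3 × C3) :=
  zmodPowHom (quarterTurn C3) (quarterTurn_pow_four C3)

/-- The homomorphism `((g, h); s) ↦ g h c ^ (2 s)`, where `c` generates `C 2`. -/
def twist : W 2 →* C 2 :=
  lift (MonoidHom.coprod (.id _) (.id _)) (zmodPowHom (n := 2) (Multiplicative.ofAdd 2) rfl)
    fun s => MonoidHom.ext fun x => by revert s x; decide

/-- The action of `C 2 ≀ C_2` on `(C5 × C5) × (C3 × C3)` that is monomial on the first factor and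
by quarter turns through `twist` on the second. -/
def monomialTurnHom : W 2 →* MulAut ((C5 × C5) × (C3 × C3)) :=
  (prodCongrHom _ _).comp (monomialHom.prod (turnHom.comp twist))

/-- The split extension of `(C5 × C5) × (C3 × C3)` by `C 2 ≀ C_2`, of order 7200, whose outer
class-preserving Coleman automorphism of order 2 bounds the order of a minimal counterexample. -/
abbrev G7200 : Type := ((C5 × C5) × (C3 × C3)) ⋊[monomialTurnHom] W 2

/-- The automorphism of `(C5 × C5) × (C3 × C3)` inverting the second factor. -/
def invSnd : MulAut ((C5 × C5) × (C3 × C3)) :=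
  prodCongrHom _ _ (1, MulEquiv.inv _)

theorem commute_invSnd_monomialTurnHom (w : W 2) : Commute invSnd (monomialTurnHom w) :=
  MulEquiv.ext fun k => Prod.ext rfl (map_inv (turnHom (twist w)) k.2).symm

theorem invSnd_pow_two : invSnd ^ 2 = 1 :=
  MulEquiv.ext fun k => Prod.ext rfl (inv_inv k.2)

/-- The automorphism of `G7200` that inverts `C3 × C3` and centralizes `C5 × C5` and
`C 2 ≀ C_2`. -/
def invSndAut : MulAut G7200 :=
  extendAut invSnd commute_invSnd_monomialTurnHom

instance : Fintype (W 2) :=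
  .ofEquiv _ equivProd.symm

theorem fixedPointFree_turnHom {m : C 2} (hm : m ≠ 1) : MonoidHom.FixedPointFree (turnHom m) := by
  revert m
  unfold MonoidHom.FixedPointFree
  decide +kernel

theorem fixedPointFree_monomialHom {w : W 2} (hw : w ≠ 1) (ht : twist w = 1) :
    MonoidHom.FixedPointFree (monomialHom w) := by
  revert w
  unfold MonoidHom.FixedPointFree
  decide +kernel

theorem exists_monomialHom_apply_eq_self :
    ∀ v, ∃ w, monomialHom w v = v ∧ twist w = Multiplicative.ofAdd 2 := by
  decide +kernel

theorem monomialHom_injective : Function.Injective monomialHom := by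
  refine (injective_iff_map_eq_one monomialHom).mpr fun w hw => ?_
  have h : ∀ w, (∀ v, monomialHom w v = v) → w = 1 := by decide +kernel
  exact h w (DFunLike.congr_fun hw)

theorem turnHom_twist_apply_eq_inv {y : W 2} (hy : twist y = Multiplicative.ofAdd 2)
    (u : C3 × C3) : turnHom (twist y) u = u⁻¹ := by
  rw [hy]
  rfl

theorem exists_forall_commute_and_twist_eq :
    ∃ z, (∀ w, Commute z w) ∧ twist z = Multiplicative.ofAdd 2 := by
  refine ⟨a 2 * b 2, ?_, rfl⟩
  unfold Commute SemiconjBy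
  decide +kernel

theorem monomialTurnHom_ne_invSnd (y : W 2) : monomialTurnHom y ≠ invSnd := by
  intro h
  have hy : y = 1 := monomialHom_injective <| (map_one monomialHom).symm ▸
    MulEquiv.ext fun v => congrArg Prod.fst (DFunLike.congr_fun h (v, 1))
  subst hy
  exact absurd (DFunLike.congr_fun h (1, Multiplicative.ofAdd 1, 1)) (by decide +kernel)

theorem invSndAut_notMem_innAut : invSndAut ∉ innAut G7200 := fun h =>
  let ⟨y, hy⟩ := exists_apply_eq_of_extendAut_mem_innAut h
  monomialTurnHom_ne_invSnd y hy

-- The conjugating element lies over an element of `W 2` whose twist inverts `C3 × C3`, corrected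
-- by a commutator `l / w l` with the element acted on wherever that action is fixed-point-free.
theorem exists_commute_and_conj_eq_invSnd (w : W 2) (v : C5 × C5) (u : C3 × C3) :
    ∃ y l m, Commute y w ∧ l * monomialHom y v * (monomialHom w l)⁻¹ = v ∧
      m * turnHom (twist y) u * (turnHom (twist w) m)⁻¹ = u⁻¹ := by
  obtain ht | ht := ne_or_eq (twist w) 1
  · obtain ⟨m, hm⟩ := (fixedPointFree_turnHom ht).commutatorMap_surjective (u⁻¹ / u)
    refine ⟨1, 1, m, Commute.one_left w, by simp, ?_⟩
    rw [map_one, map_one, MulAut.one_apply, mul_right_comm, ← div_eq_mul_inv]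
    exact (congrArg (· * u) hm).trans (div_mul_cancel _ _)
  obtain rfl | hw := eq_or_ne w 1
  · obtain ⟨y, hyv, hy⟩ := exists_monomialHom_apply_eq_self v
    refine ⟨y, 1, 1, Commute.one_right y, by simp [hyv], ?_⟩
    simp [turnHom_twist_apply_eq_inv hy]
  · obtain ⟨z, hz, hzt⟩ := exists_forall_commute_and_twist_eq
    obtain ⟨l, hl⟩ := (fixedPointFree_monomialHom hw ht).commutatorMap_surjective
      (v / monomialHom z v)
    refine ⟨z, l, 1, hz w, ?_, by simp [turnHom_twist_apply_eq_inv hzt]⟩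
    rw [mul_right_comm, ← div_eq_mul_inv]
    exact (congrArg (· * _) hl).trans (div_mul_cancel _ _)

theorem isClassPreserving_invSndAut : IsClassPreserving invSndAut :=
  isClassPreserving_extendAut fun w ⟨v, u⟩ =>
    let ⟨y, l, m, hy, hl, hm⟩ := exists_commute_and_conj_eq_invSnd w v u
    ⟨y, (l, m), hy, Prod.ext hl hm⟩

theorem card_W (n : ℕ) : Nat.card (W n) = 2 ^ (2 * n + 1) := by
  simp only [SemidirectProduct.card, Nat.card_prod, Nat.card_congr Multiplicative.toAdd,
    Nat.card_zmod]
  ring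

theorem isPGroup_W (n : ℕ) : IsPGroup 2 (W n) :=
  IsPGroup.of_card (card_W n)

theorem card_C5_prod_C3 : Nat.card ((C5 × C5) × (C3 × C3)) = 225 := by
  simp only [Nat.card_prod, Nat.card_congr Multiplicative.toAdd, Nat.card_zmod]

theorem pow_five_eq_one (v : C5 × C5) : v ^ 5 = 1 := by
  revert v
  decide

theorem pow_three_eq_one (u : C3 × C3) : u ^ 3 = 1 := by
  revert u
  decide

theorem isColeman_invSndAut : IsColeman invSndAut := by
  refine isColeman_extendAut (isPGroup_W 2) (by rw [card_C5_prod_C3]; decide) fun q hq _ => ?_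
  obtain rfl | hq3 := eq_or_ne q 3
  · obtain ⟨z, -, hz⟩ := exists_forall_commute_and_twist_eq
    refine ⟨z, fun ⟨v, u⟩ ⟨j, hj⟩ => ?_⟩
    obtain rfl : v = 1 := IsPElement.eq_one_of_pow_eq_one ⟨j, congrArg Prod.fst hj⟩
      (by decide) (pow_five_eq_one v)
    exact Prod.ext (map_one (monomialHom z)).symm (turnHom_twist_apply_eq_inv hz u).symm
  · refine ⟨1, fun ⟨v, u⟩ ⟨j, hj⟩ => ?_⟩
    obtain rfl : u = 1 := IsPElement.eq_one_of_pow_eq_one ⟨j, congrArg Prod.snd hj⟩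
      ((Nat.coprime_primes Nat.prime_three hq).mpr hq3.symm) (pow_three_eq_one u)
    rw [map_one]
    exact Prod.ext rfl inv_one

theorem card_G7200 : Nat.card G7200 = 7200 := by
  rw [SemidirectProduct.card, card_C5_prod_C3, card_W]
  norm_num

theorem hasWreathedSylow2_G7200 : HasWreathedSylow2 G7200 := by
  obtain ⟨P, hP⟩ := exists_sylow_eq_range_inr (φ := monomialTurnHom) (isPGroup_W 2)
    (by rw [card_C5_prod_C3]; decide)
  exact ⟨2, le_rfl, fun Q => ⟨(Q.equiv P).trans <| (MulEquiv.subgroupCongr hP).trans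
    (MonoidHom.ofInjective inr_injective).symm⟩⟩

theorem two_dvd_card_outC_inf_outCol : 2 ∣ Nat.card ↥(outC G7200 ⊓ outCol G7200) := by
  let x : ↥(outC G7200 ⊓ outCol G7200) := ⟨QuotientGroup.mk invSndAut,
    ⟨invSndAut, isClassPreserving_invSndAut, rfl⟩, ⟨invSndAut, isColeman_invSndAut, rfl⟩⟩
  have hx : orderOf x = 2 := by
    refine orderOf_eq_prime (Subtype.ext ?_) fun h => invSndAut_notMem_innAut ?_
    · exact congrArg (QuotientGroup.mk' (innAut G7200)) (extendAut_pow_two invSnd_pow_two)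
    · exact (QuotientGroup.eq_one_iff invSndAut).mp (congrArg Subtype.val h)
  exact hx.symm.dvd.trans (_root_.orderOf_dvd_natCard x)

end OrderSevenThousandTwoHundred

section MinimalCounterexample

theorem card_dvd_index_of_not_dvd_card {G : Type*} [Group G] [Finite G] {p : ℕ} [Fact p.Prime]
    (P : Sylow p G) {N : Subgroup G} (hN : ¬ p ∣ Nat.card N) :
    Nat.card N ∣ (P : Subgroup G).index := by
  obtain ⟨k, hk⟩ := P.isPGroup'.exists_card_eq
  have hcop : (Nat.card N).Coprime (Nat.card P) :=
    hk ▸ ((Nat.Prime.coprime_iff_not_dvd Fact.out).mpr hN).symm.pow_right k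
  exact hcop.dvd_of_dvd_mul_left (P.card_mul_index ▸ N.card_subgroup_dvd_card)

theorem index_le_of_card_le {G : Type*} [Group G] (hW : HasWreathedSylow2 G)
    (hG : Nat.card G ≤ 7200) (P : Sylow 2 G) : (P : Subgroup G).index ≤ 225 := by
  obtain ⟨n, hn, hP⟩ := hW
  obtain ⟨e⟩ := hP P
  have hcard : 2 ^ 5 ≤ Nat.card P := by
    rw [Nat.card_congr e.toEquiv, card_W]
    exact Nat.pow_le_pow_right two_pos (by omega)
  have hmul := P.card_mul_index
  nlinarith

theorem card_le_of_forall_odd_card_outC_inf_outCol {G : Type*}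
    (hmin : ∀ (H : Type) [Group H] [Finite H], Nat.card H < Nat.card G →
      HasWreathedSylow2 H → Odd (Nat.card ↥(outC H ⊓ outCol H))) : Nat.card G ≤ 7200 := by
  rw [← card_G7200]
  by_contra! hlt
  exact (hmin G7200 hlt hasWreathedSylow2_G7200).not_two_dvd_nat two_dvd_card_outC_inf_outCol

end MinimalCounterexample

end WreathedColeman

open WreathedColeman in
theorem minimal_counterexample_odd_fitting_nontrivial_general {G : Type*} [Group G] [Finite G]
    (hW : HasWreathedSylow2 G) (P : Sylow 2 G) (hidx : (P : Subgroup G).index ≤ 225)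
    (φ : MulAut G) (hcol : IsColeman φ) (hord : ∃ k : ℕ, orderOf φ = 2 ^ k) (hni : φ ∉ innAut G) :
    ∃ p : ℕ, p.Prime ∧ Odd p ∧ ∃ N : Subgroup G, N.Normal ∧ N ≠ ⊥ ∧ IsPGroup p N := by
  obtain ⟨n, hn, hP⟩ := hW
  obtain ⟨m, rfl⟩ := Nat.exists_eq_add_of_le' hn
  obtain ⟨e⟩ := hP P
  obtain ⟨k, hk⟩ := hord
  have hφ : IsPElement 2 φ := ⟨k, hk ▸ pow_orderOf_eq_one φ⟩
  obtain ⟨N, hN, hodd, hne⟩ : ∃ N : Subgroup G, N.Normal ∧ ¬ 2 ∣ Nat.card N ∧ N ≠ ⊥ := by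
    by_contra! hO
    exact hni (mem_innAut_of_trivial_oddCore hO e hidx hφ hcol)
  have hle : Nat.card N ≤ (P : Subgroup G).index :=
    Nat.le_of_dvd (Nat.pos_of_ne_zero Subgroup.index_ne_zero_of_finite)
      (card_dvd_index_of_not_dvd_card P hodd)
  exact exists_normal_isPGroup_of_card_le hne
    (Nat.not_even_iff_odd.mp (even_iff_two_dvd.not.mpr hodd)) (hle.trans hidx)

/-- In a minimal counterexample, `O_{2\'}(F(G)) ≠ 1`: there is a nontrivial normal
`p`-subgroup for some odd prime `p`. -/
theorem minimal_counterexample_odd_fitting_nontrivial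
    (G : Type) [Group G] [Finite G]
    (hW : HasWreathedSylow2 G)
    (φ : MulAut G) (hcp : IsClassPreserving φ) (hcol : IsColeman φ)
    (hord : ∃ k : ℕ, orderOf φ = 2 ^ k) (hni : φ ∉ innAut G)
    (hmin : ∀ (H : Type) [Group H] [Finite H], Nat.card H < Nat.card G →
      HasWreathedSylow2 H → Odd (Nat.card ↥(outC H ⊓ outCol H))) :
    ∃ p : ℕ, p.Prime ∧ Odd p ∧ ∃ N : Subgroup G, N.Normal ∧ N ≠ ⊥ ∧ IsPGroup p N :=
  minimal_counterexample_odd_fitting_nontrivial_general hW default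
    (WreathedColeman.index_le_of_card_le hW
      (WreathedColeman.card_le_of_forall_odd_card_outC_inf_outCol hmin) default)
    φ hcol hord hni
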